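/- Let $a$, $b$, $c$ be distinct primes with $a < b$, and suppose the equation $a^x + b^y = c^z$ has more than one solution in positive integers $(x,y,z)$. If $(a,b,c)$ is not one of $(2,3,5)$, $(2,3,11)$, $(2,5,3)$, $(2,7,3)$, $(3,5,2)$, $(3,13,2)$, then the equation has exactly two solutions $(x_1,y_1,z_1)$ and $(x_2,y_2,z_2)$, with $2 \mid x_1$, $2 \mid y_1$, $z_1 = 1$, $2 \nmid y_2$, and moreover $z_2 > 1$. -/

import Mathlib

/-!
A solution of `a ^ x + b ^ y = c ^ z` is a primitive representation of a power of the prime `c` by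
the norm form of an imaginary quadratic order that depends only on the parities of `x` and `y`, and
up to sign and conjugation all such representations are powers of a single one. When the
coordinates are built from powers of `a` and `b`, a representation that is a proper power `δ ^ q`
forces, by `p`-adic valuations, the trace and the imaginary part of `δ ^ q` to be at most `q` times
those of `δ`, which its size excludes outside small exceptional cases. So each parity class of
`(x, y)` contains at most one solution, and congruences and 2-adic valuations rule out all pairs of
classes but one.
-/

namespace TernaryExp

open QuadraticAlgebra hiding norm_star

section NormForm

variable {A B : ℤ} {p : ℕ} {m n : ℕ} {x y α β ε : QuadraticAlgebra ℤ A B}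

/-- `x` is a primitive representation of the positive power `p ^ n` by the norm form: when `p` is a
prime dividing `norm x`, it divides `x.im` only if it divides `x` itself. -/
structure IsPrimitiveRep (p n : ℕ) (x : QuadraticAlgebra ℤ A B) : Prop where
  pos : 0 < n
  norm_eq : norm x = (p : ℤ) ^ n
  not_dvd_im : ¬ (p : ℤ) ∣ x.im

/-- Equality up to sign and conjugation, the ambiguity in the choice of a representation. -/
def EqUpToConj (x y : QuadraticAlgebra ℤ A B) : Prop :=
  x = y ∨ x = -y ∨ x = star y ∨ x = -star y

/-- `x` is, up to sign and conjugation, a `q`-th power of a primitive representation of a power of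
`p`, for some prime `q`. -/
def IsProperPower (p : ℕ) (x : QuadraticAlgebra ℤ A B) : Prop :=
  ∃ (q j : ℕ) (δ : QuadraticAlgebra ℤ A B),
    q.Prime ∧ IsPrimitiveRep p j δ ∧ EqUpToConj x (δ ^ q)

theorem EqUpToConj.abs_im_eq (h : EqUpToConj x y) : |x.im| = |y.im| := by
  rcases h with rfl | rfl | rfl | rfl <;> simp

theorem EqUpToConj.abs_trace_eq (h : EqUpToConj x y) : |trace x| = |trace y| := by
  rcases h with rfl | rfl | rfl | rfl <;> simp

theorem EqUpToConj.norm_eq (h : EqUpToConj x y) : norm x = norm y := by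
  rcases h with rfl | rfl | rfl | rfl <;> simp

theorem EqUpToConj.symm (h : EqUpToConj x y) : EqUpToConj y x := by
  rcases h with rfl | rfl | rfl | rfl <;> simp [EqUpToConj]

theorem EqUpToConj.trans {z : QuadraticAlgebra ℤ A B} (hxy : EqUpToConj x y)
    (hyz : EqUpToConj y z) : EqUpToConj x z := by
  rcases hxy with rfl | rfl | rfl | rfl <;> rcases hyz with rfl | rfl | rfl | rfl <;>
    simp [EqUpToConj]

theorem eqUpToConj_star_pow (x : QuadraticAlgebra ℤ A B) (n : ℕ) :
    EqUpToConj (star x ^ n) (x ^ n) := by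
  simp [EqUpToConj]

theorem four_mul_norm (x : QuadraticAlgebra ℤ A B) :
    4 * norm x = trace x ^ 2 - (B ^ 2 + 4 * A) * x.im ^ 2 := by
  rw [norm_def, trace_def]; ring

theorem dvd_im_of_dvd_trace {π : ℤ} (hπ : Prime π) (hΔ : ¬ π ∣ B ^ 2 + 4 * A)
    (hnorm : π ∣ norm x) (htrace : π ∣ trace x) : π ∣ x.im := by
  have h : π ∣ (B ^ 2 + 4 * A) * x.im ^ 2 := by
    rw [show (B ^ 2 + 4 * A) * x.im ^ 2 = trace x ^ 2 - 4 * norm x by rw [four_mul_norm]; ring]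
    exact dvd_sub (dvd_pow htrace two_ne_zero) (hnorm.mul_left 4)
  exact hπ.dvd_of_dvd_pow ((hπ.dvd_or_dvd h).resolve_left hΔ)

theorem dvd_re_of_dvd_im {π : ℤ} (hπ : Prime π) (hnorm : π ∣ norm x) (him : π ∣ x.im) :
    π ∣ x.re := by
  have h : x.re ^ 2 = norm x - (B * x.re - A * x.im) * x.im := by rw [norm_def]; ring
  exact hπ.dvd_of_dvd_pow (h ▸ dvd_sub hnorm (him.mul_left _))

theorem dvd_im_mul_left {π : ℤ} (hre : π ∣ y.re) (him : π ∣ y.im) : π ∣ (x * y).im := by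
  rw [im_mul]
  exact dvd_add (dvd_add (him.mul_left _) (hre.mul_left _)) (him.mul_left _)

theorem eq_one_or_neg_one_of_norm_eq_one (hΔ : B ^ 2 + 4 * A < -4) (hx : norm x = 1) :
    x = 1 ∨ x = -1 := by
  have him : x.im = 0 := by
    by_contra h
    have := four_mul_norm x
    nlinarith [sq_nonneg (trace x), Int.add_one_le_of_lt (pow_two_pos_of_ne_zero h)]
  have hre : x.re * x.re = 1 := by simpa [norm_def, him] using hx
  exact (mul_self_eq_one_iff.1 hre).imp (fun h => by ext <;> simp [h, him])
    (fun h => by ext <;> simp [h, him])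

theorem dvd_re_of_sq_dvd_norm {d : ℤ} (hnorm : d ^ 2 ∣ norm x) (him : d ∣ x.im) : d ∣ x.re := by
  obtain ⟨s, hs⟩ := him
  obtain ⟨d', r, hd, hr, hunit⟩ := extract_gcd d x.re
  set g := GCDMonoid.gcd d x.re
  rcases eq_or_ne g 0 with hg | hg
  · simp [hr, hg]
  have hdr : d' ∣ r ^ 2 := by
    have : g ^ 2 * d' ∣ g ^ 2 * (r ^ 2 + d' * (B * r * s - A * d' * s ^ 2)) := by
      refine (Dvd.intro d' ?_).trans (hnorm.trans (dvd_of_eq ?_))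
      · rw [hd]; ring
      · rw [norm_def, hs, hr, hd]; ring
    exact (dvd_add_left (dvd_mul_right d' _)).1
      ((mul_dvd_mul_iff_left (pow_ne_zero 2 hg)).1 this)
  have hd' : IsUnit d' :=
    ((gcd_isUnit_iff _ _).1 hunit).pow_right.isUnit_of_dvd' dvd_rfl hdr
  rw [hd, hr]
  exact mul_dvd_mul_left g hd'.dvd

theorem dvd_of_norm_dvd (hα : norm α ≠ 0) (hnorm : norm α ∣ norm β)
    (him : norm α ∣ (β * star α).im) : α ∣ β := by
  have hre : norm α ∣ (β * star α).re := by
    refine dvd_re_of_sq_dvd_norm ?_ him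
    rw [map_mul, QuadraticAlgebra.norm_star, sq]
    exact mul_dvd_mul_right hnorm _
  obtain ⟨r, hr⟩ := hre
  obtain ⟨s, hs⟩ := him
  have h : β * star α = α * ⟨r, s⟩ * star α := by
    rw [mul_right_comm, ← algebraMap_norm_eq_mul_star]
    ext
    · simp [hr]
    · simp [hs]
  refine ⟨⟨r, s⟩, (mul_cancel_right_mem_nonZeroDivisors ?_).1 h⟩
  rw [star_mem_nonZeroDivisors_iff, ← norm_mem_nonZeroDivisors_iff]
  exact mem_nonZeroDivisors_of_ne_zero hα

/-- The product of the imaginary parts of `β * star α` and `β * α` is divisible by `p ^ m`, while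
their difference `α.im * trace β` is prime to `p`, so one of the two carries the full power. -/
theorem IsPrimitiveRep.dvd_or_star_dvd (hp : p.Prime) (hΔ : ¬ (p : ℤ) ∣ B ^ 2 + 4 * A)
    (hα : IsPrimitiveRep p m α) (hβ : IsPrimitiveRep p n β) (hmn : m ≤ n) :
    α ∣ β ∨ star α ∣ β := by
  have hp' : Prime (p : ℤ) := Nat.prime_iff_prime_int.1 hp
  have htrace : ¬ (p : ℤ) ∣ trace β := fun h =>
    hβ.not_dvd_im (dvd_im_of_dvd_trace hp' hΔ (hβ.norm_eq ▸ dvd_pow_self _ hβ.pos.ne') h)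
  have hα0 : norm α ≠ 0 := hα.norm_eq ▸ pow_ne_zero _ hp'.ne_zero
  have hnorm : norm α ∣ norm β := by
    rw [hα.norm_eq, hβ.norm_eq]; exact pow_dvd_pow _ hmn
  have hprod : (p : ℤ) ^ m ∣ (β * star α).im * (β * α).im := by
    have : (β * star α).im * (β * α).im = β.im ^ 2 * norm α - α.im ^ 2 * norm β := by
      simp only [norm_def, im_mul, re_star, im_star]; ring
    rw [this, ← hα.norm_eq]
    exact dvd_sub (dvd_mul_left _ _) (hnorm.mul_left _)
  have hdiff : (β * α).im - (β * star α).im = α.im * trace β := by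
    simp only [trace_def, im_mul, re_star, im_star]; ring
  by_cases h : (p : ℤ) ∣ (β * star α).im
  · have h' : ¬ (p : ℤ) ∣ (β * α).im := fun h' =>
      (hp'.dvd_or_dvd (hdiff ▸ dvd_sub h' h)).elim hα.not_dvd_im htrace
    refine .inl (dvd_of_norm_dvd hα0 hnorm ?_)
    exact hα.norm_eq ▸ hp'.pow_dvd_of_dvd_mul_right m h' hprod
  · refine .inr (dvd_of_norm_dvd ?_ ?_ ?_)
    · rwa [QuadraticAlgebra.norm_star]
    · rwa [QuadraticAlgebra.norm_star]
    · rw [QuadraticAlgebra.norm_star, star_star, hα.norm_eq]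
      exact hp'.pow_dvd_of_dvd_mul_left m h hprod

theorem IsPrimitiveRep.conj (hα : IsPrimitiveRep p m α) : IsPrimitiveRep p m (star α) :=
  ⟨hα.pos, by rw [QuadraticAlgebra.norm_star, hα.norm_eq], by simpa using hα.not_dvd_im⟩

theorem IsPrimitiveRep.of_mul (hp : p.Prime) (hmn : m < n) (hα : norm α = (p : ℤ) ^ m)
    (h : IsPrimitiveRep p n (α * x)) : IsPrimitiveRep p (n - m) x := by
  have hp' : Prime (p : ℤ) := Nat.prime_iff_prime_int.1 hp
  have hnorm : norm x = (p : ℤ) ^ (n - m) := by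
    refine mul_left_cancel₀ (pow_ne_zero m hp'.ne_zero) ?_
    rw [← pow_add, Nat.add_sub_cancel' hmn.le, ← h.norm_eq, map_mul, hα]
  refine ⟨by omega, hnorm, fun him => h.not_dvd_im (dvd_im_mul_left ?_ him)⟩
  exact dvd_re_of_dvd_im hp' (hnorm ▸ dvd_pow_self _ (by omega)) him

theorem EqUpToConj.mul_left {k : ℕ} (h : EqUpToConj x (ε ^ (k + 1))) :
    EqUpToConj (ε * x) (ε ^ (k + 2)) ∨ ε * star ε ∣ ε * x := by
  unfold EqUpToConj at *
  simp only [star_pow] at h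
  rcases h with rfl | rfl | rfl | rfl
  · exact .inl (.inl (by ring))
  · exact .inl (.inr (.inl (by ring)))
  · exact .inr ⟨star ε ^ k, by ring⟩
  · exact .inr ⟨-star ε ^ k, by ring⟩

theorem IsPrimitiveRep.not_mul_star_dvd (hα : IsPrimitiveRep p m α) (hβ : IsPrimitiveRep p n β) :
    ¬ α * star α ∣ β := by
  rintro ⟨y, hy⟩
  apply hβ.not_dvd_im
  rw [hy, ← algebraMap_norm_eq_mul_star, hα.norm_eq, im_mul, algebraMap_re, algebraMap_im]
  exact ⟨(p : ℤ) ^ (m - 1) * y.im, by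
    rw [← mul_assoc, mul_pow_sub_one hα.pos.ne']; ring⟩

theorem eqUpToConj_pow_of_minimal (hp : p.Prime) (hΔ : ¬ (p : ℤ) ∣ B ^ 2 + 4 * A)
    (hneg : B ^ 2 + 4 * A < -4) (hε : IsPrimitiveRep p m ε)
    (hmin : ∀ (n : ℕ) (x : QuadraticAlgebra ℤ A B), IsPrimitiveRep p n x → m ≤ n)
    (hx : IsPrimitiveRep p n x) : ∃ k, 0 < k ∧ EqUpToConj x (ε ^ k) := by
  induction n using Nat.strong_induction_on generalizing x with
  | _ n ih =>
  obtain ⟨η, κ, hη, hηε, rfl⟩ : ∃ η κ, IsPrimitiveRep p m η ∧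
      (∀ k, EqUpToConj (η ^ k) (ε ^ k)) ∧ x = η * κ := by
    rcases hε.dvd_or_star_dvd hp hΔ hx (hmin n x hx) with ⟨κ, hκ⟩ | ⟨κ, hκ⟩
    · exact ⟨ε, κ, hε, fun _ => .inl rfl, hκ⟩
    · exact ⟨star ε, κ, hε.conj, eqUpToConj_star_pow ε, hκ⟩
  rcases (hmin n _ hx).eq_or_lt with rfl | hlt
  · have hκ : norm κ = 1 := by
      refine mul_left_cancel₀ (pow_ne_zero m (Nat.cast_ne_zero.2 hp.ne_zero)) (b := norm κ) ?_
      rw [mul_one, ← hη.norm_eq, ← map_mul, hx.norm_eq, hη.norm_eq]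
    refine ⟨1, one_pos, EqUpToConj.trans ?_ (hηε 1)⟩
    rcases eq_one_or_neg_one_of_norm_eq_one hneg hκ with rfl | rfl <;> simp [EqUpToConj]
  · obtain ⟨k, hk, hκ⟩ := ih (n - m) (Nat.sub_lt hx.pos hε.pos)
      (hx.of_mul hp hlt hη.norm_eq)
    obtain ⟨k, rfl⟩ := Nat.exists_eq_add_one.2 hk
    refine ⟨k + 2, by omega, EqUpToConj.trans ?_ (hηε _)⟩
    exact (hκ.trans (hηε _).symm).mul_left.resolve_right (hη.not_mul_star_dvd hx)

theorem IsPrimitiveRep.exists_generator (hp : p.Prime) (hΔ : ¬ (p : ℤ) ∣ B ^ 2 + 4 * A)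
    (hneg : B ^ 2 + 4 * A < -4) (hx : IsPrimitiveRep p n x) :
    ∃ (m : ℕ) (ε : QuadraticAlgebra ℤ A B), IsPrimitiveRep p m ε ∧
      ∀ (n : ℕ) (y : QuadraticAlgebra ℤ A B), IsPrimitiveRep p n y →
        ∃ k, 0 < k ∧ EqUpToConj y (ε ^ k) := by
  classical
  have hex : ∃ m, ∃ ε : QuadraticAlgebra ℤ A B, IsPrimitiveRep p m ε := ⟨n, x, hx⟩
  obtain ⟨ε, hε⟩ := Nat.find_spec hex
  exact ⟨Nat.find hex, ε, hε, fun n y =>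
    eqUpToConj_pow_of_minimal hp hΔ hneg hε fun k z hz => Nat.find_min' hex ⟨z, hz⟩⟩

theorem IsPrimitiveRep.exponent_eq_mul (hp : p.Prime) (hx : IsPrimitiveRep p n x)
    (hε : IsPrimitiveRep p m ε) {k : ℕ} (h : EqUpToConj x (ε ^ k)) : n = m * k := by
  refine Nat.pow_right_injective hp.two_le ?_
  have := h.norm_eq
  rw [hx.norm_eq, map_pow, hε.norm_eq, ← pow_mul] at this
  exact_mod_cast this

theorem IsPrimitiveRep.pow_of_mul (hp : p.Prime) (hε : IsPrimitiveRep p m ε) {l q : ℕ}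
    (hx : IsPrimitiveRep p n x) (h : EqUpToConj x (ε ^ (q * l))) :
    IsPrimitiveRep p (m * l) (ε ^ l) := by
  have hlq : 0 < q * l := by
    have := hx.exponent_eq_mul hp hε h
    exact Nat.pos_of_ne_zero fun h0 => hx.pos.ne' (by rw [this, h0, mul_zero])
  have hl : 0 < l := Nat.pos_of_mul_pos_left hlq
  have hnorm : norm (ε ^ l) = (p : ℤ) ^ (m * l) := by rw [map_pow, hε.norm_eq, pow_mul]
  have hml : m * l ≠ 0 := (Nat.mul_pos hε.pos hl).ne'
  refine ⟨Nat.pos_of_ne_zero hml, hnorm, fun him => hx.not_dvd_im ?_⟩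
  have hre := dvd_re_of_dvd_im (Nat.prime_iff_prime_int.1 hp)
    (hnorm ▸ dvd_pow_self _ hml) him
  obtain ⟨q, rfl⟩ := Nat.exists_eq_add_one.2 (Nat.pos_of_mul_pos_right hlq)
  rw [← dvd_abs, h.abs_im_eq, dvd_abs, add_mul, one_mul, pow_add]
  exact dvd_im_mul_left hre him

theorem IsPrimitiveRep.eq_of_not_isProperPower (hp : p.Prime)
    (hΔ : ¬ (p : ℤ) ∣ B ^ 2 + 4 * A) (hneg : B ^ 2 + 4 * A < -4)
    (hx : IsPrimitiveRep p m x) (hy : IsPrimitiveRep p n y)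
    (hx' : ¬ IsProperPower p x) (hy' : ¬ IsProperPower p y) : m = n ∧ EqUpToConj x y := by
  obtain ⟨l, ε, hε, hgen⟩ := hx.exists_generator hp hΔ hneg
  have key (k : ℕ) (z : QuadraticAlgebra ℤ A B) (hz : IsPrimitiveRep p k z)
      (hz' : ¬ IsProperPower p z) : k = l ∧ EqUpToConj z ε := by
    obtain ⟨i, -, h⟩ := hgen k z hz
    have hi : i = 1 := by
      by_contra hne
      obtain ⟨q, hq, i, rfl⟩ := Nat.exists_prime_and_dvd hne
      refine hz' ⟨q, l * i, ε ^ i, hq, hε.pow_of_mul hp hz h, ?_⟩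
      rwa [← pow_mul, mul_comm]
    subst hi
    exact ⟨by simpa using hz.exponent_eq_mul hp hε h, by simpa using h⟩
  obtain ⟨rfl, hxε⟩ := key m x hx hx'
  obtain ⟨rfl, hyε⟩ := key n y hy hy'
  exact ⟨rfl, hxε.trans hyε.symm⟩

end NormForm

section Powers

variable {A B : ℤ} {p q : ℕ} {x : QuadraticAlgebra ℤ A B}

theorem sq_eq_trace_smul_sub (x : QuadraticAlgebra ℤ A B) :
    x ^ 2 = trace x • x - algebraMap ℤ _ (norm x) := by
  rw [sq]
  ext <;> simp [trace_def, norm_def] <;> ring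

theorem pow_add_two_mul (x : QuadraticAlgebra ℤ A B) (n j : ℕ) :
    x ^ (n + 2 * j) = trace (x ^ j) • x ^ (n + j) - norm x ^ j • x ^ n := by
  rw [mul_comm 2, pow_add, pow_mul, sq_eq_trace_smul_sub (x ^ j), map_pow QuadraticAlgebra.norm,
    pow_add, mul_sub, mul_smul_comm, mul_comm (x ^ n) (algebraMap ℤ _ _), ← Algebra.smul_def]

theorem im_pow_add_two_mul (x : QuadraticAlgebra ℤ A B) (n j : ℕ) :
    (x ^ (n + 2 * j)).im = trace (x ^ j) * (x ^ (n + j)).im - norm x ^ j * (x ^ n).im := by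
  rw [pow_add_two_mul, im_sub, im_smul, im_smul, smul_eq_mul, smul_eq_mul]

theorem trace_pow_add_two_mul (x : QuadraticAlgebra ℤ A B) (n j : ℕ) :
    trace (x ^ (n + 2 * j)) =
      trace (x ^ j) * trace (x ^ (n + j)) - norm x ^ j * trace (x ^ n) := by
  rw [pow_add_two_mul, map_sub, map_smul, map_smul, smul_eq_mul, smul_eq_mul]

theorem trace_sq (x : QuadraticAlgebra ℤ A B) :
    trace (x ^ 2) = trace x ^ 2 - 2 * norm x := by
  simpa [sq, trace_def, mul_comm] using trace_pow_add_two_mul x 0 1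

theorem im_sq (x : QuadraticAlgebra ℤ A B) : (x ^ 2).im = trace x * x.im := by
  simpa using im_pow_add_two_mul x 0 1

theorem im_pow_three (x : QuadraticAlgebra ℤ A B) :
    (x ^ 3).im = x.im * (3 * norm x + (B ^ 2 + 4 * A) * x.im ^ 2) := by
  have h := im_pow_add_two_mul x 1 1
  simp only [Nat.reduceAdd, Nat.reduceMul, pow_one, im_sq] at h
  linear_combination h - x.im * four_mul_norm x

theorem trace_pow_three (x : QuadraticAlgebra ℤ A B) :
    trace (x ^ 3) = trace x * (trace x ^ 2 - 3 * norm x) := by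
  have h := trace_pow_add_two_mul x 1 1
  simp only [Nat.reduceAdd, Nat.reduceMul, pow_one, trace_sq] at h
  linear_combination h

theorem exists_trace_pow_odd_eq (x : QuadraticAlgebra ℤ A B) (i : ℕ) :
    ∃ t, trace (x ^ (2 * i + 1)) =
      trace x * ((2 * i + 1 : ℕ) * (-norm x) ^ i + trace x ^ 2 * t) := by
  induction i using Nat.twoStepInduction with
  | zero => exact ⟨0, by simp⟩
  | one => exact ⟨1, by rw [trace_pow_three]; push_cast; ring⟩
  | more i ih₀ ih₁ =>
    obtain ⟨t₀, h₀⟩ := ih₀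
    obtain ⟨t₁, h₁⟩ := ih₁
    have h := trace_pow_add_two_mul x (2 * i + 1) 2
    rw [show 2 * i + 1 + 2 = 2 * (i + 1) + 1 by ring, h₀, h₁, trace_sq] at h
    refine ⟨(2 * (i + 1) + 1 : ℕ) * (-norm x) ^ (i + 1) + trace x ^ 2 * t₁ - 2 * norm x * t₁
      - norm x ^ 2 * t₀, ?_⟩
    rw [show 2 * (i + 2) + 1 = 2 * i + 1 + 2 * 2 by ring, h]
    push_cast
    ring

theorem exists_im_pow_odd_eq (x : QuadraticAlgebra ℤ A B) (i : ℕ) :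
    ∃ t, (x ^ (2 * i + 3)).im = x.im * ((2 * i + 3 : ℕ) * norm x ^ (i + 1) +
      (∑ k ∈ Finset.range (i + 2), k ^ 2 : ℕ) * ((B ^ 2 + 4 * A) * x.im ^ 2) * norm x ^ i +
      ((B ^ 2 + 4 * A) * x.im ^ 2) ^ 2 * t) := by
  have htrace : trace (x ^ 2) = (B ^ 2 + 4 * A) * x.im ^ 2 + 2 * norm x := by
    rw [trace_sq]; linear_combination -four_mul_norm x
  have h₃ := im_pow_three x
  have h (n : ℕ) := im_pow_add_two_mul x n 2
  simp only [htrace] at h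
  generalize (B ^ 2 + 4 * A) * x.im ^ 2 = D at *
  induction i using Nat.twoStepInduction with
  | zero =>
    exact ⟨0, by simpa [Finset.sum_range_succ] using h₃⟩
  | one =>
    refine ⟨1, ?_⟩
    rw [show 2 * 1 + 3 = 1 + 2 * 2 by rfl, h 1, show 1 + 2 = 3 by rfl, h₃]
    simp only [Finset.sum_range_succ, Finset.sum_range_zero, pow_one]
    push_cast
    ring
  | more i ih₀ ih₁ =>
    obtain ⟨t₀, h₀⟩ := ih₀
    obtain ⟨t₁, h₁⟩ := ih₁
    have h := h (2 * i + 3)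
    rw [show 2 * i + 3 + 2 = 2 * (i + 1) + 3 by ring, h₀, h₁] at h
    refine ⟨(∑ k ∈ Finset.range (i + 3), k ^ 2 : ℕ) * norm x ^ (i + 1) + (D + 2 * norm x) * t₁
      - norm x ^ 2 * t₀, ?_⟩
    rw [show 2 * (i + 2) + 3 = 2 * i + 3 + 2 * 2 by ring, h]
    simp only [Finset.sum_range_succ _ (i + 3), Finset.sum_range_succ _ (i + 2)]
    push_cast
    ring

theorem pow_dvd_trace_of_pow_dvd_trace_pow (hp : p.Prime) (hq : q.Prime) (hq₂ : q ≠ 2)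
    (htrace : (p : ℤ) ∣ trace x) (hnorm : ¬ (p : ℤ) ∣ norm x) {k : ℕ}
    (h : (p : ℤ) ^ k ∣ trace (x ^ q)) : (p : ℤ) ^ k ∣ q * trace x := by
  have hp' : Prime (p : ℤ) := Nat.prime_iff_prime_int.1 hp
  obtain ⟨i, rfl⟩ := hq.odd_of_ne_two hq₂
  obtain ⟨t, ht⟩ := exists_trace_pow_odd_eq x i
  obtain ⟨s, hs⟩ := htrace
  have hnorm' : ¬ (p : ℤ) ∣ (-norm x) ^ i := fun h => hnorm ((dvd_neg.1 (hp'.dvd_of_dvd_pow h)))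
  rw [ht] at h
  by_cases hpq : p = 2 * i + 1
  · refine (hp'.pow_dvd_of_dvd_mul_right k
      (b := (-norm x) ^ i + trace x * s * t) (fun hd => hnorm' ?_) ?_)
    · exact (dvd_add_left (((hs ▸ dvd_mul_right _ _).mul_right _).mul_right _)).1 hd
    · refine h.trans (dvd_of_eq ?_)
      rw [← hpq]
      linear_combination trace x ^ 2 * t * hs
  · refine (hp'.pow_dvd_of_dvd_mul_right k (fun hd => ?_) h).mul_left _
    have hptr : (p : ℤ) ∣ trace x := hs ▸ dvd_mul_right _ _
    have hd' := (dvd_add_left ((hptr.mul_right _).mul_right _)).1 (sq (trace x) ▸ hd)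
    refine (hp'.dvd_or_dvd hd').elim (fun hd => hpq ?_) hnorm'
    exact (Nat.prime_dvd_prime_iff_eq hp hq).1 (Int.natCast_dvd_natCast.1 hd)

theorem dvd_sum_range_sq {p i : ℕ} (hp : p.Prime) (hpi : p = 2 * i + 3) (h3 : p ≠ 3) :
    p ∣ ∑ k ∈ Finset.range (i + 2), k ^ 2 := by
  have h6 : 6 * ∑ k ∈ Finset.range (i + 2), k ^ 2 = p * ((i + 1) * (i + 2)) := by
    rw [hpi]
    clear hpi
    induction i with
    | zero => rfl
    | succ i ih => rw [Finset.sum_range_succ, mul_add, ih]; ring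
  refine ((hp.dvd_mul.1 (h6 ▸ dvd_mul_right p _))).resolve_left fun hd => ?_
  have := Nat.le_of_dvd (by norm_num) hd
  interval_cases p <;> omega

theorem nine_dvd_of_three_dvd_norm_add {e : ℤ} (he : B ^ 2 + 4 * A = 3 * e)
    (hnorm : ¬ 3 ∣ norm x) (h : 3 ∣ norm x + e * x.im ^ 2) : 9 ∣ B ^ 2 + 4 * A + 3 := by
  have key : ∀ N T e v : ZMod 3, N ≠ 0 → 4 * N = T ^ 2 - 3 * e * v ^ 2 → N + e * v ^ 2 = 0 →
      e + 1 = 0 := by decide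
  have hmod := four_mul_norm x
  rw [he] at hmod ⊢
  have h0 := key (norm x : ℤ) (trace x : ℤ) e x.im
    (by rwa [Ne, ZMod.intCast_zmod_eq_zero_iff_dvd]) (by exact_mod_cast congrArg _ hmod)
    (by exact_mod_cast (ZMod.intCast_zmod_eq_zero_iff_dvd _ 3).2 h)
  have : 3 ∣ e + 1 := (ZMod.intCast_zmod_eq_zero_iff_dvd _ 3).1 (by exact_mod_cast h0)
  omega

/-- The cofactor `(x ^ q).im / x.im` is `q` times a `p`-adic unit. -/
theorem exists_im_pow_eq_of_dvd (hp : p.Prime) (hq : q.Prime) (hq₂ : q ≠ 2)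
    (hΔ : (p : ℤ) ∣ B ^ 2 + 4 * A) (hnorm : ¬ (p : ℤ) ∣ norm x)
    (h3 : p = 3 → q = 3 → ¬ 9 ∣ B ^ 2 + 4 * A + 3) :
    ∃ u : ℤ, ¬ (p : ℤ) ∣ u ∧ ((x ^ q).im = x.im * u ∨ p = q ∧ (x ^ q).im = x.im * (p * u)) := by
  have hp' : Prime (p : ℤ) := Nat.prime_iff_prime_int.1 hp
  obtain ⟨e, he⟩ := hΔ
  by_cases h3' : p = 3 ∧ q = 3
  · obtain ⟨rfl, rfl⟩ := h3'
    exact ⟨norm x + e * x.im ^ 2,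
      fun hd => h3 rfl rfl (nine_dvd_of_three_dvd_norm_add he hnorm hd),
      .inr ⟨rfl, by rw [im_pow_three, he]; push_cast; ring⟩⟩
  · obtain ⟨i, rfl⟩ : ∃ i, q = 2 * i + 3 := by
      obtain ⟨i, rfl⟩ := hq.odd_of_ne_two hq₂
      exact ⟨i - 1, by have := hq.two_le; omega⟩
    obtain ⟨t, ht⟩ := exists_im_pow_odd_eq x i
    have hunit : ¬ (p : ℤ) ∣ norm x ^ (i + 1) := fun h => hnorm (hp'.dvd_of_dvd_pow h)
    by_cases hpq : p = 2 * i + 3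
    · obtain ⟨c, hc⟩ := dvd_sum_range_sq hp hpq (by omega)
      refine ⟨norm x ^ (i + 1) + p * (c * (e * x.im ^ 2) * norm x ^ i + e ^ 2 * x.im ^ 4 * t),
        fun hd => hunit ((dvd_add_left (dvd_mul_right _ _)).1 hd), .inr ⟨hpq, ?_⟩⟩
      rw [ht, he, hc, ← hpq]
      push_cast
      ring
    · refine ⟨_, fun hd => ?_, .inl ht⟩
      have hD : (p : ℤ) ∣ (B ^ 2 + 4 * A) * x.im ^ 2 := he ▸ (dvd_mul_right _ _).mul_right _
      have hd := (dvd_add_left ((hD.mul_left _).mul_right _)).1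
        ((dvd_add_left (((dvd_pow hD two_ne_zero)).mul_right t)).1 hd)
      refine (hp'.dvd_or_dvd hd).elim (fun hd => hpq ?_) hunit
      exact (Nat.prime_dvd_prime_iff_eq hp hq).1 (Int.natCast_dvd_natCast.1 hd)

theorem pow_dvd_im_of_pow_dvd_im_pow (hp : p.Prime) (hq : q.Prime) (hq₂ : q ≠ 2)
    (hΔ : (p : ℤ) ∣ B ^ 2 + 4 * A) (hnorm : ¬ (p : ℤ) ∣ norm x)
    (h3 : p = 3 → q = 3 → ¬ 9 ∣ B ^ 2 + 4 * A + 3) {k : ℕ} (h : (p : ℤ) ^ k ∣ (x ^ q).im) :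
    (p : ℤ) ^ k ∣ q * x.im := by
  have hp' : Prime (p : ℤ) := Nat.prime_iff_prime_int.1 hp
  obtain ⟨u, hu, hx | ⟨rfl, hx⟩⟩ := exists_im_pow_eq_of_dvd hp hq hq₂ hΔ hnorm h3
  · exact (hp'.pow_dvd_of_dvd_mul_right k hu (hx ▸ h)).mul_left _
  · exact hp'.pow_dvd_of_dvd_mul_right k hu (h.trans (dvd_of_eq (by rw [hx]; ring)))

theorem sq_mul_lt_pow {N q : ℕ} (hN : 4 ≤ N) (hq : 3 ≤ q) : q ^ 2 * N < N ^ q := by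
  induction q, hq using Nat.le_induction with
  | base => rw [pow_succ N 2, sq N]; gcongr; nlinarith
  | succ q hq ih =>
    calc (q + 1) ^ 2 * N ≤ q ^ 2 * 4 * N := by gcongr; nlinarith
      _ = q ^ 2 * N * 4 := by ring
      _ ≤ q ^ 2 * N * N := by gcongr
      _ < N ^ q * N := by gcongr
      _ = N ^ (q + 1) := (pow_succ N q).symm

theorem false_of_abs_trace_pow_le_of_abs_im_pow_le (hΔ : B ^ 2 + 4 * A ≤ 0) (hnorm : 4 ≤ norm x)
    (hq : 3 ≤ q) (htrace : |trace (x ^ q)| ≤ |q * trace x|) (him : |(x ^ q).im| ≤ |q * x.im|) :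
    False := by
  have hlt : (q : ℤ) ^ 2 * norm x < norm x ^ q := by
    lift norm x to ℕ using by linarith with N
    exact_mod_cast sq_mul_lt_pow (by exact_mod_cast hnorm) hq
  have h := four_mul_norm (x ^ q)
  rw [map_pow] at h
  have htrace := sq_le_sq.2 htrace
  have him := mul_le_mul_of_nonpos_left (sq_le_sq.2 him) hΔ
  linarith [mul_pow (q : ℤ) (trace x) 2, mul_pow (q : ℤ) x.im 2,
    congrArg ((q : ℤ) ^ 2 * ·) (four_mul_norm x)]

end Powers

section KeyLemma

theorem not_natCast_dvd_natCast_pow {p q : ℕ} (hp : p.Prime) (hq : q.Prime) (h : p ≠ q)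
    (n : ℕ) : ¬ (p : ℤ) ∣ (q : ℤ) ^ n := fun hd =>
  h ((Nat.prime_dvd_prime_iff_eq hp hq).1 (hp.dvd_of_dvd_pow (by exact_mod_cast hd)))

variable {A B : ℤ} {a b q : ℕ} {x : QuadraticAlgebra ℤ A B}

theorem trace_dvd_trace_pow {n : ℕ} (x : QuadraticAlgebra ℤ A B) (hn : Odd n) :
    trace x ∣ trace (x ^ n) := by
  obtain ⟨i, rfl⟩ := hn
  obtain ⟨t, ht⟩ := exists_trace_pow_odd_eq x i
  exact ht ▸ dvd_mul_right _ _

theorem im_dvd_im_pow (x : QuadraticAlgebra ℤ A B) (n : ℕ) : x.im ∣ (x ^ n).im := by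
  induction n with
  | zero => simp
  | succ n ih => rw [pow_succ, im_mul]; exact dvd_add (dvd_add (by simp) (ih.mul_right _)) (by simp)

theorem abs_trace_pow_le (ha : a.Prime) (hq : q.Prime) (hq₂ : q ≠ 2) (htrace : (a : ℤ) ∣ trace x)
    (hnorm : ¬ (a : ℤ) ∣ norm x) {s : ℤ} {k : ℕ} (hs : s ∣ trace x) (hsa : IsCoprime s (a : ℤ))
    (h : |trace (x ^ q)| = |s * a ^ k|) : |trace (x ^ q)| ≤ |q * trace x| := by
  have hdvd : s * (a : ℤ) ^ k ∣ q * trace x := by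
    refine hsa.pow_right.mul_dvd (hs.mul_left _)
      (pow_dvd_trace_of_pow_dvd_trace_pow ha hq hq₂ htrace hnorm ?_)
    rw [← dvd_abs, h, dvd_abs]; exact dvd_mul_left _ _
  rcases eq_or_ne (trace x) 0 with h0 | h0
  · have := trace_dvd_trace_pow x (hq.odd_of_ne_two hq₂)
    rw [h0, zero_dvd_iff] at this
    simp [this, h0]
  · rw [h]
    exact Int.le_of_dvd (abs_pos.2 (mul_ne_zero (by exact_mod_cast hq.ne_zero) h0))
      ((abs_dvd_abs _ _).2 hdvd)

theorem abs_im_pow_le (hb : b.Prime) (hq : q.Prime) (hq₂ : q ≠ 2) (hΔ : (b : ℤ) ∣ B ^ 2 + 4 * A)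
    (hnorm : ¬ (b : ℤ) ∣ norm x) (h3 : b = 3 → q = 3 → ¬ 9 ∣ B ^ 2 + 4 * A + 3) {l : ℕ}
    (h : |(x ^ q).im| = b ^ l) : |(x ^ q).im| ≤ |q * x.im| := by
  have hdvd := pow_dvd_im_of_pow_dvd_im_pow (k := l) hb hq hq₂ hΔ hnorm h3
    (by rw [← dvd_abs, h])
  rcases eq_or_ne x.im 0 with h0 | h0
  · have := im_dvd_im_pow x q
    rw [h0, zero_dvd_iff] at this
    simp [this, h0]
  · rw [h]
    exact Int.le_of_dvd (abs_pos.2 (mul_ne_zero (by exact_mod_cast hq.ne_zero) h0))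
      ((dvd_abs _ _).2 hdvd)

theorem pow_mul_pow_dvd_im {k l : ℕ} (ha : a.Prime) (hb : b.Prime) (hab : a ≠ b) (hq : q.Prime)
    (hq₂ : q ≠ 2) (hΔa : (a : ℤ) ∣ B ^ 2 + 4 * A) (hΔb : (b : ℤ) ∣ B ^ 2 + 4 * A)
    (hnorma : ¬ (a : ℤ) ∣ norm x) (hnormb : ¬ (b : ℤ) ∣ norm x)
    (h3a : a = 3 → q = 3 → ¬ 9 ∣ B ^ 2 + 4 * A + 3) (h3b : b = 3 → q = 3 → ¬ 9 ∣ B ^ 2 + 4 * A + 3)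
    (h : |(x ^ q).im| = (a : ℤ) ^ k * (b : ℤ) ^ l) : (a : ℤ) ^ k * (b : ℤ) ^ l ∣ q * x.im := by
  have hcop : IsCoprime ((a : ℤ) ^ k) ((b : ℤ) ^ l) :=
    (Nat.isCoprime_iff_coprime.2 ((Nat.coprime_primes ha hb).2 hab)).pow
  exact hcop.mul_dvd
    (pow_dvd_im_of_pow_dvd_im_pow ha hq hq₂ hΔa hnorma h3a
      ((dvd_abs _ _).1 (h ▸ dvd_mul_right _ _)))
    (pow_dvd_im_of_pow_dvd_im_pow hb hq hq₂ hΔb hnormb h3b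
      ((dvd_abs _ _).1 (h ▸ dvd_mul_left _ _)))

theorem eq_and_eq_or_of_add_eq_of_abs_sub_eq {r s r' s' : ℤ} (hadd : r + s = r' + s')
    (hsub : |r - s| = |r' - s'|) : r = r' ∧ s = s' ∨ r = s' ∧ s = r' := by
  rcases abs_eq_abs.1 hsub with h | h <;> omega

theorem abs_two_mul_trace_sq_ne {r s : ℤ} (hr : trace x ^ 2 ≠ r) (hs : trace x ^ 2 ≠ s)
    (hnorm : 4 * norm x = r + s) : |2 * trace (x ^ 2)| ≠ |r - s| := by
  intro h
  have hx := four_mul_norm x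
  rw [show 2 * trace (x ^ 2) = trace x ^ 2 - -((B ^ 2 + 4 * A) * x.im ^ 2) by
    rw [trace_sq]; linarith] at h
  rcases eq_and_eq_or_of_add_eq_of_abs_sub_eq (by linarith) h with ⟨h, -⟩ | ⟨h, -⟩
  · exact hr h
  · exact hs h

end KeyLemma

section PureTwo

variable {D : ℤ} {b c k l z k' l' z' : ℕ} {x : QuadraticAlgebra ℤ (-D) 0}

theorem norm_eq_sq_add (x : QuadraticAlgebra ℤ (-D) 0) : norm x = x.re ^ 2 + D * x.im ^ 2 := by
  rw [norm_def]; ring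

theorem trace_eq_two_mul_re (x : QuadraticAlgebra ℤ (-D) 0) : trace x = 2 * x.re := by
  rw [trace_def]; ring

theorem two_dvd_im_sq (x : QuadraticAlgebra ℤ (-D) 0) : 2 ∣ (x ^ 2).im := by
  rw [im_sq, trace_eq_two_mul_re, mul_assoc]; exact dvd_mul_right _ _

theorem abs_trace_eq_two_pow (h : |x.re| = 2 ^ k) : |trace x| = 2 ^ (k + 1) := by
  rw [trace_eq_two_mul_re, abs_mul, h, pow_succ']; rfl

theorem IsPrimitiveRep.not_dvd_norm {A B : ℤ} {p c j : ℕ} {x : QuadraticAlgebra ℤ A B}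
    (hp : p.Prime) (hc : c.Prime) (hpc : p ≠ c) (hx : IsPrimitiveRep c j x) :
    ¬ (p : ℤ) ∣ norm x :=
  hx.norm_eq ▸ not_natCast_dvd_natCast_pow hp hc hpc j

theorem re_ne_zero_of_trace_pow_ne_zero {n : ℕ} (hn : Odd n) (h : trace (x ^ n) ≠ 0) :
    x.re ≠ 0 := fun h0 =>
  h (zero_dvd_iff.1 (by simpa [trace_eq_two_mul_re, h0] using trace_dvd_trace_pow x hn))

theorem im_ne_zero_of_im_pow_ne_zero {A B : ℤ} {x : QuadraticAlgebra ℤ A B} {n : ℕ}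
    (h : (x ^ n).im ≠ 0) : x.im ≠ 0 := fun h0 =>
  h (zero_dvd_iff.1 (h0 ▸ im_dvd_im_pow x n))

theorem isUnit_of_dvd_prime_pow {p n : ℕ} {w : ℤ} (hp : p.Prime) (hw : ¬ (p : ℤ) ∣ w)
    (h : w ∣ (p : ℤ) ^ n) : IsUnit w :=
  (((Nat.prime_iff_prime_int.1 hp).coprime_iff_not_dvd.2 hw).pow_left.symm).isUnit_of_dvd'
    dvd_rfl h

theorem abs_trace_cube_ne_two_pow {x : QuadraticAlgebra ℤ (-3) 0} (hnorm : ¬ 2 ∣ norm x)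
    (him : x.im ≠ 0) : |trace (x ^ 3)| ≠ 2 ^ (k + 1) := by
  intro h
  have heq : trace (x ^ 3) = (x.re - 3 * x.im) * (x.re + 3 * x.im) * (2 * x.re) := by
    rw [trace_pow_three, trace_eq_two_mul_re, norm_eq_sq_add]; ring
  have hunit {w : ℤ} (hw : w ∣ trace (x ^ 3)) (hw₂ : ¬ 2 ∣ w) : w = 1 ∨ w = -1 :=
    Int.isUnit_iff.1 (isUnit_of_dvd_prime_pow (n := k + 1) Nat.prime_two hw₂
      (by exact_mod_cast h ▸ (dvd_abs _ _).2 hw))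
  have hparity : ¬ 2 ∣ x.re + x.im := fun hd => hnorm <| by
    rw [norm_eq_sq_add, show x.re ^ 2 + 3 * x.im ^ 2 =
      (x.re + x.im) * (x.re - x.im) + 2 * (2 * x.im ^ 2) by ring]
    exact dvd_add (hd.mul_right _) (dvd_mul_right _ _)
  have h₁ := hunit (heq ▸ (dvd_mul_right _ _).mul_right _) (by omega)
  have h₂ := hunit (heq ▸ (dvd_mul_left _ _).mul_right _) (by omega)
  omega

theorem not_isProperPower_two_pow_pow (hb : b.Prime) (hc : c.Prime) (hb₂ : b ≠ 2) (hc₂ : c ≠ 2)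
    (hbc : b ≠ c) : ¬ IsProperPower c (⟨2 ^ k, b ^ l⟩ : QuadraticAlgebra ℤ (-b) 0) := by
  rintro ⟨q, j, δ, hq, hδ, h⟩
  have htrace : |trace (δ ^ q)| = 2 ^ (k + 1) :=
    h.abs_trace_eq.symm.trans (abs_trace_eq_two_pow (abs_of_pos (by positivity)))
  have him : |(δ ^ q).im| = b ^ l := h.abs_im_eq.symm.trans (abs_of_nonneg (by positivity))
  have hodd : ¬ 2 ∣ (δ ^ q).im := by
    rw [← dvd_abs, him]; exact not_natCast_dvd_natCast_pow Nat.prime_two hb hb₂.symm l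
  have hq₂ : q ≠ 2 := by
    rintro rfl; exact hodd (two_dvd_im_sq δ)
  have hb3 : 3 ≤ b := hb.two_le.lt_of_ne' hb₂
  have hre0 : δ.re ≠ 0 := re_ne_zero_of_trace_pow_ne_zero (hq.odd_of_ne_two hq₂)
    (abs_pos.1 (htrace ▸ by positivity))
  have him0 : δ.im ≠ 0 := im_ne_zero_of_im_pow_ne_zero (n := q)
    (abs_pos.1 (him ▸ pow_pos (by exact_mod_cast hb.pos) _))
  by_cases h3 : b = 3 ∧ q = 3
  · obtain ⟨rfl, rfl⟩ := h3
    exact abs_trace_cube_ne_two_pow (hδ.not_dvd_norm Nat.prime_two hc hc₂.symm) him0 htrace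
  · refine false_of_abs_trace_pow_le_of_abs_im_pow_le (x := δ) (q := q) ?_ ?_
      (hq.two_le.lt_of_ne' hq₂)
      (abs_trace_pow_le (s := 1) (k := k + 1) Nat.prime_two hq hq₂ ?_
        (hδ.not_dvd_norm Nat.prime_two hc hc₂.symm) (one_dvd _) isCoprime_one_left ?_)
      (abs_im_pow_le hb hq hq₂ ?_ (hδ.not_dvd_norm hb hc hbc) ?_ him)
    · linarith
    · rw [norm_eq_sq_add]
      have : (3 : ℤ) ≤ b := by exact_mod_cast hb3
      have := Int.add_one_le_of_lt (pow_two_pos_of_ne_zero hre0)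
      have := Int.add_one_le_of_lt (pow_two_pos_of_ne_zero him0)
      nlinarith
    · exact trace_eq_two_mul_re δ ▸ dvd_mul_right _ _
    · rw [htrace, one_mul]; exact (abs_of_pos (by positivity)).symm
    · exact ⟨-4, by ring⟩
    · exact fun h h' => (h3 ⟨h, h'⟩).elim

theorem eq_of_sq_add_mul_sq_eq_pow (hc : c.Prime) (hc₂ : c ≠ 2) (hD : 1 < D) (hcD : ¬ (c : ℤ) ∣ D)
    {r s r' s' : ℤ} (hz : 0 < z) (hz' : 0 < z') (hs : ¬ (c : ℤ) ∣ s) (hs' : ¬ (c : ℤ) ∣ s')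
    (h : r ^ 2 + D * s ^ 2 = c ^ z) (h' : r' ^ 2 + D * s' ^ 2 = c ^ z')
    (hx : ¬ IsProperPower c (⟨r, s⟩ : QuadraticAlgebra ℤ (-D) 0))
    (hx' : ¬ IsProperPower c (⟨r', s'⟩ : QuadraticAlgebra ℤ (-D) 0)) :
    z = z' ∧ |r| = |r'| ∧ |s| = |s'| := by
  have hcΔ : ¬ (c : ℤ) ∣ 0 ^ 2 + 4 * -D := fun hd => by
    rw [show (0 : ℤ) ^ 2 + 4 * -D = -(2 ^ 2 * D) by ring, dvd_neg] at hd
    exact ((Nat.prime_iff_prime_int.1 hc).dvd_or_dvd hd).elim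
      (not_natCast_dvd_natCast_pow hc Nat.prime_two hc₂ 2) hcD
  obtain ⟨rfl, heq⟩ := IsPrimitiveRep.eq_of_not_isProperPower hc hcΔ (by linarith)
    ⟨hz, (norm_eq_sq_add _).trans h, hs⟩ ⟨hz', (norm_eq_sq_add _).trans h', hs'⟩ hx hx'
  have htrace := heq.abs_trace_eq
  rw [trace_eq_two_mul_re, trace_eq_two_mul_re, abs_mul, abs_mul] at htrace
  exact ⟨rfl, mul_left_cancel₀ (abs_ne_zero.2 two_ne_zero) htrace, heq.abs_im_eq⟩

theorem natCast_pow_injective (hc : c.Prime) : Function.Injective (fun n : ℕ => |(c : ℤ) ^ n|) :=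
  fun i j h => Nat.pow_right_injective hc.two_le
    (by simpa only [← Nat.cast_pow, Nat.abs_cast, Nat.cast_inj] using h)

theorem eq_of_two_pow_even_add_pow_odd_eq (hb : b.Prime) (hc : c.Prime) (hb₂ : b ≠ 2)
    (hc₂ : c ≠ 2) (hbc : b ≠ c) (hz : 0 < z) (hz' : 0 < z')
    (h : 2 ^ (2 * k) + b ^ (2 * l + 1) = c ^ z)
    (h' : 2 ^ (2 * k') + b ^ (2 * l' + 1) = c ^ z') : k = k' ∧ l = l' ∧ z = z' := by
  have hrep {k l z : ℕ} (h : 2 ^ (2 * k) + b ^ (2 * l + 1) = c ^ z) :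
      ((2 : ℤ) ^ k) ^ 2 + b * ((b : ℤ) ^ l) ^ 2 = (c : ℤ) ^ z := by
    rw [← Nat.cast_pow c, ← h]; push_cast; ring
  have hcb := not_natCast_dvd_natCast_pow hc hb hbc.symm
  have hnot (k l : ℕ) := not_isProperPower_two_pow_pow (k := k) (l := l) hb hc hb₂ hc₂ hbc
  obtain ⟨hzz, hk, hl⟩ := eq_of_sq_add_mul_sq_eq_pow hc hc₂ (by exact_mod_cast hb.one_lt)
    (by simpa using hcb 1) hz hz' (hcb l) (hcb l') (hrep h) (hrep h') (hnot k l) (hnot k' l')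
  exact ⟨natCast_pow_injective Nat.prime_two hk, natCast_pow_injective hb hl, hzz⟩

theorem not_isProperPower_two_pow_one (hc : c.Prime) (hc₂ : c ≠ 2) :
    ¬ IsProperPower c (⟨2 ^ k, 1⟩ : QuadraticAlgebra ℤ (-D) 0) := by
  rintro ⟨q, j, δ, hq, hδ, h⟩
  have him : |(δ ^ q).im| = 1 := h.abs_im_eq.symm
  have htrace : |trace (δ ^ q)| = 2 ^ (k + 1) :=
    h.abs_trace_eq.symm.trans (abs_trace_eq_two_pow (abs_of_pos (by positivity)))
  have hq₂ : q ≠ 2 := by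
    rintro rfl
    have := two_dvd_im_sq δ
    rw [← dvd_abs, him] at this
    omega
  have htrace_eq : |trace δ| = |trace (δ ^ q)| := by
    have hdvd : (2 : ℤ) ^ (k + 1) ∣ q * trace δ :=
      pow_dvd_trace_of_pow_dvd_trace_pow Nat.prime_two hq hq₂
        (trace_eq_two_mul_re δ ▸ dvd_mul_right _ _) (hδ.not_dvd_norm Nat.prime_two hc hc₂.symm)
        ((dvd_abs _ _).1 (by rw [htrace]; rfl))
    have hcop : IsCoprime ((2 : ℤ) ^ (k + 1)) q := by
      exact_mod_cast Nat.isCoprime_iff_coprime.2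
        (((Nat.coprime_primes Nat.prime_two hq).2 hq₂.symm).pow_left (k + 1))
    rw [← Int.natCast_natAbs, ← Int.natCast_natAbs, Int.natAbs_eq_of_dvd_dvd
      (trace_dvd_trace_pow δ (hq.odd_of_ne_two hq₂))
      ((abs_dvd _ _).1 (htrace ▸ hcop.dvd_of_dvd_mul_left hdvd))]
  have him_eq : |δ.im| = |(δ ^ q).im| := by
    rw [him]
    exact Int.isUnit_iff_abs_eq.1 (isUnit_of_dvd_one (him ▸ (dvd_abs _ _).2 (im_dvd_im_pow δ q)))
  have hnorm : norm δ = norm (δ ^ q) := by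
    have h₁ := four_mul_norm δ
    have h₂ := four_mul_norm (δ ^ q)
    rw [sq_eq_sq_iff_abs_eq_abs _ _ |>.2 htrace_eq, sq_eq_sq_iff_abs_eq_abs _ _ |>.2 him_eq] at h₁
    linarith
  rw [map_pow, hδ.norm_eq, ← pow_mul] at hnorm
  have hj : j = j * q := Nat.pow_right_injective hc.two_le (by exact_mod_cast hnorm)
  exact hq.ne_one (Nat.mul_eq_left hδ.pos.ne' |>.1 hj.symm)

theorem two_pow_injOn_sq_add_eq_pow (hc : c.Prime) (hc₂ : c ≠ 2) (hD : 1 < D)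
    (hcD : ¬ (c : ℤ) ∣ D) (hz : 0 < z) (hz' : 0 < z') (h : (2 ^ k) ^ 2 + D = c ^ z)
    (h' : (2 ^ k') ^ 2 + D = c ^ z') : k = k' := by
  have hc1 : ¬ (c : ℤ) ∣ 1 := by exact_mod_cast hc.not_dvd_one
  exact natCast_pow_injective Nat.prime_two (eq_of_sq_add_mul_sq_eq_pow hc hc₂ hD hcD hz hz' hc1 hc1
    (by rw [one_pow, mul_one]; exact h) (by rw [one_pow, mul_one]; exact h')
    (not_isProperPower_two_pow_one hc hc₂) (not_isProperPower_two_pow_one hc hc₂)).2.1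

theorem three_dvd_re {x : QuadraticAlgebra ℤ (-2) 0} {n : ℕ} (hnorm : ¬ 3 ∣ norm x)
    (him : x.im ∣ 2 ^ n) : 3 ∣ x.re := by
  have him₃ : ¬ 3 ∣ x.im := fun hd =>
    not_natCast_dvd_natCast_pow Nat.prime_three Nat.prime_two (by norm_num) n (hd.trans him)
  have key : ∀ u v : ZMod 3, u ^ 2 + 2 * v ^ 2 ≠ 0 → v ≠ 0 → u = 0 := by decide
  have hz (w : ℤ) : (w : ZMod 3) = 0 ↔ 3 ∣ w := ZMod.intCast_zmod_eq_zero_iff_dvd w 3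
  rw [norm_eq_sq_add, ← hz] at hnorm
  exact (hz _).1 (key _ _ (by exact_mod_cast hnorm) ((hz _).not.2 him₃))

theorem not_isProperPower_three_pow_two_pow (hc : c.Prime) (hc₂ : c ≠ 2) (hc₃ : c ≠ 3)
    (hz : Odd z) (hx : IsPrimitiveRep c z (⟨3 ^ k, 2 ^ l⟩ : QuadraticAlgebra ℤ (-2) 0)) :
    ¬ IsProperPower c (⟨3 ^ k, 2 ^ l⟩ : QuadraticAlgebra ℤ (-2) 0) := by
  rintro ⟨q, j, δ, hq, hδ, h⟩
  have htrace : |trace (δ ^ q)| = 2 * 3 ^ k := by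
    rw [← h.abs_trace_eq, trace_eq_two_mul_re]; exact abs_of_pos (by positivity)
  have him : |(δ ^ q).im| = 2 ^ l := h.abs_im_eq.symm.trans (abs_of_nonneg (by positivity))
  have hq₂ : q ≠ 2 := by
    rintro rfl
    have := hx.exponent_eq_mul hc hδ h
    exact (Nat.not_even_iff_odd.2 hz) ⟨j, by omega⟩
  have hre0 : δ.re ≠ 0 := re_ne_zero_of_trace_pow_ne_zero (hq.odd_of_ne_two hq₂)
    (abs_pos.1 (htrace ▸ by positivity))
  have hnorm₃ := hδ.not_dvd_norm Nat.prime_three hc hc₃.symm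
  have hre₃ : 3 ∣ δ.re := three_dvd_re (n := l) hnorm₃
    (him ▸ (dvd_abs _ _).2 (im_dvd_im_pow δ q))
  refine false_of_abs_trace_pow_le_of_abs_im_pow_le (x := δ) (q := q) (by norm_num) ?_
    (hq.two_le.lt_of_ne' hq₂)
    (abs_trace_pow_le (a := 3) (s := 2) (k := k) Nat.prime_three hq hq₂ ?_ hnorm₃ ?_ ?_ ?_)
    (abs_im_pow_le (b := 2) (l := l) Nat.prime_two hq hq₂ (by norm_num)
      (hδ.not_dvd_norm Nat.prime_two hc hc₂.symm) (by norm_num) (by exact_mod_cast him))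
  · obtain ⟨u, hu⟩ := hre₃
    rw [norm_eq_sq_add, hu]
    have := Int.add_one_le_of_lt (pow_two_pos_of_ne_zero (show u ≠ 0 by rintro rfl; simp_all))
    nlinarith [sq_nonneg δ.im]
  · exact trace_eq_two_mul_re δ ▸ hre₃.mul_left _
  · exact trace_eq_two_mul_re δ ▸ dvd_mul_right _ _
  · exact Int.isCoprime_iff_gcd_eq_one.2 rfl
  · rw [htrace]; exact (abs_of_pos (by positivity)).symm

theorem eq_of_two_pow_odd_add_three_pow_even_eq (hc : c.Prime) (hc₂ : c ≠ 2) (hc₃ : c ≠ 3)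
    (hz : Odd z) (hz' : Odd z') (h : 2 ^ (2 * l + 1) + 3 ^ (2 * k) = c ^ z)
    (h' : 2 ^ (2 * l' + 1) + 3 ^ (2 * k') = c ^ z') : l = l' ∧ k = k' ∧ z = z' := by
  have heq {k l z : ℕ} (h : 2 ^ (2 * l + 1) + 3 ^ (2 * k) = c ^ z) :
      ((3 : ℤ) ^ k) ^ 2 + 2 * ((2 : ℤ) ^ l) ^ 2 = (c : ℤ) ^ z := by
    rw [← Nat.cast_pow c, ← h]; push_cast; ring
  have hc2 := not_natCast_dvd_natCast_pow hc Nat.prime_two hc₂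
  have hnot {k l z : ℕ} (hz : Odd z) (h : 2 ^ (2 * l + 1) + 3 ^ (2 * k) = c ^ z) :=
    not_isProperPower_three_pow_two_pow hc hc₂ hc₃ hz
      ⟨hz.pos, (norm_eq_sq_add _).trans (heq h), hc2 l⟩
  obtain ⟨hzz, hk, hl⟩ := eq_of_sq_add_mul_sq_eq_pow hc hc₂ one_lt_two
    (by simpa using hc2 1) hz.pos hz'.pos (hc2 l) (hc2 l') (heq h) (heq h') (hnot hz h)
    (hnot hz' h')
  exact ⟨natCast_pow_injective Nat.prime_two hl, natCast_pow_injective Nat.prime_three hk, hzz⟩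

end PureTwo

section OddOdd

variable {b c k l z k' l' z' : ℕ}

theorem sq_ne_prime_pow_odd {p : ℕ} (hp : p.Prime) (u : ℤ) (i : ℕ) :
    u ^ 2 ≠ (p : ℤ) ^ (2 * i + 1) := by
  intro h
  have hnat : u.natAbs ^ 2 = p ^ (2 * i + 1) := by zify; rw [sq_abs, h]
  have := congrArg (fun n => n.factorization p) hnat
  simp only [Nat.factorization_pow, Finsupp.smul_apply, hp.factorization_self, smul_eq_mul] at this
  omega

theorem pow_four_mul_sq_lt {N q : ℕ} (hN : 6 ≤ N) (hq : 3 ≤ q) :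
    q ^ 4 * N ^ 2 < 16 * N ^ q := by
  induction q, hq using Nat.le_induction with
  | base => rw [pow_succ N 2]; nlinarith [pow_pos (show 0 < N by omega) 2]
  | succ q hq ih =>
    calc (q + 1) ^ 4 * N ^ 2 ≤ 6 * q ^ 4 * N ^ 2 := by
          gcongr
          have : (3 * (q + 1)) ^ 4 ≤ (4 * q) ^ 4 := Nat.pow_le_pow_left (by omega) 4
          nlinarith [pow_pos (show 0 < q by omega) 4]
      _ = q ^ 4 * N ^ 2 * 6 := by ring
      _ ≤ q ^ 4 * N ^ 2 * N := by gcongr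
      _ < 16 * N ^ q * N := by gcongr
      _ = 16 * N ^ (q + 1) := by ring

theorem abs_trace_sq_ne (hb : b.Prime) {x : QuadraticAlgebra ℤ (-(2 * b)) 0}
    (hnorm : norm x = 2 ^ (2 * k + 1) + b ^ (2 * l + 1)) :
    |trace (x ^ 2)| ≠ |2 * (2 ^ (2 * k + 1) - (b : ℤ) ^ (2 * l + 1))| := by
  have hre {r : ℤ} (h : trace x ^ 2 = 4 * r) : x.re ^ 2 = r := by
    rw [trace_eq_two_mul_re] at h
    linarith
  intro h
  refine abs_two_mul_trace_sq_ne (fun h => sq_ne_prime_pow_odd Nat.prime_two _ k (hre h))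
    (fun h => sq_ne_prime_pow_odd hb _ l (hre h)) (by rw [hnorm, mul_add]; rfl) ?_
  rw [abs_mul, h, ← abs_mul]
  congr 1
  push_cast
  ring

theorem sq_add_ne_pow {r s N q : ℕ} (hr : 2 ≤ r) (hs : 2 ≤ s) (hN : 6 ≤ N) (hq : 3 ≤ q)
    (h : 4 * (r * s) ≤ q ^ 2 * N) : (r + s) ^ 2 ≠ N ^ q := by
  intro heq
  have hadd : r + s ≤ r * s := by nlinarith
  have := calc
    16 * N ^ q = (4 * (r + s)) ^ 2 := by rw [← heq]; ring
    _ ≤ (q ^ 2 * N) ^ 2 := Nat.pow_le_pow_left (by omega) 2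
    _ = q ^ 4 * N ^ 2 := by ring
  exact absurd (pow_four_mul_sq_lt hN hq) this.not_gt

theorem norm_sub_mul_pow (h : 2 ^ (2 * k + 1) + b ^ (2 * l + 1) = c ^ z) :
    (2 ^ (2 * k + 1) - (b : ℤ) ^ (2 * l + 1)) ^ 2 + 2 * b * (2 ^ (k + 1) * (b : ℤ) ^ l) ^ 2 =
      (c : ℤ) ^ (2 * z) := by
  rw [mul_comm 2 z, pow_mul, ← Nat.cast_pow c, ← h]; push_cast; ring

theorem four_mul_two_pow_mul_pow_le {q : ℕ} {x : QuadraticAlgebra ℤ (-(2 * b)) 0} (hq : q ≠ 0)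
    (him : x.im ≠ 0) (hdvd : 2 ^ (k + 1) * (b : ℤ) ^ l ∣ q * x.im) :
    4 * ((2 : ℤ) ^ (2 * k + 1) * b ^ (2 * l + 1)) ≤ q ^ 2 * norm x := by
  have hle := Int.le_of_dvd
    (pow_two_pos_of_ne_zero (mul_ne_zero (by exact_mod_cast hq) him)) (pow_dvd_pow_of_dvd hdvd 2)
  calc 4 * ((2 : ℤ) ^ (2 * k + 1) * b ^ (2 * l + 1))
      = 2 * b * (2 ^ (k + 1) * b ^ l) ^ 2 := by ring
    _ ≤ 2 * b * (q * x.im) ^ 2 := by gcongr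
    _ ≤ q ^ 2 * norm x := by
      rw [norm_eq_sq_add]
      nlinarith [mul_nonneg (sq_nonneg (q : ℤ)) (sq_nonneg x.re)]

theorem not_isProperPower_sub_mul_pow (hb : b.Prime) (hc : c.Prime) (hb₂ : b ≠ 2) (hc₂ : c ≠ 2)
    (hbc : b ≠ c) (h : 2 ^ (2 * k + 1) + b ^ (2 * l + 1) = c ^ z) :
    ¬ IsProperPower c
      (⟨2 ^ (2 * k + 1) - b ^ (2 * l + 1), 2 ^ (k + 1) * b ^ l⟩ :
        QuadraticAlgebra ℤ (-(2 * b)) 0) := by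
  rintro ⟨q, j, δ, hq, hδ, hxδ⟩
  have him : |(δ ^ q).im| = 2 ^ (k + 1) * b ^ l :=
    hxδ.abs_im_eq.symm.trans (abs_of_nonneg (by positivity))
  have hnorm_pow : (c ^ j) ^ q = (2 ^ (2 * k + 1) + b ^ (2 * l + 1)) ^ 2 := by
    have := hxδ.norm_eq
    rw [norm_eq_sq_add, norm_sub_mul_pow h, map_pow, hδ.norm_eq, mul_comm 2 z] at this
    rw [h, ← pow_mul c z]; exact_mod_cast this.symm
  by_cases hq₂ : q = 2
  · subst hq₂
    have hcj : c ^ j = 2 ^ (2 * k + 1) + b ^ (2 * l + 1) :=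
      Nat.pow_left_injective two_ne_zero hnorm_pow
    exact abs_trace_sq_ne hb (hδ.norm_eq.trans (by exact_mod_cast hcj))
      (by rw [← hxδ.abs_trace_eq, trace_eq_two_mul_re])
  have hdvd : 2 ^ (k + 1) * (b : ℤ) ^ l ∣ q * δ.im := by
    refine mod_cast pow_mul_pow_dvd_im Nat.prime_two hb hb₂.symm hq hq₂ ⟨-4 * b, by push_cast; ring⟩
      ⟨-8, by ring⟩ (hδ.not_dvd_norm Nat.prime_two hc hc₂.symm) (hδ.not_dvd_norm hb hc hbc)
      (by norm_num) ?_ (mod_cast him)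
    rintro rfl -
    norm_num
  have hre0 : δ.re ≠ 0 := fun h0 => hδ.not_dvd_norm Nat.prime_two hc hc₂.symm
    ⟨b * δ.im ^ 2, by rw [norm_eq_sq_add, h0]; push_cast; ring⟩
  have him0 : δ.im ≠ 0 := im_ne_zero_of_im_pow_ne_zero (n := q)
    (abs_pos.1 (him ▸ mul_pos (by positivity) (pow_pos (by exact_mod_cast hb.pos) _)))
  have hnorm := hδ.norm_eq
  rw [norm_eq_sq_add] at hnorm
  have hre1 := Int.add_one_le_of_lt (pow_two_pos_of_ne_zero hre0)
  have him1 := Int.add_one_le_of_lt (pow_two_pos_of_ne_zero him0)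
  have hb3 : (3 : ℤ) ≤ b := by exact_mod_cast hb.two_le.lt_of_ne' hb₂
  refine sq_add_ne_pow (Nat.le_self_pow (by omega) 2)
    (hb.two_le.trans (Nat.le_self_pow (by omega) b)) ?_ (hq.two_le.lt_of_ne' hq₂) ?_ hnorm_pow.symm
  · zify; nlinarith
  · zify
    exact (four_mul_two_pow_mul_pow_le hq.ne_zero him0 hdvd).trans_eq (by rw [hδ.norm_eq])

theorem eq_of_two_pow_odd_add_pow_odd_eq (hb : b.Prime) (hc : c.Prime) (hb₂ : b ≠ 2)
    (hc₂ : c ≠ 2) (hbc : b ≠ c) (hz : 0 < z) (hz' : 0 < z')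
    (h : 2 ^ (2 * k + 1) + b ^ (2 * l + 1) = c ^ z)
    (h' : 2 ^ (2 * k' + 1) + b ^ (2 * l' + 1) = c ^ z') : k = k' ∧ l = l' ∧ z = z' := by
  have hcp := Nat.prime_iff_prime_int.1 hc
  have hc2 := not_natCast_dvd_natCast_pow hc Nat.prime_two hc₂
  have hcb := not_natCast_dvd_natCast_pow hc hb hbc.symm
  have hcim (k l : ℕ) : ¬ (c : ℤ) ∣ 2 ^ (k + 1) * b ^ l :=
    fun hd => (hcp.dvd_or_dvd hd).elim (hc2 _) (hcb _)
  obtain ⟨hzz, hre, -⟩ := eq_of_sq_add_mul_sq_eq_pow hc hc₂ (by linarith [hb.one_lt])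
    (fun hd => (hcp.dvd_or_dvd hd).elim (by simpa using hc2 1) (by simpa using hcb 1))
    (Nat.mul_pos two_pos hz) (Nat.mul_pos two_pos hz') (hcim k l) (hcim k' l')
    (norm_sub_mul_pow h) (norm_sub_mul_pow h')
    (not_isProperPower_sub_mul_pow hb hc hb₂ hc₂ hbc h)
    (not_isProperPower_sub_mul_pow hb hc hb₂ hc₂ hbc h')
  obtain rfl : z = z' := by omega
  have hadd : (2 : ℤ) ^ (2 * k + 1) + b ^ (2 * l + 1) = 2 ^ (2 * k' + 1) + b ^ (2 * l' + 1) := by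
    exact_mod_cast h.trans h'.symm
  rcases eq_and_eq_or_of_add_eq_of_abs_sub_eq hadd hre with ⟨h₂, hb'⟩ | ⟨h₂, -⟩
  · have := natCast_pow_injective Nat.prime_two (congrArg abs h₂)
    have := natCast_pow_injective hb (congrArg abs hb')
    omega
  · refine (not_natCast_dvd_natCast_pow hb Nat.prime_two hb₂ (2 * k + 1) ?_).elim
    exact h₂ ▸ dvd_pow_self _ (by omega)

end OddOdd

section TwoAdic

variable {D : ℤ} {x : QuadraticAlgebra ℤ (-D) 0}

theorem odd_re_pow (hD : Even D) (hre : Odd x.re) (n : ℕ) : Odd (x ^ n).re := by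
  induction n with
  | zero => simp
  | succ n ih =>
    rw [pow_succ, re_mul]
    exact (ih.mul hre).add_even ((hD.neg.mul_right _).mul_right _)

theorem odd_norm (hD : Even D) (hre : Odd x.re) : Odd (norm x) := by
  rw [norm_eq_sq_add]
  exact hre.pow.add_even (hD.mul_right _)

theorem emultiplicity_two_two : emultiplicity (2 : ℤ) 2 = 1 := by
  simpa using emultiplicity_pow_self two_ne_zero Int.prime_two.not_isUnit 1

theorem emultiplicity_two_trace {y : QuadraticAlgebra ℤ (-D) 0} (hy : Odd y.re) :
    emultiplicity 2 (trace y) = 1 := by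
  rw [trace_eq_two_mul_re, emultiplicity_mul Int.prime_two,
    emultiplicity_eq_zero.2 (Int.not_even_iff_odd.2 hy ∘ even_iff_two_dvd.2), add_zero,
    emultiplicity_two_two]

theorem exists_odd_im_pow_eq (hD : Even D) (hre : Odd x.re) (i : ℕ) :
    ∃ u, Odd u ∧ (x ^ (2 * i + 1)).im = x.im * u := by
  induction i with
  | zero => exact ⟨1, odd_one, by simp⟩
  | succ i ih =>
    obtain ⟨u, hu, h⟩ := ih
    obtain ⟨s, hs⟩ := im_dvd_im_pow x (2 * i + 2)
    refine ⟨trace x * s - norm x * u, ?_, ?_⟩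
    · rw [trace_eq_two_mul_re, mul_assoc]
      exact (even_two_mul _).sub_odd ((odd_norm hD hre).mul hu)
    · have := im_pow_add_two_mul x (2 * i + 1) 1
      rw [show 2 * (i + 1) + 1 = 2 * i + 1 + 2 * 1 by ring, this, hs, h, pow_one, pow_one,
        mul_left_comm, mul_left_comm (norm x), mul_sub]

theorem emultiplicity_two_im_pow (hD : Even D) (hre : Odd x.re) (n : ℕ) :
    emultiplicity 2 (x ^ n).im = emultiplicity 2 x.im + emultiplicity 2 (n : ℤ) := by
  induction n using Nat.strong_induction_on with
  | _ n ih =>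
    rcases n.even_or_odd' with ⟨j, rfl | rfl⟩
    · rcases j.eq_zero_or_pos with rfl | hj
      · simp
      · rw [mul_comm, pow_mul, im_sq, emultiplicity_mul Int.prime_two, ih j (by omega),
          emultiplicity_two_trace (odd_re_pow hD hre j), Nat.cast_mul,
          emultiplicity_mul Int.prime_two, Nat.cast_ofNat, emultiplicity_two_two, add_comm,
          add_assoc]
    · obtain ⟨u, hu, h⟩ := exists_odd_im_pow_eq hD hre j
      have hj : ¬ (2 : ℤ) ∣ ((2 * j + 1 : ℕ) : ℤ) := by omega
      rw [h, emultiplicity_mul Int.prime_two, emultiplicity_eq_zero.2 hj,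
        emultiplicity_eq_zero.2 (Int.not_even_iff_odd.2 hu ∘ even_iff_two_dvd.2)]

theorem im_mul_sq {A B : ℤ} (w y : QuadraticAlgebra ℤ A B) :
    (w * y ^ 2).im = norm y * w.im + trace (w * y) * y.im := by
  simp only [sq, re_mul, im_mul, trace_def, norm_def]
  ring

theorem emultiplicity_norm_sub_one_add {w : QuadraticAlgebra ℤ (-D) 0} (hD : Even D)
    (hw : Odd w.re) (hre : Odd x.re) (hnorm : 4 ∣ norm x - 1) {j : ℕ} (hj : j ≠ 0)
    (h : (w * x ^ (2 * j)).im = w.im) :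
    emultiplicity 2 (norm x - 1) + emultiplicity 2 w.im = emultiplicity 2 x.im + 1 := by
  have hwj : Odd (w * x ^ j).re := by
    rw [re_mul]
    exact (hw.mul (odd_re_pow hD hre j)).add_even ((hD.neg.mul_right _).mul_right _)
  have heq : (norm x ^ j - 1 ^ j) * w.im = - (trace (w * x ^ j) * (x ^ j).im) := by
    have h' := im_mul_sq w (x ^ j)
    rw [← pow_mul, mul_comm j, h, map_pow QuadraticAlgebra.norm] at h'
    linear_combination -h'
  have hval := congrArg (emultiplicity 2) heq
  rw [emultiplicity_neg, emultiplicity_mul Int.prime_two, emultiplicity_mul Int.prime_two,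
    emultiplicity_two_trace hwj, emultiplicity_two_im_pow hD hre, Int.two_pow_sub_pow' _ hnorm
      (Int.not_even_iff_odd.2 (odd_norm hD hre) ∘ even_iff_two_dvd.2)] at hval
  have hj' : emultiplicity 2 (j : ℤ) ≠ ⊤ :=
    finiteMultiplicity_iff_emultiplicity_ne_top.1
      (Int.finiteMultiplicity_iff.2 ⟨by decide, by exact_mod_cast hj⟩)
  refine ENat.add_left_injective_of_ne_top hj' ?_
  simp only
  rw [add_right_comm, hval, add_comm _ 1, add_assoc]

end TwoAdic

section NormThree

variable {k z : ℕ}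

theorem emultiplicity_two_two_pow (k : ℕ) : emultiplicity (2 : ℤ) (2 ^ k) = k :=
  emultiplicity_pow_self two_ne_zero Int.prime_two.not_isUnit k

theorem emultiplicity_two_eq_of_abs_eq {v : ℤ} (h : |v| = 2 ^ k) : emultiplicity 2 v = k := by
  rcases abs_choice v with h' | h' <;> rw [h'] at h <;>
    simp [← emultiplicity_two_two_pow, ← h, emultiplicity_neg]

theorem four_dvd_sub_one (i : ℕ) : (4 : ℤ) ∣ (2 * i + 3) * 3 ^ (i + 1) - 1 := by
  induction i with
  | zero => decide
  | succ i ih =>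
    have h : (2 * (i + 1 : ℕ) + 3 : ℤ) * 3 ^ (i + 1 + 1) - 1 =
        3 * ((2 * i + 3) * 3 ^ (i + 1) - 1) + 2 * 3 ^ (i + 2) + 2 := by
      push_cast; ring
    have h2 : (2 : ℤ) ∣ 3 ^ (i + 2) + 1 := by
      have : Odd ((3 : ℤ) ^ (i + 2)) := Odd.pow (by decide)
      exact even_iff_two_dvd.1 this.add_one
    omega

theorem sq_eq_one_of_norm_eq_three {x : QuadraticAlgebra ℤ (-2) 0} (hnorm : norm x = 3)
    (him : x.im ≠ 0) : x.re ^ 2 = 1 ∧ x.im ^ 2 = 1 := by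
  rw [norm_eq_sq_add] at hnorm
  have := sq_nonneg x.re
  have := pow_two_pos_of_ne_zero him
  omega

theorem im_pow_eq_im_of_norm_eq_three {x : QuadraticAlgebra ℤ (-2) 0} (hnorm : norm x = 3)
    (hz : Odd z) (h : |(x ^ z).im| = 1) : (x ^ z).im = x.im := by
  have him : x.im ≠ 0 := im_ne_zero_of_im_pow_ne_zero (n := z) (by rintro h0; simp [h0] at h)
  obtain ⟨-, hv⟩ := sq_eq_one_of_norm_eq_three hnorm him
  obtain ⟨j, rfl⟩ := hz
  rcases j with _ | i
  · simp
  · obtain ⟨t, ht⟩ := exists_im_pow_odd_eq x i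
    obtain ⟨s, hs⟩ := four_dvd_sub_one i
    have hmod : 4 ∣ (x ^ (2 * (i + 1) + 1)).im - x.im := by
      rw [show 2 * (i + 1) + 1 = 2 * i + 3 by ring, ht, hnorm, hv]
      refine ⟨x.im * (s - 2 * (∑ k ∈ Finset.range (i + 2), k ^ 2 : ℕ) * 3 ^ i + 16 * t), ?_⟩
      push_cast
      linear_combination x.im * hs
    rcases (abs_eq zero_le_one).1 h with h | h <;>
      rcases sq_eq_one_iff.1 hv with h' | h' <;> omega

theorem odd_of_sq_eq_one {r : ℤ} (h : r ^ 2 = 1) : Odd r := by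
  rcases sq_eq_one_iff.1 h with rfl | rfl <;> decide

theorem eq_one_or_three_of_abs_im_pow_eq_one {x : QuadraticAlgebra ℤ (-2) 0}
    (hnorm : norm x = 3) (hz : Odd z) (h : |(x ^ z).im| = 1) : z = 1 ∨ z = 3 := by
  have hz' := im_pow_eq_im_of_norm_eq_three hnorm hz h
  have him : x.im ≠ 0 := by rw [← hz', ← abs_pos, h]; exact one_pos
  obtain ⟨hu, hv⟩ := sq_eq_one_of_norm_eq_three hnorm him
  have hre := odd_of_sq_eq_one hu
  have hre_pow (n : ℕ) : Odd (x ^ n).re := odd_re_pow even_two hre n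
  have hnorm2 : norm (x ^ 2) = 9 := by rw [map_pow QuadraticAlgebra.norm, hnorm]; norm_num
  have hval2 : emultiplicity 2 (x ^ 2).im = 1 := by
    rw [im_sq, emultiplicity_mul Int.prime_two, emultiplicity_two_trace hre,
      emultiplicity_two_eq_of_abs_eq (k := 0) (by rw [← hz', h, pow_zero])]
    rfl
  have clash {n j : ℕ} (hn : (x ^ n).im = x.im) (hj : j ≠ 0) : (x ^ (n + 4 * j)).im ≠ x.im := by
    intro hnj
    have := emultiplicity_norm_sub_one_add (w := x ^ n) (x := x ^ 2) even_two (hre_pow n)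
      (hre_pow 2) (by rw [hnorm2]; decide) hj
      (by rw [← pow_mul, ← pow_add, hn, ← mul_assoc]; exact hnj)
    rw [hnorm2, hval2, hn, emultiplicity_two_eq_of_abs_eq (k := 3) (by decide),
      emultiplicity_two_eq_of_abs_eq (k := 0) (by rw [← hz', h, pow_zero])] at this
    norm_num at this
  have him3 : (x ^ 3).im = x.im := by
    rw [im_pow_three, hnorm, hv]; ring
  by_contra! hne
  have hz2 := Nat.odd_iff.1 hz
  rcases (by omega : z % 4 = 1 ∨ z % 4 = 3) with hz4 | hz4
  · exact clash (n := 1) (j := z / 4) (by rw [pow_one]) (by omega)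
      (by rwa [(by omega : 1 + 4 * (z / 4) = z)])
  · exact clash (n := 3) (j := z / 4) him3 (by omega) (by rwa [(by omega : 3 + 4 * (z / 4) = z)])

end NormThree

section TwoPow

theorem eq_one_or_three_of_three_pow_eq {w h : ℕ} (hw : 3 ^ w = 2 ^ h + 1) : h = 1 ∨ h = 3 := by
  by_contra! hne
  have h0 : h ≠ 0 := by
    rintro rfl
    have : Odd (3 ^ w) := Odd.pow (by decide)
    exact absurd (hw ▸ this) (by decide)
  have h2 : h ≠ 2 := by
    rintro rfl
    have := (Nat.prime_five.dvd_of_dvd_pow (hw ▸ (by decide : 5 ∣ 2 ^ 2 + 1)))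
    omega
  obtain ⟨g, rfl⟩ : ∃ g, h = g + 4 := ⟨h - 4, by omega⟩
  -- `3` has order `4` modulo both `16` and `5`, so `3 ^ w ≡ 1 [MOD 16]` forces `5 ∣ 2 ^ h`.
  have hmod : 3 ^ w = 81 ^ (w / 4) * 3 ^ (w % 4) := by
    rw [show 81 = 3 ^ 4 by rfl, ← pow_mul, ← pow_add, Nat.div_add_mod]
  have h81 (n : ℕ) (hn : n ∣ 80) : 81 ^ (w / 4) ≡ 1 [MOD n] := by
    simpa using Nat.ModEq.pow (w / 4)
      ((Nat.modEq_iff_dvd' (by norm_num : 1 ≤ 81)).2 hn).symm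
  have h16 : 3 ^ w ≡ 3 ^ (w % 4) [MOD 16] := by
    simpa [hmod] using (h81 16 (by decide)).mul_right (3 ^ (w % 4))
  have h5 : 3 ^ w ≡ 3 ^ (w % 4) [MOD 5] := by
    simpa [hmod] using (h81 5 (by decide)).mul_right (3 ^ (w % 4))
  have hone : 3 ^ w % 16 = 1 := by rw [hw, pow_add]; omega
  have hw4 : w % 4 = 0 := by
    have := Nat.mod_lt w (by norm_num : 4 > 0)
    rw [Nat.ModEq, hone] at h16
    interval_cases w % 4 <;> omega
  rw [hw4, hw, Nat.ModEq] at h5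
  have : 5 ∣ 2 ^ (g + 4) := by omega
  have := Nat.prime_five.dvd_of_dvd_pow this
  omega

theorem exists_two_pow_of_two_pow_add_sq_eq_sq {B C n : ℕ} (hB : Odd B)
    (h : 2 ^ n + B ^ 2 = C ^ 2) : ∃ m, C = 2 ^ m + 1 ∧ B + 1 = 2 ^ m := by
  have hlt : B < C := lt_of_pow_lt_pow_left₀ 2 C.zero_le (by have := n.two_pow_pos; omega)
  have hmul : 2 ^ n = (C - B) * (C + B) := by
    rw [mul_comm, ← Nat.sq_sub_sq, ← h, Nat.add_sub_cancel]
  obtain ⟨i, -, hi⟩ := (Nat.dvd_prime_pow Nat.prime_two).1 (Dvd.intro _ hmul.symm)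
  obtain ⟨j, -, hj⟩ := (Nat.dvd_prime_pow Nat.prime_two).1 (Dvd.intro_left _ hmul.symm)
  have hB0 : 0 < B := hB.pos
  have hij : i < j := (Nat.pow_lt_pow_iff_right one_lt_two).1 (by omega)
  obtain ⟨m, rfl⟩ := Nat.exists_eq_add_of_lt hij
  obtain ⟨B', rfl⟩ := hB
  match i with
  | 0 => simp only [pow_succ, pow_zero] at hi hj; omega
  | 1 => simp only [pow_add, pow_one] at hi hj; exact ⟨m + 1, by omega, by omega⟩
  | i + 2 =>
    have hi4 : 2 ^ 2 ∣ C - (2 * B' + 1) := hi ▸ pow_dvd_pow 2 (by omega)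
    have hj4 : 2 ^ 2 ∣ C + (2 * B' + 1) := hj ▸ pow_dvd_pow 2 (by omega)
    omega

theorem eq_of_pow_eq_prime_pow {p q m n : ℕ} (hp : p.Prime) (hq : q.Prime) (hn : n ≠ 0)
    (h : p ^ m = q ^ n) : p = q :=
  ((Nat.prime_dvd_prime_iff_eq hq hp).1 (hq.dvd_of_dvd_pow (h ▸ dvd_pow_self q hn))).symm

theorem pow_even_mod_three {n : ℕ} (h : ¬ 3 ∣ n) (k : ℕ) : n ^ (2 * k) % 3 = 1 := by
  have hn : n % 3 = 1 ∨ n % 3 = 2 := by omega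
  rcases hn with hn | hn <;> rw [pow_mul, Nat.pow_mod, Nat.pow_mod n, hn] <;> simp

theorem pow_even_mod_eight {n : ℕ} (h : Odd n) (k : ℕ) : n ^ (2 * k) % 8 = 1 := by
  have hn : n % 8 = 1 ∨ n % 8 = 3 ∨ n % 8 = 5 ∨ n % 8 = 7 := by
    have := Nat.odd_iff.1 h
    omega
  rcases hn with hn | hn | hn | hn <;> rw [pow_mul, Nat.pow_mod, Nat.pow_mod n, hn] <;> simp

theorem not_three_dvd_of_prime {p : ℕ} (hp : p.Prime) (h : p ≠ 3) : ¬ 3 ∣ p :=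
  fun hd => h ((Nat.prime_dvd_prime_iff_eq Nat.prime_three hp).1 hd).symm

theorem eq_three_of_two_pow_odd_add_pow_even_eq {b c k l z : ℕ} (hb : ¬ 3 ∣ b) (hc : c.Prime)
    (h : 2 ^ (2 * k + 1) + b ^ (2 * l) = c ^ z) : c = 3 := by
  have h₁ := pow_even_mod_three (by decide : ¬ 3 ∣ 2) k
  have h₂ := pow_even_mod_three hb l
  have h₃ : 3 ∣ c ^ z := by rw [pow_succ] at h; omega
  exact ((Nat.prime_dvd_prime_iff_eq Nat.prime_three hc).1 (Nat.prime_three.dvd_of_dvd_pow h₃)).symm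

theorem eq_seven_of_two_pow_add_pow_even_eq_three_pow_even {b l n w : ℕ} (hb : b.Prime)
    (hb₂ : b ≠ 2) (hl : l ≠ 0) (h : 2 ^ n + b ^ (2 * l) = 3 ^ (2 * w)) : b = 7 := by
  rw [mul_comm, pow_mul, mul_comm 2 w, pow_mul] at h
  obtain ⟨m, hm, hm'⟩ := exists_two_pow_of_two_pow_add_sq_eq_sq (hb.odd_of_ne_two hb₂).pow h
  have hbl := Nat.one_lt_pow hl hb.one_lt
  rcases eq_one_or_three_of_three_pow_eq hm with rfl | rfl
  · omega
  · exact eq_of_pow_eq_prime_pow (m := l) (n := 1) hb (by decide) one_ne_zero (by omega)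

theorem exists_eq_pow_of_sq_add_two_mul_sq_eq_three_pow {r : ℤ} {z : ℕ} (hz : 0 < z)
    (h : r ^ 2 + 2 = 3 ^ z) :
    ∃ ε : QuadraticAlgebra ℤ (-2) 0, norm ε = 3 ∧ |(ε ^ z).im| = 1 := by
  have hrep {n : ℕ} {s : ℤ} (hn : 0 < n) (hs : s ^ 2 + 2 = 3 ^ n) :
      IsPrimitiveRep 3 n (⟨s, 1⟩ : QuadraticAlgebra ℤ (-2) 0) :=
    ⟨hn, by rw [norm_eq_sq_add]; simpa using hs, by norm_num⟩
  have h1 := hrep one_pos (s := 1) (by norm_num)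
  obtain ⟨m, ε, hε, hall⟩ := h1.exists_generator Nat.prime_three (by decide) (by decide)
  obtain ⟨i, -, hi⟩ := hall 1 _ h1
  obtain ⟨j, -, hj⟩ := hall z _ (hrep hz h)
  obtain rfl : m = 1 :=
    Nat.eq_one_of_mul_eq_one_right (h1.exponent_eq_mul Nat.prime_three hε hi).symm
  obtain rfl : z = j := by simpa using (hrep hz h).exponent_eq_mul Nat.prime_three hε hj
  exact ⟨ε, by simpa using hε.norm_eq, by simpa using hj.abs_im_eq.symm⟩

theorem eq_five_of_two_pow_odd_add_pow_even_eq_three_pow_odd {b k l z : ℕ} (hb : b.Prime)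
    (hb₂ : b ≠ 2) (hl : l ≠ 0) (hz : Odd z) (h : 2 ^ (2 * k + 1) + b ^ (2 * l) = 3 ^ z) :
    b = 5 := by
  have hk : k = 0 := by
    by_contra hk
    obtain ⟨k, rfl⟩ := Nat.exists_eq_succ_of_ne_zero hk
    obtain ⟨w, rfl⟩ := hz
    have h₁ := pow_even_mod_eight (hb.odd_of_ne_two hb₂) l
    have h₂ := pow_even_mod_eight (by decide : Odd 3) w
    rw [show 2 * (k + 1) + 1 = 2 * k + 3 by ring, pow_add _ _ 3, pow_succ 3] at h
    omega
  subst hk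
  obtain ⟨ε, hε, him⟩ := exists_eq_pow_of_sq_add_two_mul_sq_eq_three_pow (r := b ^ l) hz.pos
    (by exact_mod_cast (by rw [← h]; ring : (b ^ l) ^ 2 + 2 = 3 ^ z))
  rcases eq_one_or_three_of_abs_im_pow_eq_one hε hz him with rfl | rfl
  · have := Nat.one_lt_pow (by omega : 2 * l ≠ 0) hb.one_lt
    omega
  · exact eq_of_pow_eq_prime_pow (m := 2 * l) (n := 2) hb (by decide) two_ne_zero (by omega)

theorem eq_three_and_eq_of_two_pow_odd_add_pow_even_eq {b c k l z : ℕ} (hb : b.Prime)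
    (hc : c.Prime) (hb₂ : b ≠ 2) (hb₃ : b ≠ 3) (hl : l ≠ 0)
    (h : 2 ^ (2 * k + 1) + b ^ (2 * l) = c ^ z) : c = 3 ∧ (b = 5 ∨ b = 7) := by
  obtain rfl := eq_three_of_two_pow_odd_add_pow_even_eq (not_three_dvd_of_prime hb hb₃) hc h
  refine ⟨rfl, ?_⟩
  rcases z.even_or_odd' with ⟨w, rfl | rfl⟩
  · exact .inr (eq_seven_of_two_pow_add_pow_even_eq_three_pow_even hb hb₂ hl h)
  · exact .inl (eq_five_of_two_pow_odd_add_pow_even_eq_three_pow_odd hb hb₂ hl ⟨w, rfl⟩ h)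

end TwoPow

section Gaussian

variable {b c j k l n q z : ℕ} {x : QuadraticAlgebra ℤ (-4) 0}

theorem even_four : Even (4 : ℤ) := by decide

theorem im_mul_pow_ne_im {w : QuadraticAlgebra ℤ (-4) 0} (hre : x.re ^ 2 = 1)
    (him : |x.im| = 2 ^ k) (hw : Odd w.re) (hwim : |w.im| = 2 ^ k) (hj : j ≠ 0) :
    (w * x ^ (2 * j)).im ≠ w.im := by
  intro h
  have hnorm : norm x - 1 = 2 ^ (2 * k + 2) := by
    rw [norm_eq_sq_add, hre, ← sq_abs x.im, him]; ring
  have hval := emultiplicity_norm_sub_one_add even_four hw (odd_of_sq_eq_one hre)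
    (by rw [hnorm, pow_add]; exact dvd_mul_left _ _) hj h
  rw [hnorm, emultiplicity_two_two_pow, emultiplicity_two_eq_of_abs_eq him,
    emultiplicity_two_eq_of_abs_eq hwim] at hval
  norm_cast at hval
  omega

theorem im_pow_ne_im (hre : x.re ^ 2 = 1) (him : |x.im| = 2 ^ k) (hn : Odd n) (hn₁ : n ≠ 1) :
    (x ^ n).im ≠ x.im := by
  obtain ⟨j, rfl⟩ := hn
  rw [pow_succ']
  exact im_mul_pow_ne_im hre him (odd_of_sq_eq_one hre) him (by omega)

theorem im_pow_ne_neg_im_of_abs_im_eq_one (hre : x.re ^ 2 = 1) (him : |x.im| = 1) (hn : Odd n)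
    (hn₃ : n ≠ 3) : (x ^ n).im ≠ -x.im := by
  have him2 : x.im ^ 2 = 1 := by rw [← sq_abs, him, one_pow]
  have him3 : (x ^ 3).im = -x.im := by
    rw [im_pow_three, norm_eq_sq_add, hre, him2]; ring
  rcases (by have := Nat.odd_iff.1 hn; omega : n = 1 ∨ 5 ≤ n) with rfl | hn5
  · rw [pow_one]
    have := (abs_pos.1 (him ▸ one_pos))
    omega
  · obtain ⟨j, rfl⟩ := hn
    rw [show 2 * j + 1 = 3 + 2 * (j - 1) by omega, pow_add, ← him3]
    exact im_mul_pow_ne_im (k := 0) hre him (odd_re_pow even_four (odd_of_sq_eq_one hre) 3)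
      (by rw [him3, abs_neg, him, pow_zero]) (by omega)

theorem sixteen_mul_im_dvd (h16 : 16 ∣ norm x - 1) (i : ℕ) :
    16 * x.im ∣ (x ^ (2 * i + 3)).im - (2 * i + 3) * x.im := by
  obtain ⟨t, ht⟩ := exists_im_pow_odd_eq x i
  obtain ⟨s, hs⟩ := h16.trans (sub_one_dvd_pow_sub_one (norm x) (i + 1))
  rw [ht, sub_eq_iff_eq_add.1 hs]
  refine ⟨(2 * i + 3) * s - (∑ k ∈ Finset.range (i + 2), k ^ 2 : ℕ) * x.im ^ 2 * norm x ^ i +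
    16 * x.im ^ 4 * t, ?_⟩
  push_cast
  ring

theorem three_dvd_sq_sub_one {m : ℤ} (hm : ¬ 3 ∣ m) : 3 ∣ m ^ 2 - 1 := by
  rcases (by omega : m % 3 = 1 ∨ m % 3 = 2) with h | h <;>
    exact Int.dvd_of_emod_eq_zero (by simp [sq, Int.sub_emod, Int.mul_emod, h])

theorem three_dvd_im_pow_add_im_pow (hre : x.re ^ 2 = 1) (him : ¬ 3 ∣ x.im) (n : ℕ) :
    3 ∣ (x ^ (n + 4)).im + (x ^ n).im := by
  have hsq := three_dvd_sq_sub_one him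
  have hnorm : norm x = 1 + 4 * x.im ^ 2 := by rw [norm_eq_sq_add, hre]
  obtain ⟨g, hg⟩ : (3 : ℤ) ∣ norm x - 2 := by omega
  have htrace : trace (x ^ 2) = -6 * g := by
    rw [trace_sq, trace_eq_two_mul_re, mul_pow, hre]; linear_combination -2 * hg
  have h := im_pow_add_two_mul x n 2
  rw [htrace, sub_eq_iff_eq_add.1 hg] at h
  exact ⟨-2 * g * (x ^ (n + 2)).im - (3 * g ^ 2 + 4 * g + 1) * (x ^ n).im,
    by linear_combination h⟩

theorem three_dvd_im_pow_sub_im (hre : x.re ^ 2 = 1) (him : ¬ 3 ∣ x.im) (t : ℕ) :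
    3 ∣ (x ^ (8 * t + 7)).im - x.im := by
  have hstep := three_dvd_im_pow_add_im_pow hre him
  induction t with
  | zero =>
    have hdvd : 3 ∣ (x ^ 3).im + x.im := by
      have hsq := three_dvd_sq_sub_one him
      rw [im_pow_three, show x.im * (3 * norm x + (0 ^ 2 + 4 * -4) * x.im ^ 2) + x.im =
        3 * (x.im * (norm x - 5)) - 16 * x.im * (x.im ^ 2 - 1) by ring]
      exact dvd_sub (dvd_mul_right _ _) (hsq.mul_left _)
    have := hstep 3
    simp only [Nat.reduceAdd, Nat.reduceMul] at *
    omega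
  | succ t ih =>
    have h₁ := hstep (8 * t + 7)
    have h₂ := hstep (8 * t + 11)
    simp only [Nat.mul_add, add_assoc, Nat.reduceAdd, Nat.reduceMul] at *
    omega

theorem im_pow_ne_neg_im (hre : x.re ^ 2 = 1) (him : |x.im| = 2 ^ k) (hk : k ≠ 0)
    (hn : Odd n) : (x ^ n).im ≠ -x.im := by
  intro h
  have him0 : x.im ≠ 0 := abs_pos.1 (him ▸ by positivity)
  have him3 : ¬ 3 ∣ x.im := by
    rw [← dvd_abs, him]
    exact_mod_cast not_natCast_dvd_natCast_pow Nat.prime_three Nat.prime_two (by decide) k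
  have h16 : 16 ∣ norm x - 1 := by
    obtain ⟨k, rfl⟩ := Nat.exists_eq_add_one_of_ne_zero hk
    rw [norm_eq_sq_add, hre, ← sq_abs x.im, him]
    exact ⟨(2 ^ k) ^ 2, by rw [pow_succ]; ring⟩
  obtain ⟨t, rfl⟩ : ∃ t, n = 8 * t + 7 := by
    obtain ⟨i, rfl⟩ := hn
    rcases i with _ | i
    · rw [mul_zero, zero_add, pow_one] at h
      omega
    · obtain ⟨s, hs⟩ := sixteen_mul_im_dvd h16 i
      rw [show 2 * i + 3 = 2 * (i + 1) + 1 by ring, h] at hs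
      have hmul : x.im * (2 * i + 4 + 16 * s) = 0 := by linear_combination -hs
      have := (mul_eq_zero.1 hmul).resolve_left him0
      exact ⟨i / 4, by omega⟩
  have hdvd := three_dvd_im_pow_sub_im hre him3 t
  rw [h] at hdvd
  omega

theorem eq_zero_and_eq_three_of_abs_im_pow_eq (hre : x.re ^ 2 = 1) (him : |x.im| = 2 ^ k)
    (hn : Odd n) (hn₁ : n ≠ 1) (h : |(x ^ n).im| = 2 ^ k) : k = 0 ∧ n = 3 := by
  have hneg := (abs_eq_abs.1 (h.trans him.symm)).resolve_left (im_pow_ne_im hre him hn hn₁)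
  obtain rfl : k = 0 := by
    by_contra hk
    exact im_pow_ne_neg_im hre him hk hn hneg
  by_contra hn₃
  exact im_pow_ne_neg_im_of_abs_im_eq_one hre him hn (by omega) hneg

theorem abs_im_eq_of_odd_re_of_abs_im_pow_eq (hre : Odd x.re) (hn : Odd n)
    (h : |(x ^ n).im| = 2 ^ k) : |x.im| = 2 ^ k := by
  obtain ⟨i, rfl⟩ := hn
  obtain ⟨u, hu, him⟩ := exists_odd_im_pow_eq even_four hre i
  have hunit : IsUnit u := isUnit_of_dvd_prime_pow (n := k) Nat.prime_two
    (by exact_mod_cast Int.two_dvd_ne_zero.2 (Int.odd_iff.1 hu))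
    (by rw [Nat.cast_two, ← h, dvd_abs, him]; exact dvd_mul_left _ _)
  rw [← h, him, abs_mul, Int.isUnit_iff_abs_eq.1 hunit, mul_one]

theorem dvd_re_or_eq_of_isProperPower (hb : b.Prime) (hc : c.Prime)
    {δ : QuadraticAlgebra ℤ (-4) 0} (hq : Odd q) (hq₁ : q ≠ 1)
    (htrace : |trace (δ ^ q)| = 2 * b ^ l) (him : |(δ ^ q).im| = 2 ^ k) (hnorm : norm δ = c ^ j) :
    (b : ℤ) ∣ δ.re ∨ k = 0 ∧ q = 3 ∧ c = 5 ∧ j = 1 := by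
  refine or_iff_not_imp_left.2 fun hbre => ?_
  have hunit : IsUnit δ.re := by
    refine isUnit_of_dvd_prime_pow (n := l) hb hbre ((mul_dvd_mul_iff_left two_ne_zero).1 ?_)
    rw [← htrace, dvd_abs, ← trace_eq_two_mul_re]
    exact trace_dvd_trace_pow δ hq
  have hre : δ.re ^ 2 = 1 := Int.isUnit_sq hunit
  have him' := abs_im_eq_of_odd_re_of_abs_im_pow_eq (odd_of_sq_eq_one hre) hq him
  obtain ⟨rfl, rfl⟩ := eq_zero_and_eq_three_of_abs_im_pow_eq hre him' hq hq₁ him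
  have hcj : c ^ j = 5 := by
    rw [norm_eq_sq_add, hre, ← sq_abs, him'] at hnorm
    exact_mod_cast hnorm.symm
  obtain rfl := eq_of_pow_eq_prime_pow hc Nat.prime_five one_ne_zero (by rw [hcj, pow_one])
  exact ⟨rfl, rfl, rfl, Nat.pow_right_injective (by norm_num : 2 ≤ 5) hcj⟩

theorem eq_of_isProperPower (hb : b.Prime) (hc : c.Prime) (hb₂ : b ≠ 2) (hc₂ : c ≠ 2)
    (hbc : b ≠ c) (hz : Odd z)
    (hx : IsPrimitiveRep c z (⟨b ^ l, 2 ^ k⟩ : QuadraticAlgebra ℤ (-4) 0))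
    (hpow : IsProperPower c (⟨b ^ l, 2 ^ k⟩ : QuadraticAlgebra ℤ (-4) 0)) :
    c = 5 ∧ k = 0 ∧ z = 3 := by
  obtain ⟨q, j, δ, hq, hδ, h⟩ := hpow
  have hzq := hx.exponent_eq_mul hc hδ h
  have hq₂ : q ≠ 2 := by
    rintro rfl
    exact (Nat.not_even_iff_odd.2 hz) ⟨j, by omega⟩
  have hq_odd := hq.odd_of_ne_two hq₂
  have htrace : |trace (δ ^ q)| = 2 * b ^ l := by
    rw [← h.abs_trace_eq, trace_eq_two_mul_re]; exact abs_of_nonneg (by positivity)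
  have him : |(δ ^ q).im| = 2 ^ k := h.abs_im_eq.symm.trans (abs_of_nonneg (by positivity))
  rcases dvd_re_or_eq_of_isProperPower hb hc hq_odd hq.one_lt.ne' htrace him hδ.norm_eq with
    hbre | ⟨rfl, rfl, rfl, rfl⟩
  · have hb0 : (0 : ℤ) < b := by exact_mod_cast hb.pos
    have hre0 : δ.re ≠ 0 := re_ne_zero_of_trace_pow_ne_zero hq_odd
      (abs_pos.1 (htrace ▸ by positivity))
    have hnorm₄ : 4 ≤ norm δ := by
      rw [norm_eq_sq_add]
      have := Int.le_of_dvd (abs_pos.2 hre0) ((dvd_abs _ _).2 hbre)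
      have : (3 : ℤ) ≤ b := by exact_mod_cast hb.two_le.lt_of_ne' hb₂
      nlinarith [sq_abs δ.re, sq_nonneg δ.im]
    have hsb : IsCoprime (2 : ℤ) b :=
      Nat.isCoprime_iff_coprime.2 ((Nat.coprime_primes Nat.prime_two hb).2 hb₂.symm)
    exact (false_of_abs_trace_pow_le_of_abs_im_pow_le (by norm_num) hnorm₄
      (hq.two_le.lt_of_ne' hq₂)
      (abs_trace_pow_le hb hq hq₂ (trace_eq_two_mul_re δ ▸ hbre.mul_left _)
        (hδ.not_dvd_norm hb hc hbc) (trace_eq_two_mul_re δ ▸ dvd_mul_right _ _) hsb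
        (htrace.trans (abs_of_pos (by positivity)).symm))
      (abs_im_pow_le (b := 2) (l := k) Nat.prime_two hq hq₂ (by norm_num)
        (hδ.not_dvd_norm Nat.prime_two hc hc₂.symm) (by norm_num) (by exact_mod_cast him))).elim
  · exact ⟨rfl, rfl, hzq⟩

theorem isPrimitiveRep_one_of_norm_eq {A B : ℤ} {p : ℕ} {x : QuadraticAlgebra ℤ A B}
    (hp : p.Prime) (hx : norm x = p) : IsPrimitiveRep p 1 x where
  pos := one_pos
  norm_eq := by rw [hx, pow_one]
  not_dvd_im him := by
    have hp' := Nat.prime_iff_prime_int.1 hp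
    obtain ⟨r, hr⟩ := dvd_re_of_dvd_im hp' (hx ▸ dvd_rfl) him
    obtain ⟨s, hs⟩ := him
    rw [norm_def, hr, hs] at hx
    exact hp'.not_isUnit (IsUnit.of_mul_eq_one (r ^ 2 + B * r * s - A * s ^ 2)
      (mul_left_cancel₀ hp'.ne_zero (by linear_combination hx)))

theorem not_isProperPower_of_norm_eq {A B : ℤ} {p : ℕ} {x : QuadraticAlgebra ℤ A B}
    (hp : p.Prime) (hx : norm x = p) : ¬ IsProperPower p x := by
  rintro ⟨q, j, δ, hq, hδ, h⟩
  have := (isPrimitiveRep_one_of_norm_eq hp hx).exponent_eq_mul hp hδ h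
  exact hq.ne_one (Nat.eq_one_of_mul_eq_one_left this.symm)

theorem exists_norm_eq_of_mod_four_eq_one (hc : c.Prime) (hc₄ : c % 4 = 1) :
    ∃ x : QuadraticAlgebra ℤ (-4) 0, norm x = c := by
  have : Fact c.Prime := ⟨hc⟩
  obtain ⟨r, s, h⟩ := Nat.Prime.sq_add_sq (p := c) (by omega)
  have hodd : ¬ (Even r ↔ Even s) := by
    have : ¬ Even (r ^ 2 + s ^ 2) := by rw [h, Nat.even_iff]; omega
    simpa [Nat.even_add, Nat.even_pow] using this
  rcases Nat.even_or_odd r with ⟨t, ht⟩ | hr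
  · exact ⟨⟨s, t⟩, by rw [norm_eq_sq_add, ← h, ht]; push_cast; ring⟩
  · obtain ⟨t, ht⟩ : Even s := by
      by_contra hs
      exact hodd ⟨fun he => absurd he (Nat.not_even_iff_odd.2 hr), fun he => absurd he hs⟩
    exact ⟨⟨r, t⟩, by rw [norm_eq_sq_add, ← h, ht]; push_cast; ring⟩

end Gaussian

section PowEvenPowEven

variable {b c k l n z k' l' w : ℕ}

theorem norm_eq_of_two_pow_add_pow_eq (h : 2 ^ (2 * (k + 1)) + b ^ (2 * l) = c ^ z) :
    norm (⟨b ^ l, 2 ^ k⟩ : QuadraticAlgebra ℤ (-4) 0) = c ^ z := by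
  rw [norm_eq_sq_add, ← Nat.cast_pow c, ← h]; push_cast; ring

theorem not_dvd_discrim_four (hc : c.Prime) (hc₂ : c ≠ 2) :
    ¬ (c : ℤ) ∣ 0 ^ 2 + 4 * -4 := fun h =>
  not_natCast_dvd_natCast_pow hc Nat.prime_two hc₂ 4 (by simpa using h)

theorem mod_four_eq_one_of_two_pow_add_pow_eq (hb : Odd b) (hz : Odd z)
    (h : 2 ^ (2 * (k + 1)) + b ^ (2 * l) = c ^ z) : c % 4 = 1 := by
  have hb₈ := pow_even_mod_eight hb l
  have h₄ : 2 ^ (2 * (k + 1)) = 4 * 2 ^ (2 * k) := by ring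
  have hcz : c ^ z % 4 = 1 := by omega
  have hc : Odd c := by
    rw [← Nat.odd_pow_iff hz.pos.ne', Nat.odd_iff]
    omega
  obtain ⟨w, rfl⟩ := hz
  have hcw := pow_even_mod_eight hc w
  rw [pow_succ, Nat.mul_mod, show c ^ (2 * w) % 4 = 1 by omega, one_mul, Nat.mod_mod] at hcz
  exact hcz

theorem eq_one_or_of_two_pow_even_add_pow_even_eq (hb : b.Prime) (hc : c.Prime) (hb₂ : b ≠ 2)
    (hc₂ : c ≠ 2) (hbc : b ≠ c) (hz : Odd z) (h : 2 ^ (2 * (k + 1)) + b ^ (2 * l) = c ^ z) :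
    z = 1 ∨ b = 11 ∧ c = 5 ∧ k = 0 ∧ l = 1 ∧ z = 3 := by
  have hrep : IsPrimitiveRep c z (⟨b ^ l, 2 ^ k⟩ : QuadraticAlgebra ℤ (-4) 0) :=
    ⟨hz.pos, norm_eq_of_two_pow_add_pow_eq h, by
      simpa using not_natCast_dvd_natCast_pow hc Nat.prime_two hc₂ k⟩
  by_cases hpow : IsProperPower c (⟨b ^ l, 2 ^ k⟩ : QuadraticAlgebra ℤ (-4) 0)
  · obtain ⟨rfl, rfl, rfl⟩ := eq_of_isProperPower hb hc hb₂ hc₂ hbc hz hrep hpow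
    have hbl : b ^ (2 * l) = 11 ^ 2 := by omega
    obtain rfl := eq_of_pow_eq_prime_pow hb (by norm_num) two_ne_zero hbl
    have := Nat.pow_right_injective (by norm_num : 2 ≤ 11) hbl
    exact .inr ⟨rfl, rfl, rfl, by omega, rfl⟩
  · obtain ⟨y, hy⟩ := exists_norm_eq_of_mod_four_eq_one hc
      (mod_four_eq_one_of_two_pow_add_pow_eq (hb.odd_of_ne_two hb₂) hz h)
    exact .inl (hrep.eq_of_not_isProperPower hc (not_dvd_discrim_four hc hc₂) (by norm_num)
      (isPrimitiveRep_one_of_norm_eq hc hy) hpow (not_isProperPower_of_norm_eq hc hy)).1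

theorem eq_of_two_pow_even_add_pow_even_eq_prime (hb : b.Prime) (hc : c.Prime) (hc₂ : c ≠ 2)
    (h : 2 ^ (2 * (k + 1)) + b ^ (2 * l) = c) (h' : 2 ^ (2 * (k' + 1)) + b ^ (2 * l') = c) :
    k = k' ∧ l = l' := by
  have hx {k l : ℕ} (h : 2 ^ (2 * (k + 1)) + b ^ (2 * l) = c) :
      norm (⟨b ^ l, 2 ^ k⟩ : QuadraticAlgebra ℤ (-4) 0) = c := by
    simpa using norm_eq_of_two_pow_add_pow_eq (z := 1) (by rw [pow_one]; exact h)
  obtain ⟨-, heq⟩ := (isPrimitiveRep_one_of_norm_eq hc (hx h)).eq_of_not_isProperPower hc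
    (not_dvd_discrim_four hc hc₂) (by norm_num) (isPrimitiveRep_one_of_norm_eq hc (hx h'))
    (not_isProperPower_of_norm_eq hc (hx h)) (not_isProperPower_of_norm_eq hc (hx h'))
  have htrace := heq.abs_trace_eq
  simp only [trace_eq_two_mul_re, abs_mul] at htrace
  exact ⟨natCast_pow_injective Nat.prime_two heq.abs_im_eq,
    natCast_pow_injective hb (mul_left_cancel₀ (by norm_num) htrace)⟩

theorem eq_three_of_two_pow_even_add_pow_even_eq_sq (hb : b.Prime) (hc : c.Prime) (hw : w ≠ 0)
    (h : 2 ^ (2 * k) + b ^ (2 * l) = c ^ (2 * w)) : b = 3 := by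
  by_contra hb₃
  have h₂ := pow_even_mod_three (by decide : ¬ 3 ∣ 2) k
  have hb' := pow_even_mod_three (not_three_dvd_of_prime hb hb₃) l
  rcases eq_or_ne c 3 with rfl | hc₃
  · have : 3 ∣ 3 ^ (2 * w) := dvd_pow_self 3 (by omega)
    omega
  · have := pow_even_mod_three (not_three_dvd_of_prime hc hc₃) w
    omega

theorem eq_add_one_of_sq_add_prime_pow_eq_sq {p A C : ℕ} (hp : p.Prime) (hA : ¬ p ∣ 2 * A)
    (h : A ^ 2 + p ^ n = C ^ 2) : C = A + 1 ∧ p ^ n = 2 * A + 1 := by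
  have hpos := pow_pos hp.pos n
  have hlt : A < C := lt_of_pow_lt_pow_left₀ 2 C.zero_le (by omega)
  obtain ⟨d, rfl⟩ := Nat.exists_eq_add_of_lt hlt
  have hmul : p ^ n = (d + 1) * (2 * A + (d + 1)) := by nlinarith
  obtain ⟨i, -, hi⟩ := (Nat.dvd_prime_pow hp).1 (Dvd.intro _ hmul.symm)
  obtain ⟨j, -, hj⟩ := (Nat.dvd_prime_pow hp).1 (Dvd.intro_left _ hmul.symm)
  obtain rfl : i = 0 := by
    by_contra hi0
    have hij : i ≤ j := (Nat.pow_le_pow_iff_right hp.one_lt).1 (by omega)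
    exact hA ((Nat.dvd_add_left (hi ▸ dvd_pow_self p hi0)).1
      (hj ▸ dvd_pow_self p (by omega : j ≠ 0)))
  have : d = 0 := by rw [pow_zero] at hi; omega
  subst this
  exact ⟨by ring, by rw [hmul]; ring⟩

theorem eq_three_and_eq_five_of_two_pow_even_add_pow_even_eq_sq (hb : b.Prime) (hc : c.Prime)
    (hk : k ≠ 0) (hw : w ≠ 0) (h : 2 ^ (2 * k) + b ^ (2 * l) = c ^ (2 * w)) : b = 3 ∧ c = 5 := by
  obtain rfl := eq_three_of_two_pow_even_add_pow_even_eq_sq hb hc hw h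
  have h₃ : ¬ 3 ∣ 2 * 2 ^ k := by
    rw [← pow_succ']
    exact fun hd => absurd (Nat.prime_three.dvd_of_dvd_pow hd) (by decide)
  obtain ⟨hcw, hl⟩ := eq_add_one_of_sq_add_prime_pow_eq_sq (n := 2 * l) (C := c ^ w)
    Nat.prime_three h₃ (by rw [← pow_mul', ← pow_mul', h])
  rcases eq_one_or_three_of_three_pow_eq (h := k + 1) (hl.trans (by ring)) with hk₁ | hk₃
  · omega
  · obtain rfl : k = 2 := by omega
    exact ⟨rfl, eq_of_pow_eq_prime_pow hc Nat.prime_five one_ne_zero (m := w) (by omega)⟩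

end PowEvenPowEven

section TwoPowEven

variable {b i j m n t : ℕ}

theorem two_pow_dvd_sub_one_of_dvd_pow_sub_one {b : ℤ} (hb : Odd b) (hn : Odd n)
    (h : 2 ^ m ∣ b ^ n - 1) : 2 ^ m ∣ b - 1 := by
  have hval := emultiplicity_pow_sub_pow_of_prime Int.prime_two
    (even_iff_two_dvd.1 (hb.sub_odd odd_one)) (Int.two_dvd_ne_zero.2 (Int.odd_iff.1 hb))
    (n := n) (by exact_mod_cast Nat.two_dvd_ne_zero.2 (Nat.odd_iff.1 hn))
  rw [one_pow] at hval
  rw [pow_dvd_iff_le_emultiplicity] at h ⊢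
  exact hval ▸ h

theorem two_pow_two_mul_add_one_ne_pow_even (hj : j ≠ 0) :
    2 ^ (2 * j) + 1 ≠ b ^ (2 * n) := by
  intro h
  rw [pow_mul', pow_mul'] at h
  have h₂ : 2 ≤ 2 ^ j := Nat.le_self_pow hj 2
  have hlt : 2 ^ j < b ^ n := lt_of_pow_lt_pow_left₀ 2 (Nat.zero_le _) (by omega)
  nlinarith

theorem two_pow_lt_pow_of_add_eq (hb : b.Prime) (hb₂ : b ≠ 2) (hji : j ≤ i) (hn : n ≠ 0)
    (ht : Odd t) (h : 2 ^ i + b ^ n = 2 ^ j + b ^ (n + t)) : 2 ^ j < b ^ n := by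
  have hz : (2 : ℤ) ^ i + b ^ n = 2 ^ j + b ^ (n + t) := by exact_mod_cast h
  have hb_odd : Odd (b : ℤ) := by exact_mod_cast hb.odd_of_ne_two hb₂
  have hcop : IsCoprime ((2 : ℤ) ^ j) ((b : ℤ) ^ n) := by
    exact_mod_cast Nat.isCoprime_iff_coprime.2
      (((Nat.coprime_primes Nat.prime_two hb).2 hb₂.symm).pow _ _)
  have hdvd : (2 : ℤ) ^ j ∣ b - 1 := by
    refine two_pow_dvd_sub_one_of_dvd_pow_sub_one hb_odd ht (hcop.dvd_of_dvd_mul_left ?_)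
    rw [show (b : ℤ) ^ n * (b ^ t - 1) = 2 ^ i - 2 ^ j by linear_combination -hz]
    exact dvd_sub (pow_dvd_pow 2 hji) dvd_rfl
  have hb1 : (0 : ℤ) < b - 1 := sub_pos.2 (by exact_mod_cast hb.one_lt)
  have hle := Int.le_of_dvd hb1 hdvd
  have hbn : b ≤ b ^ n := Nat.le_self_pow hn b
  zify at *
  omega

theorem two_pow_even_add_pow_ne_of_lt (hb : b.Prime) (hb₂ : b ≠ 2) (hj : j ≠ 0) (hji : j < i)
    (hn : n ≠ 0) (hmn : Odd (n + m)) : 2 ^ (2 * i) + b ^ n ≠ 2 ^ (2 * j) + b ^ m := by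
  intro h
  have hlt : n < m := by
    have : 2 ^ (2 * j) < 2 ^ (2 * i) := Nat.pow_lt_pow_right (by norm_num) (by omega)
    exact (Nat.pow_lt_pow_iff_right hb.one_lt).1 (by omega)
  obtain ⟨t, rfl⟩ := Nat.exists_eq_add_of_lt hlt
  have hz : (2 : ℤ) ^ (2 * i) + b ^ n = 2 ^ (2 * j) + b ^ (n + t + 1) := by exact_mod_cast h
  have hpos : (2 : ℤ) ^ (2 * j) < b ^ n := by
    exact_mod_cast two_pow_lt_pow_of_add_eq hb hb₂ (by omega) hn (t := t + 1) (by grind) h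
  have hD : (1 : ℤ) < b ^ n - 2 ^ (2 * j) := by
    refine lt_of_le_of_ne (by omega) fun hD => ?_
    rcases Nat.even_or_odd n with hn₂ | hn₂
    · obtain ⟨w, rfl⟩ := even_iff_two_dvd.1 hn₂
      exact two_pow_two_mul_add_one_ne_pow_even hj (by zify; linarith)
    · obtain ⟨w, hw⟩ := even_iff_two_dvd.1 (by grind : Even (n + t + 1))
      rw [hw] at hz
      exact two_pow_two_mul_add_one_ne_pow_even (j := i) (by omega) (by zify; linarith)
  have hbD : ¬ (b : ℤ) ∣ b ^ n - 2 ^ (2 * j) := fun hd =>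
    not_natCast_dvd_natCast_pow hb Nat.prime_two hb₂ (2 * j)
      ((dvd_sub_right (dvd_pow_self _ hn)).1 hd)
  have := two_pow_injOn_sq_add_eq_pow (k := j) (k' := i) (z := n) (z' := n + t + 1) hb hb₂ hD hbD
    (by omega) (by omega) (by ring) (by linear_combination hz)
  omega

theorem two_pow_even_add_pow_ne (hb : b.Prime) (hb₂ : b ≠ 2) (hi : i ≠ 0) (hj : j ≠ 0)
    (hn : n ≠ 0) (hm : m ≠ 0) (hmn : Odd (n + m)) :
    2 ^ (2 * i) + b ^ n ≠ 2 ^ (2 * j) + b ^ m := by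
  rcases lt_trichotomy i j with hij | rfl | hij
  · exact (two_pow_even_add_pow_ne_of_lt hb hb₂ hi hij hm (by rwa [add_comm])).symm
  · intro h
    obtain rfl := Nat.pow_right_injective hb.two_le (Nat.add_left_cancel h)
    exact Nat.not_even_iff_odd.2 hmn ⟨n, rfl⟩
  · exact two_pow_even_add_pow_ne_of_lt hb hb₂ hj hij hn hmn

end TwoPowEven

section TwoThree

variable {a c d e i l m n s z z' N Y : ℕ}

theorem eight_add_three_pow_ne_cube (w y : ℕ) : 8 + 3 ^ y ≠ w ^ 3 := by
  intro h
  have hpos : 0 < 3 ^ y := by positivity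
  have hw : 2 < w := lt_of_pow_lt_pow_left₀ 3 w.zero_le (by omega)
  obtain ⟨d, rfl⟩ := Nat.exists_eq_add_of_lt hw
  have hmul : 3 ^ y = (d + 1) * ((d + 1) ^ 2 + 6 * (d + 1) + 12) := by nlinarith
  obtain ⟨i, -, hi⟩ := (Nat.dvd_prime_pow Nat.prime_three).1 (Dvd.intro _ hmul.symm)
  obtain ⟨j, -, hj⟩ := (Nat.dvd_prime_pow Nat.prime_three).1 (Dvd.intro_left _ hmul.symm)
  have h9 : 3 ^ 2 ∣ (d + 1) ^ 2 + 6 * (d + 1) + 12 := by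
    have : 3 ^ 1 < 3 ^ j := by rw [← hj]; omega
    exact hj ▸ pow_dvd_pow 3 ((Nat.pow_lt_pow_iff_right (by norm_num)).1 this)
  rcases i with _ | i
  · obtain rfl : d = 0 := by rw [pow_zero] at hi; omega
    omega
  · rw [hi, show (3 ^ (i + 1)) ^ 2 + 6 * 3 ^ (i + 1) + 12 =
      9 * ((3 ^ i) ^ 2 + 2 * 3 ^ i + 1) + 3 by ring] at h9
    omega

theorem pow_mul_add_modEq (h : a ^ (e * d + s) ≡ a ^ s [MOD N]) (n : ℕ) :
    a ^ (e * n + s) ≡ a ^ (e * (n % d) + s) [MOD N] := by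
  have hmul (k : ℕ) : a ^ (e * d * k + s) ≡ a ^ s [MOD N] := by
    induction k with
    | zero => rw [mul_zero, zero_add]
    | succ k ih =>
      rw [show e * d * (k + 1) + s = e * d * k + (e * d + s) by ring, pow_add]
      exact (h.mul_left _).trans (by rwa [← pow_add])
  have hn : e * n + s = e * (n % d) + (e * d * (n / d) + s) := by
    rw [mul_assoc, ← add_assoc, ← mul_add, Nat.mod_add_div]
  rw [hn, pow_add, pow_add a (e * (n % d)) s]
  exact (hmul (n / d)).mul_left _

theorem not_three_dvd_of_pow_mod_nine_eq_two (h : c ^ z % 9 = 2) : ¬ 3 ∣ z := by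
  rintro ⟨t, rfl⟩
  rw [pow_mul', Nat.pow_mod] at h
  have := Nat.mod_lt (c ^ t) (by decide : 9 > 0)
  interval_cases c ^ t % 9 <;> simp at h

theorem three_dvd_of_pow_mod_nine (hz : Odd z) (h : c ^ z ≡ 2 [MOD 9]) (h' : c ^ z' ≡ 8 [MOD 9]) :
    3 ∣ z' := by
  have h₁ : 2 ^ z' ≡ 8 ^ z [MOD 9] :=
    (h.pow z').symm.trans (pow_right_comm c z z' ▸ h'.pow z)
  obtain ⟨t, rfl⟩ := hz
  have h₈ : 8 ^ (2 * t + 1) ≡ 8 ^ (2 * (t % 1) + 1) [MOD 9] := pow_mul_add_modEq (by rfl) t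
  have h₂ : 2 ^ (1 * z' + 0) ≡ 2 ^ (1 * (z' % 6) + 0) [MOD 9] := pow_mul_add_modEq (by rfl) z'
  simp only [one_mul, add_zero, Nat.mod_one, mul_zero, zero_add, pow_one] at h₂ h₈
  have h₆ : 2 ^ (z' % 6) % 9 = 8 := (h₂.symm.trans h₁).trans h₈
  have := Nat.mod_lt z' (by decide : 6 > 0)
  have : z' % 6 = 3 := by interval_cases z' % 6 <;> simp_all
  omega

/- The modulus is `16 * 5 * 7 * 13`, for which all powers in question have period dividing `12`. -/
theorem two_pow_odd_add_three_pow_odd_pow_ne (hi : i % 3 ≠ 1) (m n Y j : ℕ) :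
    (2 ^ (2 * m + 5) + 3 ^ (2 * n + 1)) ^ (2 * i + 1) ≠ (2 + 3 ^ (2 * Y)) ^ (2 * j + 1) := by
  intro h
  have hmod (k : ℕ) : k % 6 < 6 := Nat.mod_lt k (by decide)
  have hS : 2 ^ (2 * m + 5) + 3 ^ (2 * n + 1) ≡
      2 ^ (2 * (m % 6) + 5) + 3 ^ (2 * (n % 6) + 1) [MOD 7280] :=
    (pow_mul_add_modEq (by rfl) m).add (pow_mul_add_modEq (by rfl) n)
  have hT : 2 + 3 ^ (2 * Y) ≡ 2 + 3 ^ (2 * (Y % 6)) [MOD 7280] :=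
    Nat.ModEq.rfl.add (pow_mul_add_modEq (s := 0) (by rfl) Y)
  have hS₁₂ : ∀ m n : Fin 6, (2 ^ (2 * m.val + 5) + 3 ^ (2 * n.val + 1)) ^ (2 * 6 + 1) ≡
      (2 ^ (2 * m.val + 5) + 3 ^ (2 * n.val + 1)) ^ 1 [MOD 7280] := by decide +kernel
  have hT₁₂ : ∀ Y : Fin 6, (2 + 3 ^ (2 * Y.val)) ^ (2 * 6 + 1) ≡
      (2 + 3 ^ (2 * Y.val)) ^ 1 [MOD 7280] := by decide +kernel
  have hne : ∀ m n Y i j : Fin 6, i.val % 3 ≠ 1 →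
      ¬ (2 ^ (2 * m.val + 5) + 3 ^ (2 * n.val + 1)) ^ (2 * i.val + 1) ≡
        (2 + 3 ^ (2 * Y.val)) ^ (2 * j.val + 1) [MOD 7280] := by decide +kernel
  refine hne ⟨_, hmod m⟩ ⟨_, hmod n⟩ ⟨_, hmod Y⟩ ⟨_, hmod i⟩ ⟨_, hmod j⟩ (by simpa using hi) ?_
  exact ((hS.pow _).trans (pow_mul_add_modEq (hS₁₂ ⟨_, hmod m⟩ ⟨_, hmod n⟩) i)).symm.trans
    ((congrArg (· % 7280) h).trans ((hT.pow _).trans (pow_mul_add_modEq (hT₁₂ ⟨_, hmod Y⟩) j)))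

theorem odd_of_two_pow_odd_add_three_pow_eq (hc : c.Prime) (hc₃ : c ≠ 3) (hn : n ≠ 0)
    (h : 2 ^ (2 * l + 1) + 3 ^ n = c ^ z) : Odd z := by
  by_contra hz
  obtain ⟨w, rfl⟩ := even_iff_two_dvd.1 (Nat.not_odd_iff_even.1 hz)
  have h₂ := pow_even_mod_three (by decide : ¬ 3 ∣ 2) l
  have hc' := pow_even_mod_three (not_three_dvd_of_prime hc hc₃) w
  have h₃ : 3 ∣ 3 ^ n := dvd_pow_self 3 hn
  rw [pow_succ] at h
  omega

theorem pow_odd_mod_eight (hc : Odd c) (hz : Odd z) : c ^ z % 8 = c % 8 := by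
  obtain ⟨w, rfl⟩ := hz
  rw [pow_succ, Nat.mul_mod, pow_even_mod_eight hc, one_mul, Nat.mod_mod]

theorem eq_zero_and_ne_zero_of_mod_eight (hc : Odd c) (hz : Odd z) (hz' : Odd z')
    (h : 2 ^ (2 * l + 1) + 3 ^ (2 * Y) = c ^ z)
    (h' : 2 ^ (2 * m + 1) + 3 ^ (2 * n + 1) = c ^ z') : l = 0 ∧ m ≠ 0 := by
  have h₁ := pow_odd_mod_eight hc hz
  have h₂ := pow_odd_mod_eight hc hz'
  have hY := pow_even_mod_eight (by decide : Odd 3) Y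
  have hn := pow_even_mod_eight (by decide : Odd 3) n
  rw [pow_succ 3] at h'
  rcases l with _ | l <;> rcases m with _ | m <;> simp only [mul_add, pow_add] at h h' <;> omega

theorem eq_eleven_of_two_pow_odd_add_three_pow_eq (hc : c.Prime) (hc₂ : c ≠ 2) (hc₃ : c ≠ 3)
    (hY : Y ≠ 0) (h : 2 ^ (2 * l + 1) + 3 ^ (2 * Y) = c ^ z)
    (h' : 2 ^ (2 * m + 1) + 3 ^ (2 * n + 1) = c ^ z') : c = 11 := by
  have hz := odd_of_two_pow_odd_add_three_pow_eq hc hc₃ (by omega) h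
  have hz' := odd_of_two_pow_odd_add_three_pow_eq hc hc₃ (by omega) h'
  obtain ⟨rfl, hm⟩ := eq_zero_and_ne_zero_of_mod_eight (hc.odd_of_ne_two hc₂) hz hz' h h'
  have h9 {k : ℕ} (hk : 2 ≤ k) : 9 ∣ 3 ^ k := pow_dvd_pow 3 hk
  have hz₉ : c ^ z % 9 = 2 := by have := h9 (by omega : 2 ≤ 2 * Y); omega
  obtain rfl | hm₂ : m = 1 ∨ 2 ≤ m := by omega
  · obtain rfl | hn := eq_or_ne n 0
    · exact eq_of_pow_eq_prime_pow hc (by norm_num) one_ne_zero (m := z') (by omega)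
    · obtain ⟨w, rfl⟩ := three_dvd_of_pow_mod_nine (z' := z') hz hz₉ (by
        have := h9 (by omega : 2 ≤ 2 * n + 1)
        exact (by omega : c ^ z' % 9 = 8))
      exact (eight_add_three_pow_ne_cube _ _ (h'.trans (pow_mul' c 3 w))).elim
  · obtain ⟨m, rfl⟩ := Nat.exists_eq_add_of_le' hm₂
    have hz₃ := not_three_dvd_of_pow_mod_nine_eq_two hz₉
    obtain ⟨i, rfl⟩ := hz
    obtain ⟨j, rfl⟩ := hz'
    refine (two_pow_odd_add_three_pow_odd_pow_ne (i := i) (by omega) m n Y j ?_).elim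
    rw [show 2 * m + 5 = 2 * (m + 2) + 1 by ring, h', ← pow_right_comm, ← h]
    rfl

end TwoThree

/-- `IsSolution a b c (x, y, z)` says that `(x, y, z)` is a solution of `a ^ x + b ^ y = c ^ z` in
positive integers. -/
def IsSolution (a b c : ℕ) (s : ℕ × ℕ × ℕ) : Prop :=
  0 < s.1 ∧ 0 < s.2.1 ∧ 0 < s.2.2 ∧ a ^ s.1 + b ^ s.2.1 = c ^ s.2.2

/-- The shape of the two solutions `s = (x₁, y₁, z₁)` and `t = (x₂, y₂, z₂)` of a non-exceptional
equation: `x₁` and `y₁` are even, `z₁ = 1`, `y₂` is odd and `1 < z₂`. -/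
def IsEvenOddPair (s t : ℕ × ℕ × ℕ) : Prop :=
  2 ∣ s.1 ∧ 2 ∣ s.2.1 ∧ s.2.2 = 1 ∧ ¬ 2 ∣ t.2.1 ∧ 1 < t.2.2

section BaseTwo

variable {b c k l k' l' m x y z y' z' : ℕ} {s t : ℕ × ℕ × ℕ}

theorem eq_one_or_of_two_pow_even_add_pow_even_eq_of_ne (hb : b.Prime) (hc : c.Prime) (hb₂ : b ≠ 2)
    (hc₂ : c ≠ 2) (hbc : b ≠ c) (h35 : ¬ (b = 3 ∧ c = 5)) (hz : z ≠ 0)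
    (h : 2 ^ (2 * (k + 1)) + b ^ (2 * l) = c ^ z) :
    z = 1 ∨ b = 11 ∧ c = 5 ∧ k = 0 ∧ l = 1 ∧ z = 3 := by
  rcases Nat.even_or_odd' z with ⟨w, rfl | rfl⟩
  · exact absurd (eq_three_and_eq_five_of_two_pow_even_add_pow_even_eq_sq hb hc k.succ_ne_zero
      (by omega) h) h35
  · exact eq_one_or_of_two_pow_even_add_pow_even_eq hb hc hb₂ hc₂ hbc (odd_two_mul_add_one w) h

theorem eq_of_two_pow_even_add_pow_even_eq (hb : b.Prime) (hc : c.Prime) (hb₂ : b ≠ 2)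
    (hc₂ : c ≠ 2) (hbc : b ≠ c) (h35 : ¬ (b = 3 ∧ c = 5)) (hl : l ≠ 0) (hl' : l' ≠ 0) (hz : z ≠ 0)
    (hz' : z' ≠ 0) (h : 2 ^ (2 * (k + 1)) + b ^ (2 * l) = c ^ z)
    (h' : 2 ^ (2 * (k' + 1)) + b ^ (2 * l') = c ^ z') : k = k' ∧ l = l' ∧ z = z' := by
  have hlt {l : ℕ} (hl : l ≠ 0) (k : ℕ) : 2 ^ (2 * (k + 1)) + 11 ^ (2 * l) ≠ 5 ^ 1 := by
    have h₁₁ : 11 ≤ 11 ^ (2 * l) := Nat.le_self_pow (by omega) 11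
    exact ((by norm_num : 5 ^ 1 < 11).trans_le (h₁₁.trans (Nat.le_add_left _ _))).ne'
  rcases eq_one_or_of_two_pow_even_add_pow_even_eq_of_ne hb hc hb₂ hc₂ hbc h35 hz h with
    rfl | ⟨rfl, rfl, rfl, rfl, rfl⟩ <;>
  rcases eq_one_or_of_two_pow_even_add_pow_even_eq_of_ne hb hc hb₂ hc₂ hbc h35 hz' h' with
    rfl | ⟨hb', hc', hk', hl₁, hz₃⟩
  · rw [pow_one] at h h'
    exact (eq_of_two_pow_even_add_pow_even_eq_prime hb hc hc₂ h h').imp_right fun hl => ⟨hl, rfl⟩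
  · subst hb' hc'
    exact (hlt hl k h).elim
  · exact (hlt hl' k' h').elim
  · exact ⟨hk'.symm, hl₁.symm, hz₃.symm⟩

theorem two_pow_add_eleven_pow_odd_ne (hx : x ≠ 0) (l z : ℕ) :
    2 ^ x + 11 ^ (2 * l + 1) ≠ 5 ^ z := by
  intro h
  rcases Nat.even_or_odd' x with ⟨k, rfl | rfl⟩
  · have h₁₁ := pow_even_mod_eight (by decide : Odd 11) l
    have h₅ : 5 ^ z % 4 = 1 := by simp [Nat.pow_mod]
    have h₄ : 2 ^ 2 ∣ 2 ^ (2 * k) := pow_dvd_pow 2 (by omega)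
    rw [pow_succ 11] at h
    omega
  · have h₁ : (2 ^ (2 * k + 1)) ^ 5 ≡ (5 ^ z) ^ 5 [MOD 11] := by
      refine Nat.ModEq.pow 5 ?_
      rw [← h]
      exact (Nat.ModEq.refl _).symm.trans (by simp [Nat.ModEq, pow_succ])
    have h₂ : (2 ^ (2 * k + 1)) ^ 5 ≡ 10 [MOD 11] := by
      rw [← pow_mul, show (2 * k + 1) * 5 = 10 * k + 5 by ring, pow_add, pow_mul]
      simp [Nat.ModEq, Nat.mul_mod, Nat.pow_mod]
    have h₃ : (5 ^ z) ^ 5 ≡ 1 [MOD 11] := by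
      rw [← pow_mul, mul_comm, pow_mul]
      simp [Nat.ModEq, Nat.pow_mod]
    exact absurd ((h₂.symm.trans h₁).trans h₃) (by decide)

theorem two_pow_odd_mod_three (m : ℕ) : 2 ^ (2 * m + 1) % 3 = 2 := by
  rw [pow_succ, Nat.mul_mod, pow_even_mod_three (by decide)]

theorem two_pow_even_add_pow_even_ne_two_pow_odd_add_pow (hb : b.Prime) (hl : l ≠ 0) (hy : y ≠ 0)
    (k m : ℕ) : 2 ^ (2 * k) + b ^ (2 * l) ≠ 2 ^ (2 * m + 1) + b ^ y := by
  intro h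
  have h₁ := pow_even_mod_three (by decide : ¬ 3 ∣ 2) k
  have h₂ := two_pow_odd_mod_three m
  by_cases hb₃ : b = 3
  · subst hb₃
    have : 3 ∣ 3 ^ (2 * l) := dvd_pow_self 3 (by omega)
    have : 3 ∣ 3 ^ y := dvd_pow_self 3 hy
    omega
  · have := pow_even_mod_three (not_three_dvd_of_prime hb hb₃) l
    have : ¬ 3 ∣ b ^ y := fun hd =>
      not_three_dvd_of_prime hb hb₃ (Nat.prime_three.dvd_of_dvd_pow hd)
    omega

theorem IsSolution.isEvenOddPair (hb : b.Prime) (hc : c.Prime) (hb₂ : b ≠ 2) (hc₂ : c ≠ 2)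
    (hbc : b ≠ c) (h35 : ¬ (b = 3 ∧ c = 5)) (hs : IsSolution 2 b c s) (ht : IsSolution 2 b c t)
    (hx : Even s.1) (hy : Even s.2.1) (hy' : Odd t.2.1) : IsEvenOddPair s t := by
  obtain ⟨x, y, z⟩ := s
  obtain ⟨x', y', z'⟩ := t
  obtain ⟨hx₀, hy₀, hz, h⟩ := hs
  obtain ⟨hx'₀, hy'₀, hz', h'⟩ := ht
  dsimp only at *
  refine ⟨hx.two_dvd, hy.two_dvd, ?_⟩
  obtain ⟨k, rfl⟩ := hx.two_dvd
  obtain ⟨l, rfl⟩ := hy.two_dvd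
  obtain ⟨k, rfl⟩ := Nat.exists_eq_succ_of_ne_zero (by omega : k ≠ 0)
  rcases eq_one_or_of_two_pow_even_add_pow_even_eq_of_ne hb hc hb₂ hc₂ hbc h35 hz.ne' h with
    rfl | ⟨rfl, rfl, -⟩
  · refine ⟨rfl, hy'.not_two_dvd_nat, (Nat.one_le_iff_ne_zero.2 hz'.ne').lt_of_ne' fun hz₁ => ?_⟩
    rw [hz₁] at h'
    replace h := h.trans h'.symm
    rcases Nat.even_or_odd' x' with ⟨m, rfl | rfl⟩
    · exact two_pow_even_add_pow_ne hb hb₂ k.succ_ne_zero (by omega) hy₀.ne' hy'₀.ne'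
        ((even_two_mul l).add_odd hy') h
    · exact two_pow_even_add_pow_even_ne_two_pow_odd_add_pow hb (by omega) hy'₀.ne' _ _ h
  · obtain ⟨n, rfl⟩ := hy'
    exact (two_pow_add_eleven_pow_odd_ne hx'₀.ne' n z' h').elim

theorem mod_three_eq_one_of_two_pow_even_add_three_pow_eq (hc : c.Prime) (hc₂ : c ≠ 2)
    (hc₃ : 3 ≠ c) (hc₅ : c ≠ 5) (hy : y ≠ 0) (hz : z ≠ 0) (h : 2 ^ (2 * (k + 1)) + 3 ^ y = c ^ z) :
    c % 3 = 1 := by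
  have h₁ := pow_even_mod_three (by decide : ¬ 3 ∣ 2) (k + 1)
  have h₂ : 3 ∣ 3 ^ y := dvd_pow_self 3 hy
  rcases Nat.even_or_odd' y with ⟨l, rfl | rfl⟩
  · rcases eq_one_or_of_two_pow_even_add_pow_even_eq_of_ne Nat.prime_three hc (by decide) hc₂ hc₃
      (fun h => hc₅ h.2) hz h with rfl | ⟨h₁₁, -⟩
    · rw [pow_one] at h
      omega
    · exact absurd h₁₁ (by decide)
  · have h₃ := pow_even_mod_eight (by decide : Odd 3) l
    have h₄ : 4 ∣ 2 ^ (2 * (k + 1)) := pow_dvd_pow 2 (by omega : 2 ≤ 2 * (k + 1))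
    rcases Nat.even_or_odd' z with ⟨w, rfl | rfl⟩
    · have := pow_even_mod_eight (hc.odd_of_ne_two hc₂) w
      rw [pow_succ] at h
      omega
    · have h₅ := pow_even_mod_three (not_three_dvd_of_prime hc hc₃.symm) w
      rw [pow_succ c] at h
      have : c ^ (2 * w) * c % 3 = c % 3 := by rw [Nat.mul_mod, h₅, one_mul, Nat.mod_mod]
      omega

theorem not_two_pow_odd_add_three_pow_eq (hc : c.Prime) (hc₂ : c ≠ 2) (hc₃ : 3 ≠ c) (hc₅ : c ≠ 5)
    (hy : y ≠ 0) (hy' : y' ≠ 0) (hz : z ≠ 0) (h : 2 ^ (2 * (k + 1)) + 3 ^ y = c ^ z) :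
    2 ^ (2 * m + 1) + 3 ^ y' ≠ c ^ z' := by
  intro h'
  have hc₁ := mod_three_eq_one_of_two_pow_even_add_three_pow_eq hc hc₂ hc₃ hc₅ hy hz h
  have hcz : c ^ z' % 3 = 1 := by simp [Nat.pow_mod, hc₁]
  have h₂ := two_pow_odd_mod_three m
  have h₃ : 3 ∣ 3 ^ y' := dvd_pow_self 3 hy'
  omega

theorem IsSolution.not_odd_of_even_of_three (hc : c.Prime) (hc₂ : c ≠ 2) (hc₃ : 3 ≠ c)
    (hc₅ : c ≠ 5) (hs : IsSolution 2 3 c s) (ht : IsSolution 2 3 c t) (hx : Even s.1) :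
    ¬ Odd t.1 := by
  obtain ⟨x, y, z⟩ := s
  obtain ⟨x', y', z'⟩ := t
  obtain ⟨hx₀, hy₀, hz, h⟩ := hs
  obtain ⟨-, hy'₀, -, h'⟩ := ht
  dsimp only at *
  rintro ⟨m, rfl⟩
  obtain ⟨k, rfl⟩ := hx.two_dvd
  obtain ⟨k, rfl⟩ := Nat.exists_eq_succ_of_ne_zero (by omega : k ≠ 0)
  exact not_two_pow_odd_add_three_pow_eq hc hc₂ hc₃ hc₅ hy₀.ne' hy'₀.ne' hz.ne' h h'

theorem IsSolution.three_of_odd_of_even (hb : b.Prime) (hc : c.Prime) (hb₂ : b ≠ 2)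
    (h53 : ¬ (b = 5 ∧ c = 3)) (h73 : ¬ (b = 7 ∧ c = 3)) (hs : IsSolution 2 b c s) (hx : Odd s.1)
    (hy : Even s.2.1) : b = 3 := by
  by_contra hb₃
  obtain ⟨x, y, z⟩ := s
  obtain ⟨-, hy₀, -, h⟩ := hs
  dsimp only at *
  obtain ⟨k, rfl⟩ := hx
  obtain ⟨l, rfl⟩ := hy.two_dvd
  rcases eq_three_and_eq_of_two_pow_odd_add_pow_even_eq hb hc hb₂ hb₃ (by omega) h with ⟨hc₃, h | h⟩
  exacts [h53 ⟨h, hc₃⟩, h73 ⟨h, hc₃⟩]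

theorem two_pow_odd_add_pow_odd_ne (hb : b.Prime) (hb₃ : b ≠ 3) (hc : c.Prime) (hz : z ≠ 0)
    (hz' : z' ≠ 0) (h : 2 ^ (2 * k) + b ^ (2 * l + 1) = c ^ z) :
    2 ^ (2 * m + 1) + b ^ (2 * l' + 1) ≠ c ^ z' := by
  intro h'
  have hb' := not_three_dvd_of_prime hb hb₃
  have hpow (l : ℕ) : b ^ (2 * l + 1) % 3 = b % 3 := by
    rw [pow_succ, Nat.mul_mod, pow_even_mod_three hb', one_mul, Nat.mod_mod]
  have h₁ := pow_even_mod_three (by decide : ¬ 3 ∣ 2) k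
  have h₂ := two_pow_odd_mod_three m
  have hl := hpow l
  have hl' := hpow l'
  by_cases hc₃ : c = 3
  · subst hc₃
    have hz₃ : 3 ∣ 3 ^ z := dvd_pow_self 3 hz
    have hz'₃ : 3 ∣ 3 ^ z' := dvd_pow_self 3 hz'
    omega
  · have hcz (z : ℕ) : ¬ 3 ∣ c ^ z := fun hd =>
      not_three_dvd_of_prime hc hc₃ (Nat.prime_three.dvd_of_dvd_pow hd)
    have hz₃ := hcz z
    have hz'₃ := hcz z'
    omega

theorem IsSolution.not_odd_of_even_of_odd_of_odd (hb : b.Prime) (hb₃ : b ≠ 3) (hc : c.Prime)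
    (hs : IsSolution 2 b c s) (ht : IsSolution 2 b c t) (hx : Even s.1) (hy : Odd s.2.1)
    (hy' : Odd t.2.1) : ¬ Odd t.1 := by
  obtain ⟨x, y, z⟩ := s
  obtain ⟨x', y', z'⟩ := t
  obtain ⟨-, -, hz, h⟩ := hs
  obtain ⟨-, -, hz', h'⟩ := ht
  dsimp only at *
  rintro ⟨k', rfl⟩
  obtain ⟨k, rfl⟩ := hx.two_dvd
  obtain ⟨l, rfl⟩ := hy
  obtain ⟨l', rfl⟩ := hy'
  exact two_pow_odd_add_pow_odd_ne hb hb₃ hc hz.ne' hz'.ne' h h'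

theorem IsSolution.eq_of_even_iff_even (hb : b.Prime) (hc : c.Prime) (hb₂ : b ≠ 2) (hc₂ : c ≠ 2)
    (hbc : b ≠ c) (h35 : ¬ (b = 3 ∧ c = 5)) (h53 : ¬ (b = 5 ∧ c = 3)) (h73 : ¬ (b = 7 ∧ c = 3))
    (hs : IsSolution 2 b c s) (ht : IsSolution 2 b c t) (hx : Even s.1 ↔ Even t.1)
    (hy : Even s.2.1 ↔ Even t.2.1) : s = t := by
  have hthree := hs.three_of_odd_of_even hb hc hb₂ h53 h73
  obtain ⟨x, y, z⟩ := s
  obtain ⟨x', y', z'⟩ := t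
  obtain ⟨hx₀, hy₀, hz, h⟩ := hs
  obtain ⟨hx'₀, hy'₀, hz', h'⟩ := ht
  dsimp only at *
  suffices x = x' ∧ y = y' ∧ z = z' by grind
  rcases Nat.even_or_odd' x with ⟨k, rfl | rfl⟩ <;>
  rcases Nat.even_or_odd' x' with ⟨k', rfl | rfl⟩ <;>
  rcases Nat.even_or_odd' y with ⟨l, rfl | rfl⟩ <;>
  rcases Nat.even_or_odd' y' with ⟨l', rfl | rfl⟩ <;> try grind
  · obtain ⟨k, rfl⟩ := Nat.exists_eq_succ_of_ne_zero (by omega : k ≠ 0)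
    obtain ⟨k', rfl⟩ := Nat.exists_eq_succ_of_ne_zero (by omega : k' ≠ 0)
    have := eq_of_two_pow_even_add_pow_even_eq hb hc hb₂ hc₂ hbc h35 (by omega) (by omega) hz.ne'
      hz'.ne' h h'
    omega
  · have := eq_of_two_pow_even_add_pow_odd_eq hb hc hb₂ hc₂ hbc hz hz' h h'
    omega
  · obtain rfl := hthree (odd_two_mul_add_one k) (even_two_mul l)
    have := eq_of_two_pow_odd_add_three_pow_even_eq hc hc₂ hbc.symm
      (odd_of_two_pow_odd_add_three_pow_eq hc hbc.symm hy₀.ne' h)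
      (odd_of_two_pow_odd_add_three_pow_eq hc hbc.symm hy'₀.ne' h') h h'
    omega
  · have := eq_of_two_pow_odd_add_pow_odd_eq hb hc hb₂ hc₂ hbc hz hz' h h'
    omega

theorem IsSolution.even_and_odd_of_even_of_odd (hb : b.Prime) (hc : c.Prime) (hb₂ : b ≠ 2)
    (hc₂ : c ≠ 2) (hbc : b ≠ c) (h35 : ¬ (b = 3 ∧ c = 5)) (h53 : ¬ (b = 5 ∧ c = 3))
    (h73 : ¬ (b = 7 ∧ c = 3)) (hs : IsSolution 2 b c s) (ht : IsSolution 2 b c t) (hx : Even s.1)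
    (hx' : Odd t.1) : Even s.2.1 ∧ Odd t.2.1 := by
  have hb₃ : b ≠ 3 := by
    rintro rfl
    exact hs.not_odd_of_even_of_three hc hc₂ hbc (fun h => h35 ⟨rfl, h⟩) ht hx hx'
  have hy' : Odd t.2.1 := by
    rw [← Nat.not_even_iff_odd]
    exact fun hy' => hb₃ (ht.three_of_odd_of_even hb hc hb₂ h53 h73 hx' hy')
  refine ⟨?_, hy'⟩
  rw [← Nat.not_odd_iff_even]
  exact fun hy => hs.not_odd_of_even_of_odd_of_odd hb hb₃ hc ht hx hy hy' hx'

theorem IsSolution.not_odd_of_odd_of_even (hb : b.Prime) (hc : c.Prime) (hb₂ : b ≠ 2)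
    (hc₂ : c ≠ 2) (hbc : b ≠ c) (h311 : ¬ (b = 3 ∧ c = 11)) (h53 : ¬ (b = 5 ∧ c = 3))
    (h73 : ¬ (b = 7 ∧ c = 3)) (hs : IsSolution 2 b c s) (ht : IsSolution 2 b c t) (hx : Odd s.1)
    (hx' : Odd t.1) (hy : Even s.2.1) : ¬ Odd t.2.1 := by
  intro hy'
  obtain rfl := hs.three_of_odd_of_even hb hc hb₂ h53 h73 hx hy
  obtain ⟨x, y, z⟩ := s
  obtain ⟨x', y', z'⟩ := t
  obtain ⟨-, hy₀, -, h⟩ := hs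
  obtain ⟨-, -, -, h'⟩ := ht
  dsimp only at *
  obtain ⟨l, rfl⟩ := hx
  obtain ⟨Y, rfl⟩ := hy.two_dvd
  obtain ⟨m, rfl⟩ := hx'
  obtain ⟨n, rfl⟩ := hy'
  exact h311 ⟨rfl, eq_eleven_of_two_pow_odd_add_three_pow_eq hc hc₂ hbc.symm (by omega) h h'⟩

theorem IsSolution.isEvenOddPair_or_isEvenOddPair (hb : b.Prime) (hc : c.Prime) (hb₂ : b ≠ 2)
    (hc₂ : c ≠ 2) (hbc : b ≠ c) (h35 : ¬ (b = 3 ∧ c = 5)) (h311 : ¬ (b = 3 ∧ c = 11))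
    (h53 : ¬ (b = 5 ∧ c = 3)) (h73 : ¬ (b = 7 ∧ c = 3)) (hs : IsSolution 2 b c s)
    (ht : IsSolution 2 b c t) (hst : s ≠ t) : IsEvenOddPair s t ∨ IsEvenOddPair t s := by
  have hpair {s t} (hs : IsSolution 2 b c s) (ht : IsSolution 2 b c t) :=
    hs.isEvenOddPair hb hc hb₂ hc₂ hbc h35 ht
  have hcross {s t} (hs : IsSolution 2 b c s) (ht : IsSolution 2 b c t) (hx : Even s.1)
      (hx' : Odd t.1) : IsEvenOddPair s t :=
    have ⟨hy, hy'⟩ := hs.even_and_odd_of_even_of_odd hb hc hb₂ hc₂ hbc h35 h53 h73 ht hx hx'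
    hpair hs ht hx hy hy'
  have hodd {s t} (hs : IsSolution 2 b c s) (ht : IsSolution 2 b c t) :=
    hs.not_odd_of_odd_of_even hb hc hb₂ hc₂ hbc h311 h53 h73 ht
  have heq := hs.eq_of_even_iff_even hb hc hb₂ hc₂ hbc h35 h53 h73 ht
  rcases Nat.even_or_odd s.1 with hx | hx <;> rcases Nat.even_or_odd t.1 with hx' | hx'
  · rcases Nat.even_or_odd s.2.1 with hy | hy <;> rcases Nat.even_or_odd t.2.1 with hy' | hy'
    · exact absurd (heq (by grind) (by grind)) hst
    · exact .inl (hpair hs ht hx hy hy')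
    · exact .inr (hpair ht hs hx' hy' hy)
    · exact absurd (heq (by grind) (by grind)) hst
  · exact .inl (hcross hs ht hx hx')
  · exact .inr (hcross ht hs hx' hx)
  · have hy := hodd hs ht hx hx'
    have hy' := hodd ht hs hx' hx
    exact absurd (heq (by grind) (by grind)) hst

theorem exists_isEvenOddPair_of_forall {S : ℕ × ℕ × ℕ → Prop}
    (h : ∀ s t, S s → S t → s ≠ t → IsEvenOddPair s t ∨ IsEvenOddPair t s) (hs : S s) (ht : S t)
    (hst : s ≠ t) :
    ∃ s t, S s ∧ S t ∧ s ≠ t ∧ (∀ r, S r → r = s ∨ r = t) ∧ IsEvenOddPair s t := by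
  wlog hpair : IsEvenOddPair s t generalizing s t
  · exact this ht hs hst.symm ((h s t hs ht hst).resolve_left hpair)
  refine ⟨s, t, hs, ht, hst, fun r hr => ?_, hpair⟩
  by_contra! hne
  have hrs := h r s hr hs hne.1
  have hrt := h r t hr ht hne.2
  unfold IsEvenOddPair at *
  tauto

end BaseTwo

section Parity

variable {a b : ℤ} {M N Z x₁ y₁ x₂ y₂ : ℕ}

theorem two_pow_dvd_sub_one_or_add_one_of_modEq {e : ℤ} (ha : Odd a) (he : e = 1 ∨ e = -1)
    (hMN : Odd (M + N)) (h : a ^ M ≡ e * a ^ N [ZMOD 2 ^ Z]) :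
    2 ^ Z ∣ a - 1 ∨ 2 ^ Z ∣ a + 1 := by
  wlog hle : N ≤ M generalizing M N
  · refine this (by rwa [add_comm]) ?_ (by omega)
    have hee : e * e = 1 := by rcases he with rfl | rfl <;> norm_num
    simpa only [← mul_assoc, hee, one_mul] using (h.mul_left e).symm
  obtain ⟨t, rfl⟩ := Nat.exists_eq_add_of_le hle
  have ht : Odd t := by grind
  have hdvd : 2 ^ Z ∣ a ^ t - e := by
    refine (Int.isCoprime_two_left.2 (ha.pow (n := N))).pow_left.dvd_of_dvd_mul_left ?_
    rw [mul_sub, mul_comm _ e, ← pow_add]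
    exact h.symm.dvd
  rcases he with rfl | rfl
  · exact .inl (two_pow_dvd_sub_one_of_dvd_pow_sub_one ha ht hdvd)
  · right
    have hneg : 2 ^ Z ∣ (-a) ^ t - 1 := by
      rwa [ht.neg_pow, ← dvd_neg, neg_sub', sub_neg_eq_add, neg_neg, ← sub_neg_eq_add]
    have := two_pow_dvd_sub_one_of_dvd_pow_sub_one ha.neg ht hneg
    rwa [← dvd_neg, neg_add']

theorem even_mul_add_mul_of_two_pow_dvd (ha : Odd a) (ha₁ : 1 < a) (haZ : a + 1 < 2 ^ Z)
    (h₁ : 2 ^ Z ∣ a ^ x₁ + b ^ y₁) (h₂ : 2 ^ Z ∣ a ^ x₂ + b ^ y₂) :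
    Even (x₁ * y₂ + x₂ * y₁) := by
  by_contra hodd
  have h₁' : a ^ x₁ ≡ -b ^ y₁ [ZMOD 2 ^ Z] := by
    exact (Int.modEq_iff_dvd.2 (by rwa [sub_neg_eq_add])).symm
  have h₂' : a ^ x₂ ≡ -b ^ y₂ [ZMOD 2 ^ Z] := by
    exact (Int.modEq_iff_dvd.2 (by rwa [sub_neg_eq_add])).symm
  have hmod : a ^ (x₁ * y₂) ≡ (-1) ^ (y₁ + y₂) * a ^ (x₂ * y₁) [ZMOD 2 ^ Z] := calc
    a ^ (x₁ * y₂) ≡ (-b ^ y₁) ^ y₂ [ZMOD 2 ^ Z] := by rw [pow_mul]; exact h₁'.pow y₂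
    _ = (-1) ^ (y₁ + y₂) * (-b ^ y₂) ^ y₁ := by
      have : ((-1 : ℤ) ^ y₁) ^ 2 = 1 := by rw [← pow_mul', pow_mul]; norm_num
      rw [neg_pow (b ^ y₁), neg_pow (b ^ y₂), ← pow_mul, ← pow_mul, mul_comm y₂ y₁, pow_add]
      linear_combination -(-1 : ℤ) ^ y₂ * b ^ (y₁ * y₂) * this
    _ ≡ (-1) ^ (y₁ + y₂) * a ^ (x₂ * y₁) [ZMOD 2 ^ Z] := by
      rw [pow_mul]; exact (h₂'.pow y₁).symm.mul_left _
  rcases two_pow_dvd_sub_one_or_add_one_of_modEq ha (neg_one_pow_eq_or ℤ _)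
    (Nat.not_even_iff_odd.1 hodd) hmod with h | h
  · linarith [Int.le_of_dvd (by linarith) h]
  · linarith [Int.le_of_dvd (by linarith) h]

end Parity

section EvenPowTwo

variable {a b X l h n : ℕ}

theorem three_pow_mod_eight (n : ℕ) : 3 ^ n % 8 = 1 ∨ 3 ^ n % 8 = 3 := by
  induction n with
  | zero => simp
  | succ n ih => rw [pow_succ]; omega

theorem eq_and_eq_of_three_pow_add_one_eq_two_pow (hh : 2 ≤ h) (e : 3 ^ X + 1 = 2 ^ h) :
    X = 1 ∧ h = 2 := by
  have hh₂ : h = 2 := by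
    by_contra hne
    obtain ⟨f, rfl⟩ := Nat.exists_eq_add_of_le (by omega : 3 ≤ h)
    have := three_pow_mod_eight X
    rw [pow_add] at e
    omega
  subst hh₂
  exact ⟨Nat.pow_right_injective (le_refl 3 |>.trans' (by norm_num)) (by simpa using e), rfl⟩

theorem pow_add_one_eq_of_pow_even_add_pow_odd_eq (ha : a.Prime) (hb : b.Prime) (hab : a ≠ b)
    (hb₂ : b ≠ 2) (e : a ^ (2 * X) + b ^ n = 2 ^ (2 * h)) :
    a ^ X + 1 = 2 ^ h ∧ b ^ n + 1 = 2 * 2 ^ h := by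
  have hndvd : ¬ b ∣ 2 * a ^ X := fun hd => by
    rcases hb.dvd_mul.1 hd with hd | hd
    · exact hb₂ ((Nat.prime_dvd_prime_iff_eq hb Nat.prime_two).1 hd)
    · exact hab (Nat.prime_eq_prime_of_dvd_pow hb ha hd).symm
  rw [pow_mul', pow_mul'] at e
  have := eq_add_one_of_sq_add_prime_pow_eq_sq hb hndvd e
  omega

theorem mod_eight_eq_seven (ha : Odd a) (hb : Odd b) (hz : 3 ≤ n)
    (e : a ^ (2 * X) + b ^ (2 * l + 1) = 2 ^ n) : b % 8 = 7 := by
  obtain ⟨f, rfl⟩ := Nat.exists_eq_add_of_le hz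
  have h₁ := pow_even_mod_eight ha X
  have h₂ := pow_odd_mod_eight hb (odd_two_mul_add_one l)
  rw [pow_add 2] at e
  omega

theorem eq_of_pow_even_add_pow_odd_eq_two_pow_even (ha : a.Prime) (hb : b.Prime) (hab : a ≠ b)
    (ha₂ : a ≠ 2) (hb₂ : b ≠ 2) (hh : 2 ≤ h) (e : a ^ (2 * X) + b ^ (2 * l + 1) = 2 ^ (2 * h)) :
    a = 3 ∧ b = 7 ∧ X = 1 ∧ l = 0 ∧ h = 2 := by
  have hb₈ := mod_eight_eq_seven (ha.odd_of_ne_two ha₂) (hb.odd_of_ne_two hb₂) (by omega) e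
  obtain ⟨hA, hB⟩ := pow_add_one_eq_of_pow_even_add_pow_odd_eq ha hb hab hb₂ e
  have ha₃ : a = 3 := by
    have hB₃ : ¬ 3 ∣ b ^ (2 * l + 1) := fun hd =>
      not_three_dvd_of_prime hb (by rintro rfl; omega) (Nat.prime_three.dvd_of_dvd_pow hd)
    have h₃ : ¬ 3 ∣ 2 ^ h := fun hd => by
      have := Nat.prime_three.dvd_of_dvd_pow hd; omega
    have hA₃ : 3 ∣ a ^ X := by
      have : 2 ^ h % 3 = 1 ∨ 2 ^ h % 3 = 2 := by omega
      omega
    exact (Nat.prime_eq_prime_of_dvd_pow Nat.prime_three ha hA₃).symm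
  subst ha₃
  obtain ⟨rfl, rfl⟩ := eq_and_eq_of_three_pow_add_one_eq_two_pow hh hA
  have hB₇ : b ^ (2 * l + 1) = 7 ^ 1 := by omega
  obtain rfl := eq_of_pow_eq_prime_pow hb (by norm_num) one_ne_zero hB₇
  have := Nat.pow_right_injective (by norm_num : 2 ≤ 7) hB₇
  exact ⟨rfl, rfl, rfl, by omega, rfl⟩

end EvenPowTwo

section HalfIntegral

variable {A B D : ℤ} {n : ℕ}

theorem exists_isPrimitiveRep_two {U V : ℤ} (hD : 1 ^ 2 + 4 * A = -D) (hn : 0 < n) (hV : Odd V)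
    (h : U ^ 2 + D * V ^ 2 = 2 ^ (n + 2)) :
    ∃ x : QuadraticAlgebra ℤ A 1, IsPrimitiveRep 2 n x ∧ trace x = U ∧ x.im = V := by
  obtain ⟨r, hr⟩ : Even (U - V) := by
    have hD' : Odd D := by rw [← neg_neg D, ← hD]; exact ⟨-1 - 2 * A, by ring⟩
    have hU : ¬ Even (U ^ 2) := by
      rw [eq_sub_of_add_eq h]
      exact Int.not_even_iff_odd.2
        ((even_two.pow_of_ne_zero (by omega)).sub_odd (hD'.mul hV.pow))
    exact (Int.not_even_iff_odd.1 fun hU' => hU (hU'.pow_of_ne_zero two_ne_zero)).sub_odd hV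
  have htrace : trace (⟨r, V⟩ : QuadraticAlgebra ℤ A 1) = U := by
    rw [trace_def]; dsimp only; linarith
  refine ⟨⟨r, V⟩, ⟨hn, ?_, ?_⟩, htrace, rfl⟩
  · have := four_mul_norm (⟨r, V⟩ : QuadraticAlgebra ℤ A 1)
    rw [htrace, hD] at this
    rw [pow_add] at h
    push_cast
    linarith
  · exact Int.two_dvd_ne_zero.2 (Int.odd_iff.1 hV)

theorem exists_eq_mul_odd_of_dvd_trace_pow {π : ℤ} (hπ : Prime π) (hπ₂ : ¬ π ∣ 2)
    {x : QuadraticAlgebra ℤ A B} (hnorm : ¬ π ∣ norm x) (h : π ∣ trace (x ^ n)) :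
    ∃ g, π ∣ trace (x ^ g) ∧ ∀ k, π ∣ trace (x ^ k) → ∃ i, k = g * (2 * i + 1) := by
  classical
  have hex : ∃ n, π ∣ trace (x ^ n) := ⟨n, h⟩
  have hdrop (n j : ℕ) (h₁ : π ∣ trace (x ^ (n + 2 * j)))
      (h₂ : π ∣ trace (x ^ j) * trace (x ^ (n + j))) : π ∣ trace (x ^ n) := by
    rw [trace_pow_add_two_mul, dvd_sub_right h₂] at h₁
    exact (hπ.dvd_or_dvd h₁).resolve_left fun h => hnorm (hπ.dvd_of_dvd_pow h)
  set g := Nat.find hex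
  have hgdvd : π ∣ trace (x ^ g) := Nat.find_spec hex
  refine ⟨g, hgdvd, fun k => ?_⟩
  induction k using Nat.strong_induction_on with | _ k ih => ?_
  intro hk
  have hgk : g ≤ k := Nat.find_min' hex hk
  have hk0 : k ≠ 0 := by
    rintro rfl
    exact hπ₂ (by simpa [trace_def] using hk)
  rcases le_or_gt (2 * g) k with hle | hlt
  · obtain ⟨n, rfl⟩ := Nat.exists_eq_add_of_le' hle
    have hg0 : g ≠ 0 := fun h0 => hπ₂ (by simpa [h0, trace_def] using hgdvd)
    obtain ⟨i, rfl⟩ := ih n (by omega) (hdrop n g hk (hgdvd.mul_right _))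
    exact ⟨i + 1, by ring⟩
  · obtain ⟨j, rfl⟩ := Nat.exists_eq_add_of_le hgk
    obtain ⟨n, hn⟩ := Nat.exists_eq_add_of_lt (by omega : j < g)
    have hmin := Nat.find_min' hex (hdrop (n + 1) j ((by omega : n + 1 + 2 * j = g + j) ▸ hk)
      ((by omega : n + 1 + j = g) ▸ hgdvd.mul_left _))
    exact ⟨0, by omega⟩

end HalfIntegral

section PowEvenPowOdd

variable {A : ℤ} {a b q l m n w X l' w' X' : ℕ} {δ ε : QuadraticAlgebra ℤ A 1}

theorem abs_im_pow_ne_of_abs_trace_pow_eq (ha : a.Prime) (hb : b.Prime) (ha₂ : a ≠ 2)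
    (hb₂ : b ≠ 2) (hb₇ : 7 ≤ b) (hA : 1 ^ 2 + 4 * A = -(b : ℤ)) (hq : q.Prime) (hq₂ : q ≠ 2)
    (hδ : IsPrimitiveRep 2 m δ) (hδa : (a : ℤ) ∣ trace δ) (htrace : |trace (δ ^ q)| = (a : ℤ) ^ X) :
    |(δ ^ q).im| ≠ (b : ℤ) ^ l := by
  intro him
  refine false_of_abs_trace_pow_le_of_abs_im_pow_le (x := δ) (by omega) ?_
    (hq.two_le.lt_of_ne' hq₂)
    (abs_trace_pow_le (s := 1) (k := X) ha hq hq₂ hδa (hδ.not_dvd_norm ha Nat.prime_two ha₂)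
      (one_dvd _) isCoprime_one_left ?_)
    (abs_im_pow_le hb hq hq₂ (hA ▸ (dvd_neg.2 dvd_rfl)) (hδ.not_dvd_norm hb Nat.prime_two hb₂)
      (by omega) him)
  · have htr0 : trace δ ≠ 0 := fun h0 => by
      have := trace_dvd_trace_pow δ (hq.odd_of_ne_two hq₂)
      rw [h0, zero_dvd_iff] at this
      rw [this, abs_zero] at htrace
      exact pow_ne_zero X (by exact_mod_cast ha.ne_zero) htrace.symm
    have him0 : δ.im ≠ 0 := fun h0 => hδ.not_dvd_im (h0 ▸ dvd_zero _)
    have htr : (3 : ℤ) ^ 2 ≤ trace δ ^ 2 := sq_le_sq.2 <| by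
      have h₁ := Int.le_of_dvd (abs_pos.2 htr0) ((dvd_abs _ _).2 hδa)
      have h₂ := ha.two_le.lt_of_ne' ha₂
      rw [abs_of_pos three_pos]
      omega
    have := Int.add_one_le_of_lt (pow_two_pos_of_ne_zero him0)
    have := four_mul_norm δ
    nlinarith
  · rw [htrace, one_mul]; exact (abs_of_nonneg (by positivity)).symm

theorem eq_zero_of_eqUpToConj_pow_mul_odd (ha : a.Prime) (hb : b.Prime) (ha₂ : a ≠ 2)
    (hb₂ : b ≠ 2) (hb₇ : 7 ≤ b) (hA : 1 ^ 2 + 4 * A = -(b : ℤ)) (hε : IsPrimitiveRep 2 m ε)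
    {x : QuadraticAlgebra ℤ A 1} {g i : ℕ} (hx : IsPrimitiveRep 2 n x)
    (htrace : trace x = (a : ℤ) ^ X) (him : x.im = (b : ℤ) ^ l) (hga : (a : ℤ) ∣ trace (ε ^ g))
    (hxε : EqUpToConj x (ε ^ (g * (2 * i + 1)))) : i = 0 := by
  by_contra hi
  obtain ⟨q, hq, r, hr⟩ := Nat.exists_prime_and_dvd (by omega : 2 * i + 1 ≠ 1)
  have hqr : Odd q ∧ Odd r := Nat.odd_mul.1 (hr ▸ odd_two_mul_add_one i)
  have hpow : g * (2 * i + 1) = q * (g * r) := by rw [hr]; ring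
  rw [hpow] at hxε
  have hδ := hε.pow_of_mul Nat.prime_two hx hxε
  rw [pow_mul'] at hxε
  refine abs_im_pow_ne_of_abs_trace_pow_eq ha hb ha₂ hb₂ hb₇ hA hq (hqr.1.ne_two_of_dvd_nat dvd_rfl)
    hδ ?_ (X := X) (l := l) ?_ ?_
  · rw [pow_mul]; exact hga.trans (trace_dvd_trace_pow _ hqr.2)
  · rw [← hxε.abs_trace_eq, htrace]; exact abs_of_nonneg (by positivity)
  · rw [← hxε.abs_im_eq, him]; exact abs_of_nonneg (by positivity)

theorem eq_of_pow_even_add_pow_odd_eq_two_pow_odd (ha : a.Prime) (hb : b.Prime) (ha₂ : a ≠ 2)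
    (hb₂ : b ≠ 2) (hX : X ≠ 0) (hX' : X' ≠ 0)
    (h : a ^ (2 * X) + b ^ (2 * l + 1) = 2 ^ (2 * w + 3))
    (h' : a ^ (2 * X') + b ^ (2 * l' + 1) = 2 ^ (2 * w' + 3)) : X = X' ∧ l = l' ∧ w = w' := by
  have hb_odd := hb.odd_of_ne_two hb₂
  have hb₈ := mod_eight_eq_seven (ha.odd_of_ne_two ha₂) hb_odd (by omega) h
  have hap := Nat.prime_iff_prime_int.1 ha
  have hA : 1 ^ 2 + 4 * (-(((b : ℤ) + 1) / 4)) = -(b : ℤ) := by omega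
  have hrep {X l w : ℕ} (h : a ^ (2 * X) + b ^ (2 * l + 1) = 2 ^ (2 * w + 3)) :=
    exists_isPrimitiveRep_two (n := 2 * w + 1) (U := (a : ℤ) ^ X) (V := (b : ℤ) ^ l) hA
      (Nat.succ_pos _) (by exact_mod_cast hb_odd.pow)
      (by rw [← pow_mul', ← pow_mul', ← pow_succ']; exact_mod_cast h)
  obtain ⟨x, hx, htrace, him⟩ := hrep h
  obtain ⟨x', hx', htrace', him'⟩ := hrep h'
  obtain ⟨m, ε, hε, hgen⟩ := hx.exists_generator Nat.prime_two (by omega) (by omega)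
  obtain ⟨k, -, hxk⟩ := hgen _ x hx
  obtain ⟨k', -, hxk'⟩ := hgen _ x' hx'
  have hdvd {X k : ℕ} {y : QuadraticAlgebra ℤ _ 1} (hX : X ≠ 0) (hy : trace y = (a : ℤ) ^ X)
      (hyk : EqUpToConj y (ε ^ k)) : (a : ℤ) ∣ trace (ε ^ k) := by
    rw [← dvd_abs, ← hyk.abs_trace_eq, dvd_abs, hy]
    exact dvd_pow_self _ hX
  obtain ⟨g, hga, hg⟩ := exists_eq_mul_odd_of_dvd_trace_pow hap
    (by simpa using not_natCast_dvd_natCast_pow ha Nat.prime_two ha₂ 1)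
    (hε.not_dvd_norm ha Nat.prime_two ha₂) (hdvd hX htrace hxk)
  obtain ⟨i, rfl⟩ := hg _ (hdvd hX htrace hxk)
  obtain ⟨i', rfl⟩ := hg _ (hdvd hX' htrace' hxk')
  obtain rfl := eq_zero_of_eqUpToConj_pow_mul_odd ha hb ha₂ hb₂ (by omega) hA hε hx htrace
    him hga hxk
  obtain rfl := eq_zero_of_eqUpToConj_pow_mul_odd ha hb ha₂ hb₂ (by omega) hA hε hx' htrace'
    him' hga hxk'
  have hxx := hxk.trans hxk'.symm
  have hw := hx.exponent_eq_mul Nat.prime_two hε hxk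
  have hw' := hx'.exponent_eq_mul Nat.prime_two hε hxk'
  exact ⟨natCast_pow_injective ha (by simpa only [htrace, htrace'] using hxx.abs_trace_eq),
    natCast_pow_injective hb (by simpa only [him, him'] using hxx.abs_im_eq), by omega⟩

theorem three_pow_add_seven_pow_ne (hX : X ≠ 0) : 3 ^ (2 * X) + 7 ^ n ≠ 2 ^ (2 * w + 1) := by
  intro h
  have h₃ : 3 ^ (2 * X) % 3 = 0 := Nat.mod_eq_zero_of_dvd (dvd_pow_self 3 (by omega))
  have h₇ : 7 ^ n % 3 = 1 := by rw [Nat.pow_mod]; simp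
  have h₂ := two_pow_odd_mod_three w
  omega

theorem eq_of_pow_even_add_pow_odd_eq_two_pow {z z' : ℕ} (ha : a.Prime) (hb : b.Prime)
    (ha₂ : a ≠ 2) (hb₂ : b ≠ 2) (hab : a ≠ b) (hX : X ≠ 0) (hX' : X' ≠ 0) (hz : 3 ≤ z)
    (hz' : 3 ≤ z') (h : a ^ (2 * X) + b ^ (2 * l + 1) = 2 ^ z)
    (h' : a ^ (2 * X') + b ^ (2 * l' + 1) = 2 ^ z') : X = X' ∧ l = l' ∧ z = z' := by
  rcases Nat.even_or_odd' z with ⟨w, rfl | rfl⟩ <;> rcases Nat.even_or_odd' z' with ⟨w', rfl | rfl⟩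
  · obtain ⟨-, -, rfl, rfl, rfl⟩ :=
      eq_of_pow_even_add_pow_odd_eq_two_pow_even ha hb hab ha₂ hb₂ (by omega) h
    obtain ⟨-, -, rfl, rfl, rfl⟩ :=
      eq_of_pow_even_add_pow_odd_eq_two_pow_even ha hb hab ha₂ hb₂ (by omega) h'
    exact ⟨rfl, rfl, rfl⟩
  · obtain ⟨rfl, rfl, -⟩ :=
      eq_of_pow_even_add_pow_odd_eq_two_pow_even ha hb hab ha₂ hb₂ (by omega) h
    exact (three_pow_add_seven_pow_ne hX' h').elim
  · obtain ⟨rfl, rfl, -⟩ :=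
      eq_of_pow_even_add_pow_odd_eq_two_pow_even ha hb hab ha₂ hb₂ (by omega) h'
    exact (three_pow_add_seven_pow_ne hX h).elim
  · obtain ⟨v, rfl⟩ := Nat.exists_eq_add_of_le' (by omega : 1 ≤ w)
    obtain ⟨v', rfl⟩ := Nat.exists_eq_add_of_le' (by omega : 1 ≤ w')
    obtain ⟨hXX, hll, hvv⟩ := eq_of_pow_even_add_pow_odd_eq_two_pow_odd (w := v) (w' := v')
      ha hb ha₂ hb₂ hX hX' h h'
    exact ⟨hXX, hll, by omega⟩

end PowEvenPowOdd

section PowOddPowOdd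

variable {A : ℤ} {a b k q i j m w N i' j' w' : ℕ} {x δ : QuadraticAlgebra ℤ A 1}

theorem four_mul_sq_mul_sq_add_nine_lt (hN : 4 ≤ N) (hq : 3 ≤ q) :
    4 * N ^ 2 * q ^ 2 + 9 < 12 * N ^ q + q ^ 2 := by
  induction q, hq using Nat.le_induction with
  | base => nlinarith [pow_pos (show 0 < N by omega) 2]
  | succ q hq ih =>
    have hsq : 4 * N ^ 2 * (q + 1) ^ 2 + 4 * q ^ 2 ≤ 16 * N ^ 2 * q ^ 2 := calc
      _ ≤ 4 * N ^ 2 * (q + 1) ^ 2 + 4 * N ^ 2 * q ^ 2 := by gcongr; nlinarith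
      _ = 4 * N ^ 2 * ((q + 1) ^ 2 + q ^ 2) := by ring
      _ ≤ 4 * N ^ 2 * (4 * q ^ 2) := by gcongr; nlinarith
      _ = _ := by ring
    have hpow : 4 * N ^ q ≤ N ^ (q + 1) := by rw [pow_succ']; gcongr
    nlinarith

theorem lt_four_of_add_eq_four_mul_pow {r s : ℕ} (hr : 3 ≤ r) (hs : 3 ≤ s) (hq : 3 ≤ q)
    (hadd : r + s = 4 * N ^ q) (hmul : r * s + q ^ 2 ≤ 4 * N ^ 2 * q ^ 2) : N < 4 := by
  by_contra! hN
  have := four_mul_sq_mul_sq_add_nine_lt hN hq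
  obtain ⟨r, rfl⟩ := Nat.exists_eq_add_of_le hr
  obtain ⟨s, rfl⟩ := Nat.exists_eq_add_of_le hs
  nlinarith

theorem four_mul_norm_eq_add {D : ℤ} (hA : 1 ^ 2 + 4 * A = -D) :
    4 * norm x = trace x ^ 2 + D * x.im ^ 2 := by
  rw [four_mul_norm, hA]
  ring

theorem IsPrimitiveRep.trace_ne_zero (hx : IsPrimitiveRep 2 m x) : trace x ≠ 0 := by
  have := hx.not_dvd_im
  rw [trace_def]
  push_cast at this
  omega

theorem lt_four_of_pow_mul_pow_dvd (ha : 3 ≤ a) (hb : 3 ≤ b) (hq : 3 ≤ q)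
    (hA : 1 ^ 2 + 4 * A = -(a * b : ℤ)) (htrace : trace δ ≠ 0) (him : δ.im ≠ 0)
    (hnorm : norm δ = N ^ 2) (hadd : a ^ (2 * i + 1) + b ^ (2 * j + 1) = 4 * N ^ q)
    (hdvd : (a : ℤ) ^ i * (b : ℤ) ^ j ∣ q * δ.im) : N < 4 := by
  refine lt_four_of_add_eq_four_mul_pow (ha.trans (Nat.le_self_pow (by omega) a))
    (hb.trans (Nat.le_self_pow (by omega) b)) hq hadd ?_
  have hle := Int.le_of_dvd
    (pow_two_pos_of_ne_zero (mul_ne_zero (by exact_mod_cast (by omega : q ≠ 0)) him))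
    (pow_dvd_pow_of_dvd hdvd 2)
  have htr := Int.add_one_le_of_lt (pow_two_pos_of_ne_zero htrace)
  zify
  calc (a : ℤ) ^ (2 * i + 1) * b ^ (2 * j + 1) + q ^ 2
      = a * b * (a ^ i * b ^ j) ^ 2 + q ^ 2 := by ring
    _ ≤ a * b * (q * δ.im) ^ 2 + q ^ 2 * trace δ ^ 2 := by
        gcongr
        nlinarith [sq_nonneg (q : ℤ)]
    _ = 4 * N ^ 2 * q ^ 2 := by
        rw [← hnorm, four_mul_norm_eq_add hA]
        ring

theorem eq_three_and_eq_five_of_norm_eq_four (ha : 3 ≤ a) (hb : 5 ≤ b)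
    (hA : 1 ^ 2 + 4 * A = -(a * b : ℤ)) (htrace : trace δ ≠ 0) (him : δ.im ≠ 0)
    (hnorm : norm δ = 4) : a = 3 ∧ b = 5 := by
  have h := four_mul_norm_eq_add hA (x := δ)
  have htr := Int.add_one_le_of_lt (pow_two_pos_of_ne_zero htrace)
  have him' := Int.add_one_le_of_lt (pow_two_pos_of_ne_zero him)
  have hab : a * b ≤ 15 := by zify; nlinarith
  constructor <;> nlinarith

theorem exists_abs_eq_three_pow {W v : ℤ} (hb : b.Prime) (hbW : ¬ (b : ℤ) ∣ W)
    (h : |v * (3 * W)| = 3 ^ i * (b : ℤ) ^ j) : ∃ t, |W| = 3 ^ t := by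
  have hdvd : W ∣ 3 ^ i * (b : ℤ) ^ j := by
    rw [← h, dvd_abs]
    exact ⟨v * 3, by ring⟩
  have hcop : IsCoprime W ((b : ℤ) ^ j) :=
    ((Nat.prime_iff_prime_int.1 hb).coprime_iff_not_dvd.2 hbW).symm.pow_right
  obtain ⟨t, -, ht⟩ := (dvd_prime_pow Int.prime_three i).1 (hcop.dvd_of_dvd_mul_right hdvd)
  rw [Int.associated_iff_natAbs] at ht
  exact ⟨t, by rw [Int.abs_eq_natAbs, ht]; simp⟩

theorem eq_five_or_eq_thirteen_of_im_cube (hb : b.Prime) (hb₂ : b ≠ 2)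
    (hA : 1 ^ 2 + 4 * A = -(3 * b : ℤ)) (hk : k ≠ 0) (hnorm : norm δ = (2 ^ k) ^ 2)
    (him : |(δ ^ 3).im| = 3 ^ i * (b : ℤ) ^ j) : b = 5 ∨ b = 13 := by
  have hndvd {p : ℕ} (hp : p.Prime) (hp₂ : p ≠ 2) : ¬ (p : ℤ) ∣ (2 ^ k) ^ 2 := by
    rw [← pow_mul]
    exact not_natCast_dvd_natCast_pow hp Nat.prime_two hp₂ _
  have hbW : ¬ (b : ℤ) ∣ (2 ^ k) ^ 2 - b * δ.im ^ 2 := by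
    rw [dvd_sub_left (dvd_mul_right _ _)]
    exact hndvd hb hb₂
  rw [im_pow_three, hA, hnorm, show 3 * (2 ^ k) ^ 2 + -(3 * (b : ℤ)) * δ.im ^ 2 =
    3 * ((2 ^ k) ^ 2 - b * δ.im ^ 2) by ring] at him
  obtain ⟨t, ht⟩ := exists_abs_eq_three_pow hb hbW him
  have htrace := four_mul_norm_eq_add hA (x := δ)
  rw [hnorm] at htrace
  rw [← Int.natAbs_sq (trace δ)] at htrace
  generalize (trace δ).natAbs = T at htrace
  have heq {p : ℕ} (hp : p.Prime) (h : (p : ℤ) = b * δ.im ^ 2) : b = p :=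
    (Nat.prime_dvd_prime_iff_eq hb hp).1 (by exact_mod_cast h ▸ dvd_mul_right _ _)
  rcases (abs_eq (by positivity)).1 ht with ht | ht
  · have hsq : (2 ^ k) ^ 2 + 3 ^ (t + 1) = T ^ 2 := by zify; rw [pow_succ 3]; linarith
    obtain ⟨hT, hw⟩ := eq_add_one_of_sq_add_prime_pow_eq_sq Nat.prime_three
      (fun h => absurd (Nat.prime_three.dvd_of_dvd_pow (pow_succ' 2 k ▸ h)) (by norm_num)) hsq
    have := eq_one_or_three_of_three_pow_eq (h := k + 1) (by rw [hw, pow_succ'])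
    obtain rfl : k = 2 := by omega
    exact .inr (heq (by norm_num) (by rw [hT] at htrace; push_cast at htrace ⊢; linarith))
  · have hsq : T ^ 2 + 3 ^ (t + 1) = (2 ^ k) ^ 2 := by zify; rw [pow_succ 3]; linarith
    have hT₃ : ¬ 3 ∣ 2 * T := fun h => hndvd Nat.prime_three (by norm_num) <| by
      have hT := ((Nat.prime_three.dvd_mul.1 h).resolve_left (by norm_num)).pow (n := 2) two_ne_zero
      exact_mod_cast hsq ▸ dvd_add hT (dvd_pow_self 3 t.succ_ne_zero)
    obtain ⟨hT, hw⟩ := eq_add_one_of_sq_add_prime_pow_eq_sq Nat.prime_three hT₃ hsq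
    have := eq_and_eq_of_three_pow_add_one_eq_two_pow (h := k + 1) (X := t + 1) (by omega)
      (by rw [pow_succ 2, hT]; omega)
    obtain rfl : k = 1 := by omega
    obtain rfl : T = 1 := by omega
    exact .inl (heq (by norm_num) (by push_cast at htrace ⊢; linarith))

theorem sq_add_mul_sq_eq_two_pow (h : a ^ (2 * i + 1) + b ^ (2 * j + 1) = 2 ^ (w + 2)) {U : ℤ}
    (hU : (a : ℤ) ^ (2 * i + 1) - b ^ (2 * j + 1) = 2 * U) :
    U ^ 2 + a * b * ((a : ℤ) ^ i * (b : ℤ) ^ j) ^ 2 = 2 ^ (2 * w + 2) := by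
  have h' : (a : ℤ) ^ (2 * i + 1) + (b : ℤ) ^ (2 * j + 1) = 2 ^ (w + 2) := by exact_mod_cast h
  have hsq : ((2 : ℤ) ^ (w + 2)) ^ 2 = 4 * 2 ^ (2 * w + 2) := by ring
  have hprod : (a : ℤ) * b * (a ^ i * b ^ j) ^ 2 = a ^ (2 * i + 1) * b ^ (2 * j + 1) := by ring
  rw [← h'] at hsq
  rw [hprod]
  refine mul_left_cancel₀ four_ne_zero ?_
  linear_combination hsq - ((a : ℤ) ^ (2 * i + 1) - b ^ (2 * j + 1) + 2 * U) * hU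

theorem abs_im_pow_ne_of_pow_odd_add_pow_odd_eq (ha : a.Prime) (hb : b.Prime) (ha₂ : a ≠ 2)
    (hb₂ : b ≠ 2) (hab : a < b) (h35 : ¬ (a = 3 ∧ b = 5)) (h313 : ¬ (a = 3 ∧ b = 13))
    (hA : 1 ^ 2 + 4 * A = -(a * b : ℤ)) (hq : q.Prime) (hq₂ : q ≠ 2)
    (hδ : IsPrimitiveRep 2 (2 * k) δ)
    (h : a ^ (2 * i + 1) + b ^ (2 * j + 1) = 2 ^ (k * q + 2)) :
    |(δ ^ q).im| ≠ (a : ℤ) ^ i * (b : ℤ) ^ j := by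
  intro him
  have hk := hδ.pos
  have hnorm := hδ.norm_eq
  rw [pow_mul', Nat.cast_two] at hnorm
  by_cases h3 : a = 3 ∧ q = 3
  · obtain ⟨rfl, rfl⟩ := h3
    have := eq_five_or_eq_thirteen_of_im_cube hb hb₂ (by exact_mod_cast hA) (by omega) hnorm him
    tauto
  have ha₃ := ha.two_le.lt_of_ne' ha₂
  have hq₃ := hq.two_le.lt_of_ne' hq₂
  have hdvd := pow_mul_pow_dvd_im ha hb hab.ne hq hq₂ (hA ▸ ⟨-b, by ring⟩) (hA ▸ ⟨-a, by ring⟩)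
    (hδ.not_dvd_norm ha Nat.prime_two ha₂) (hδ.not_dvd_norm hb Nat.prime_two hb₂)
    (fun ha hq => (h3 ⟨ha, hq⟩).elim) (by omega) him
  have htr := hδ.trace_ne_zero
  have him₀ : δ.im ≠ 0 := fun h0 => hδ.not_dvd_im (h0 ▸ dvd_zero _)
  have hN := lt_four_of_pow_mul_pow_dvd (N := 2 ^ k) ha₃ (by omega) hq₃ hA htr him₀
    (by rw [hnorm]; push_cast; rfl) (by rw [h, pow_add, pow_mul, mul_comm]; norm_num) hdvd
  obtain rfl : k = 1 := by
    have := (Nat.pow_lt_pow_iff_right (a := 2) (n := k) (m := 2) one_lt_two).1 hN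
    omega
  have hb₅ : 5 ≤ b := by
    have := Nat.odd_iff.1 (hb.odd_of_ne_two hb₂)
    omega
  exact h35 (eq_three_and_eq_five_of_norm_eq_four ha₃ hb₅ hA htr him₀ (by simpa using hnorm))

theorem not_isProperPower_of_pow_odd_add_pow_odd_eq (ha : a.Prime) (hb : b.Prime) (ha₂ : a ≠ 2)
    (hb₂ : b ≠ 2) (hab : a < b) (h35 : ¬ (a = 3 ∧ b = 5)) (h313 : ¬ (a = 3 ∧ b = 13))
    (hA : 1 ^ 2 + 4 * A = -(a * b : ℤ))
    (h : a ^ (2 * i + 1) + b ^ (2 * j + 1) = 2 ^ (w + 2)) (hx : IsPrimitiveRep 2 (2 * w) x)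
    (htrace : 2 * trace x = (a : ℤ) ^ (2 * i + 1) - b ^ (2 * j + 1))
    (him : x.im = (a : ℤ) ^ i * (b : ℤ) ^ j) : ¬ IsProperPower 2 x := by
  rintro ⟨q, m, δ, hq, hδ, hxδ⟩
  have hw := hx.exponent_eq_mul Nat.prime_two hδ hxδ
  rcases eq_or_ne q 2 with rfl | hq₂
  · refine abs_two_mul_trace_sq_ne (x := δ) (sq_ne_prime_pow_odd ha _ i)
      (sq_ne_prime_pow_odd hb _ j) ?_ (by rw [← htrace, abs_mul, abs_mul, hxδ.abs_trace_eq])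
    obtain rfl : w = m := by omega
    rw [hδ.norm_eq, Nat.cast_two, show (4 : ℤ) = 2 ^ 2 by norm_num, ← pow_add, add_comm 2]
    exact_mod_cast h.symm
  obtain ⟨k, rfl⟩ : Even m := by
    refine (Nat.even_mul.1 (hw ▸ even_two_mul w)).resolve_right ?_
    exact Nat.not_even_iff_odd.2 (hq.odd_of_ne_two hq₂)
  obtain rfl : w = k * q := by linarith
  refine abs_im_pow_ne_of_pow_odd_add_pow_odd_eq ha hb ha₂ hb₂ hab h35 h313 hA hq hq₂
    (two_mul k ▸ hδ) h ?_
  rw [← hxδ.abs_im_eq, him]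
  exact abs_of_nonneg (by positivity)

theorem mul_mod_four_eq_three (ha : Odd a) (hb : Odd b)
    (h : a ^ (2 * i + 1) + b ^ (2 * j + 1) = 2 ^ (w + 2)) : a * b % 4 = 3 := by
  have h₁ := pow_odd_mod_eight ha (odd_two_mul_add_one i)
  have h₂ := pow_odd_mod_eight hb (odd_two_mul_add_one j)
  rw [pow_add 2] at h
  have h₃ := Nat.odd_iff.1 ha
  have hmod : a % 4 = 1 ∧ b % 4 = 3 ∨ a % 4 = 3 ∧ b % 4 = 1 := by omega
  rcases hmod with ⟨h, h'⟩ | ⟨h, h'⟩ <;> rw [Nat.mul_mod, h, h']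

theorem exists_isPrimitiveRep_not_isProperPower (ha : a.Prime) (hb : b.Prime) (ha₂ : a ≠ 2)
    (hb₂ : b ≠ 2) (hab : a < b) (h35 : ¬ (a = 3 ∧ b = 5)) (h313 : ¬ (a = 3 ∧ b = 13))
    (hA : 1 ^ 2 + 4 * A = -(a * b : ℤ)) (hw : w ≠ 0)
    (h : a ^ (2 * i + 1) + b ^ (2 * j + 1) = 2 ^ (w + 2)) :
    ∃ x : QuadraticAlgebra ℤ A 1, IsPrimitiveRep 2 (2 * w) x ∧ ¬ IsProperPower 2 x ∧
      2 * trace x = (a : ℤ) ^ (2 * i + 1) - b ^ (2 * j + 1) := by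
  have ha_odd : Odd (a : ℤ) := by exact_mod_cast ha.odd_of_ne_two ha₂
  have hb_odd : Odd (b : ℤ) := by exact_mod_cast hb.odd_of_ne_two hb₂
  obtain ⟨U, hU⟩ := (ha_odd.pow (n := 2 * i + 1)).sub_odd (hb_odd.pow (n := 2 * j + 1))
  rw [← two_mul] at hU
  obtain ⟨x, hx, htrace, him⟩ := exists_isPrimitiveRep_two (n := 2 * w) hA (by omega)
    (ha_odd.pow.mul hb_odd.pow) (sq_add_mul_sq_eq_two_pow h hU)
  have hx_trace : 2 * trace x = (a : ℤ) ^ (2 * i + 1) - b ^ (2 * j + 1) := by rw [htrace, hU]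
  exact ⟨x, hx, not_isProperPower_of_pow_odd_add_pow_odd_eq ha hb ha₂ hb₂ hab h35 h313 hA h hx
    hx_trace him, hx_trace⟩

theorem eq_of_pow_odd_add_pow_odd_eq_two_pow (ha : a.Prime) (hb : b.Prime) (ha₂ : a ≠ 2)
    (hb₂ : b ≠ 2) (hab : a < b) (h35 : ¬ (a = 3 ∧ b = 5)) (h313 : ¬ (a = 3 ∧ b = 13))
    (hw : w ≠ 0) (hw' : w' ≠ 0) (h : a ^ (2 * i + 1) + b ^ (2 * j + 1) = 2 ^ (w + 2))
    (h' : a ^ (2 * i' + 1) + b ^ (2 * j' + 1) = 2 ^ (w' + 2)) : i = i' ∧ j = j' ∧ w = w' := by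
  have hmod := mul_mod_four_eq_three (ha.odd_of_ne_two ha₂) (hb.odd_of_ne_two hb₂) h
  have hA : 1 ^ 2 + 4 * (-(((a * b : ℕ) + 1) / 4)) = -(a * b : ℤ) := by
    rw [← Nat.cast_mul]
    omega
  have ha₃ := ha.two_le.lt_of_ne' ha₂
  have hab₁₂ : 3 * 4 ≤ a * b := Nat.mul_le_mul ha₃ (by omega)
  obtain ⟨x, hx, hx_prim, hx_trace⟩ :=
    exists_isPrimitiveRep_not_isProperPower ha hb ha₂ hb₂ hab h35 h313 hA hw h
  obtain ⟨y, hy, hy_prim, hy_trace⟩ :=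
    exists_isPrimitiveRep_not_isProperPower ha hb ha₂ hb₂ hab h35 h313 hA hw' h'
  obtain ⟨hww, hxy⟩ := hx.eq_of_not_isProperPower Nat.prime_two (by omega) (by omega)
    hy hx_prim hy_prim
  obtain rfl : w = w' := by omega
  have hadd : (a : ℤ) ^ (2 * i + 1) + b ^ (2 * j + 1) = a ^ (2 * i' + 1) + b ^ (2 * j' + 1) := by
    exact_mod_cast h.trans h'.symm
  have hsub : |(a : ℤ) ^ (2 * i + 1) - b ^ (2 * j + 1)| =
      |(a : ℤ) ^ (2 * i' + 1) - b ^ (2 * j' + 1)| := by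
    rw [← hx_trace, ← hy_trace, abs_mul, abs_mul, hxy.abs_trace_eq]
  rcases eq_and_eq_or_of_add_eq_of_abs_sub_eq hadd hsub with ⟨hi, hj⟩ | ⟨hij, -⟩
  · have := natCast_pow_injective ha (congrArg abs hi)
    have := natCast_pow_injective hb (congrArg abs hj)
    omega
  · refine (not_natCast_dvd_natCast_pow ha hb hab.ne (2 * j' + 1) ?_).elim
    exact hij ▸ dvd_pow_self _ (by omega)

theorem add_one_lt_two_pow_and_three_le {s : ℕ × ℕ × ℕ} (ha : 3 ≤ a) (hab : a < b)
    (hs : IsSolution a b 2 s) : a + 1 < 2 ^ s.2.2 ∧ 3 ≤ s.2.2 := by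
  obtain ⟨hx, hy, -, h⟩ := hs
  have h₁ := Nat.le_self_pow hx.ne' a
  have h₂ := Nat.le_self_pow hy.ne' b
  refine ⟨by omega, ?_⟩
  by_contra hz
  have := Nat.pow_le_pow_right two_pos (by omega : s.2.2 ≤ 2)
  omega

theorem pow_even_add_pow_even_ne_two_pow {z : ℕ} (ha : Odd a) (hb : Odd b) (hz : 3 ≤ z) :
    a ^ (2 * i) + b ^ (2 * j) ≠ 2 ^ z := by
  intro h
  have h₁ := pow_even_mod_eight ha i
  have h₂ := pow_even_mod_eight hb j
  obtain ⟨f, rfl⟩ := Nat.exists_eq_add_of_le hz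
  rw [pow_add] at h
  omega

theorem even_mul_add_mul_of_isSolution {s t : ℕ × ℕ × ℕ} (ha : Odd a) (ha₃ : 3 ≤ a)
    (hab : a < b) (hs : IsSolution a b 2 s) (ht : IsSolution a b 2 t) :
    Even (s.1 * t.2.1 + t.1 * s.2.1) := by
  wlog hle : s.2.2 ≤ t.2.2 generalizing s t
  · rw [add_comm]
    exact this ht hs (by omega)
  have hdvd {r : ℕ × ℕ × ℕ} (hr : IsSolution a b 2 r) (hsr : s.2.2 ≤ r.2.2) :
      (2 : ℤ) ^ s.2.2 ∣ (a : ℤ) ^ r.1 + (b : ℤ) ^ r.2.1 := by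
    exact_mod_cast hr.2.2.2 ▸ pow_dvd_pow 2 hsr
  exact even_mul_add_mul_of_two_pow_dvd (a := a) (b := b) (by exact_mod_cast ha)
    (by exact_mod_cast (by omega : 1 < a))
    (by exact_mod_cast (add_one_lt_two_pow_and_three_le ha₃ hab hs).1) (hdvd hs le_rfl)
    (hdvd ht hle)

theorem IsSolution.eq_of_two (ha : a.Prime) (hb : b.Prime) (ha₂ : a ≠ 2) (hab : a < b)
    (h35 : ¬ (a = 3 ∧ b = 5)) (h313 : ¬ (a = 3 ∧ b = 13)) {s t : ℕ × ℕ × ℕ}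
    (hs : IsSolution a b 2 s) (ht : IsSolution a b 2 t) : s = t := by
  have ha₃ := ha.two_le.lt_of_ne' ha₂
  have hb₂ : b ≠ 2 := by omega
  have ha_odd := ha.odd_of_ne_two ha₂
  have hb_odd := hb.odd_of_ne_two hb₂
  have hz := (add_one_lt_two_pow_and_three_le ha₃ hab hs).2
  have hz' := (add_one_lt_two_pow_and_three_le ha₃ hab ht).2
  have hparity := even_mul_add_mul_of_isSolution ha_odd ha₃ hab hs ht
  obtain ⟨x, y, z⟩ := s
  obtain ⟨x', y', z'⟩ := t
  obtain ⟨hx, hy, -, h⟩ := hs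
  obtain ⟨hx', hy', -, h'⟩ := ht
  dsimp only at *
  simp only [Prod.mk.injEq]
  rcases Nat.even_or_odd' x with ⟨i, rfl | rfl⟩ <;>
  rcases Nat.even_or_odd' y with ⟨j, rfl | rfl⟩ <;>
  rcases Nat.even_or_odd' x' with ⟨i', rfl | rfl⟩ <;>
  rcases Nat.even_or_odd' y' with ⟨j', rfl | rfl⟩
  any_goals exact (pow_even_add_pow_even_ne_two_pow ha_odd hb_odd hz h).elim
  any_goals exact (pow_even_add_pow_even_ne_two_pow ha_odd hb_odd hz' h').elim
  any_goals (simp [parity_simps] at hparity; done)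
  · have := eq_of_pow_even_add_pow_odd_eq_two_pow ha hb ha₂ hb₂ hab.ne (by omega) (by omega) hz hz'
      h h'
    omega
  · rw [add_comm] at h h'
    have := eq_of_pow_even_add_pow_odd_eq_two_pow hb ha hb₂ ha₂ hab.ne' (by omega) (by omega) hz hz'
      h h'
    omega
  · obtain ⟨w, rfl⟩ := Nat.exists_eq_add_of_le' (by omega : 2 ≤ z)
    obtain ⟨w', rfl⟩ := Nat.exists_eq_add_of_le' (by omega : 2 ≤ z')
    have := eq_of_pow_odd_add_pow_odd_eq_two_pow ha hb ha₂ hb₂ hab h35 h313 (by omega)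
      (by omega) h h'
    omega

end PowOddPowOdd

end TernaryExp

/-- Corollary 1.6: For distinct primes `a < b` with more than one solution of
`a^x + b^y = c^z` and `(a,b,c)` not an exceptional triple, there are exactly two
solutions, with `2 ∣ x₁`, `2 ∣ y₁`, `z₁ = 1`, `2 ∤ y₂`, and `z₂ > 1`. -/
theorem stmt_3 (a b c : ℕ) (ha : Nat.Prime a) (hb : Nat.Prime b) (hc : Nat.Prime c)
    (hab : a < b) (hac : a ≠ c) (hbc : b ≠ c)
    (hmany : ∃ s t : ℕ × ℕ × ℕ, s ≠ t ∧
        (0 < s.1 ∧ 0 < s.2.1 ∧ 0 < s.2.2 ∧ a ^ s.1 + b ^ s.2.1 = c ^ s.2.2) ∧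
        (0 < t.1 ∧ 0 < t.2.1 ∧ 0 < t.2.2 ∧ a ^ t.1 + b ^ t.2.1 = c ^ t.2.2))
    (hexc : (a, b, c) ≠ (2, 3, 5) ∧ (a, b, c) ≠ (2, 3, 11) ∧ (a, b, c) ≠ (2, 5, 3) ∧
        (a, b, c) ≠ (2, 7, 3) ∧ (a, b, c) ≠ (3, 5, 2) ∧ (a, b, c) ≠ (3, 13, 2)) :
    ∃ x₁ y₁ z₁ x₂ y₂ z₂ : ℕ,
        (0 < x₁ ∧ 0 < y₁ ∧ 0 < z₁ ∧ a ^ x₁ + b ^ y₁ = c ^ z₁) ∧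
        (0 < x₂ ∧ 0 < y₂ ∧ 0 < z₂ ∧ a ^ x₂ + b ^ y₂ = c ^ z₂) ∧
        (x₁, y₁, z₁) ≠ (x₂, y₂, z₂) ∧
        (∀ x y z : ℕ, 0 < x → 0 < y → 0 < z → a ^ x + b ^ y = c ^ z →
          (x, y, z) = (x₁, y₁, z₁) ∨ (x, y, z) = (x₂, y₂, z₂)) ∧
        2 ∣ x₁ ∧ 2 ∣ y₁ ∧ z₁ = 1 ∧ ¬ (2 ∣ y₂) ∧ 1 < z₂ := by
  have hb₂ : b ≠ 2 := (ha.two_le.trans_lt hab).ne'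
  simp only [ne_eq, Prod.mk.injEq] at hexc
  obtain ⟨h35, h311, h53, h73, h352, h3132⟩ := hexc
  obtain ⟨s, t, hst, hs, ht⟩ := hmany
  rcases eq_or_ne a 2 with rfl | ha₂
  · obtain ⟨⟨x₁, y₁, z₁⟩, ⟨x₂, y₂, z₂⟩, h₁, h₂, hne, hall, hpair⟩ :=
      TernaryExp.exists_isEvenOddPair_of_forall (S := TernaryExp.IsSolution 2 b c)
        (fun s t hs ht hst => hs.isEvenOddPair_or_isEvenOddPair hb hc hb₂ hac.symm hbc
          (h35 ⟨rfl, ·⟩) (h311 ⟨rfl, ·⟩) (h53 ⟨rfl, ·⟩) (h73 ⟨rfl, ·⟩) ht hst) hs ht hst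
    exact ⟨x₁, y₁, z₁, x₂, y₂, z₂, h₁, h₂, hne,
      fun x y z hx hy hz h => hall _ ⟨hx, hy, hz, h⟩, hpair⟩
  · obtain rfl : c = 2 := by
      by_contra hc₂
      refine Nat.not_odd_iff_even.2 ?_ (hs.2.2.2 ▸ (hc.odd_of_ne_two hc₂).pow)
      exact (ha.odd_of_ne_two ha₂).pow.add_odd (hb.odd_of_ne_two hb₂).pow
    exact (hst (TernaryExp.IsSolution.eq_of_two ha hb ha₂ hab
      (fun h => h352 ⟨h.1, h.2, rfl⟩) (fun h => h3132 ⟨h.1, h.2, rfl⟩) hs ht)).elim
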